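/- (Łojasiewicz inequality II) Let M = (M_0, M_1, M_2, …) be an increasing sequence of positive real numbers with M_0 = 1 that is logarithmically convex, satisfies ∑_{k≥0} M_k/((k+1)M_{k+1}) = ∞, and satisfies sup_{j≥1} (M_{j+1}/M_j)^{1/j} < ∞. Let U ⊆ ℝ^N be a connected open set, let f ∈ C^ℝ_M(U), and set Z = {x ∈ U : f(x) = 0}. For every compact K ⊆ U there exist a constant C > 0, a real ν ≥ 1, and an open neighborhood W of K in U such that |f(x)| ≥ C·d(x, Z)^ν for all x ∈ W, where d(·, Z) denotes the Euclidean distance to Z. -/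

import Mathlib

/-- The `i`-th partial derivative of a function on Euclidean space. -/
noncomputable def pd {ι : Type} [Fintype ι] [DecidableEq ι] {W : Type} [NormedAddCommGroup W]
    [NormedSpace ℝ W] (i : ι) (f : EuclideanSpace ℝ ι → W) : EuclideanSpace ℝ ι → W :=
  fun x => fderiv ℝ f x (EuclideanSpace.single i 1)

/-- The multi-index derivative `D^α f`. -/
noncomputable def mderiv {ι : Type} [Fintype ι] [DecidableEq ι] {W : Type} [NormedAddCommGroup W]
    [NormedSpace ℝ W] (α : ι → ℕ) (f : EuclideanSpace ℝ ι → W) : EuclideanSpace ℝ ι → W :=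
  (Finset.univ : Finset ι).toList.foldr (fun i g => (pd i)^[α i] g) f

/-- Membership in the real Denjoy-Carleman class `C^ℝ_M(U)`: `f` is `C^∞` on `U` and on every
compact `K ⊆ U` there are `A, B > 0` with `|(1/α!) D^α f(x)| ≤ A B^{|α|} M_{|α|}`. -/
def CRM {ι : Type} [Fintype ι] [DecidableEq ι] (M : ℕ → ℝ)
    (U : Set (EuclideanSpace ℝ ι)) (f : EuclideanSpace ℝ ι → ℝ) : Prop :=
  ContDiffOn ℝ (⊤ : ℕ∞) f U ∧
  ∀ K : Set (EuclideanSpace ℝ ι), K ⊆ U → IsCompact K →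
    ∃ A B : ℝ, 0 < A ∧ 0 < B ∧ ∀ x ∈ K, ∀ α : ι → ℕ,
      (1 / (∏ i, ((α i).factorial : ℝ))) * |mderiv α f x| ≤
        A * B ^ (∑ i, α i) * M (∑ i, α i)

/-!
The germs of the class which do not vanish identically behave like analytic germs: after finitely
many substitutions, whose images together cover a neighborhood, each of them is a monomial times a
unit. The inequality is obvious for monomials, and it descends through a substitution because the
substitutions are locally Lipschitz.

The monomial form is reached by induction on the dimension. By Bang's quasianalyticity theorem some
derivative along a line, of order `d` say, does not vanish; a shift by an implicit function of the
class (Tschirnhausen) writes the germ as a unit times `t ^ d` plus a polynomial in `t` of degree at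
most `d - 2`, with coefficients `c i` in one variable less. By induction the `c i` and the
differences of the powers `c i ^ (d ! / (d - i))` may be taken to be monomials times units, so that
these powers are ordered by divisibility. After the substitution of `d !`-th powers for the `x k`,
every `c i` is a multiple of `x ^ ((d - i) β)`, and the cofactor of one of them is a unit. Blowing
up `t` and `x k` replaces `β` by `β - e k` at the origin of one chart. Elsewhere on the exceptional
fiber the germ becomes a monomial times a unit, or its order drops below `d`, as the missing term of
degree `d - 1` rules out a `d`-fold root away from `0`. When `β = 0`, the order is less than `d`.
-/

section

open scoped ContDiff Nat Topology
open Filter Set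

namespace DenjoyCarleman

section Weight

/-- Regular weight sequences: increasing, normalised by `M 0 = 1`, logarithmically convex and with
at most geometric growth of the ratios `M (j + 1) / M j`, which makes the class
`CarlemanAt M` stable under differentiation. -/
structure RegularWeight where
  toFun : ℕ → ℝ
  zero_eq_one : toFun 0 = 1
  monotone : Monotone toFun
  ratio_monotone : Monotone fun j => toFun (j + 1) / toFun j
  exists_succ_le : ∃ C : ℝ, 1 ≤ C ∧ ∀ j, toFun (j + 1) ≤ C ^ (j + 1) * toFun j

namespace RegularWeight

instance : CoeFun RegularWeight fun _ => ℕ → ℝ := ⟨toFun⟩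

variable (M : RegularWeight)

theorem one_le (j : ℕ) : 1 ≤ M j := M.zero_eq_one ▸ M.monotone j.zero_le

theorem pos (j : ℕ) : 0 < M j := one_pos.trans_le (M.one_le j)

theorem mul_le_mul_add {i j : ℕ} (hij : i ≤ j) (k : ℕ) :
    M (i + k) * M j ≤ M i * M (j + k) := by
  induction k with
  | zero => rfl
  | succ k ih =>
    have ratio := M.ratio_monotone (Nat.add_le_add_right hij k)
    simp only [div_le_div_iff₀ (M.pos _) (M.pos _)] at ratio
    have pos := M.pos
    refine le_of_mul_le_mul_right ?_ (pos (i + k))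
    calc M (i + k + 1) * M j * M (i + k) = M (i + k + 1) * (M (i + k) * M j) := by ring
      _ ≤ M (i + k + 1) * (M i * M (j + k)) := by gcongr; exact (pos _).le
      _ = M i * (M (i + k + 1) * M (j + k)) := by ring
      _ ≤ M i * (M (j + k + 1) * M (i + k)) := by gcongr; exact (pos _).le
      _ = M i * M (j + k + 1) * M (i + k) := by ring

theorem mul_prod_le {k : ℕ} (c : Fin k → ℕ) (hc : ∀ i, 0 < c i) :
    M k * ∏ i, M (c i) ≤ M 1 ^ k * M (∑ i, c i) := by
  induction k with
  | zero => simp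
  | succ k ih =>
    obtain ⟨l, hl⟩ := Nat.exists_eq_add_of_le (hc (Fin.last k))
    have k_le : k ≤ ∑ i : Fin k, c i.castSucc := by
      simpa using Finset.card_nsmul_le_sum Finset.univ (fun i : Fin k => c i.castSucc) 1
        fun i _ => hc _
    rw [Fin.prod_univ_castSucc, Fin.sum_univ_castSucc, hl]
    have ih := ih (fun i => c i.castSucc) fun i => hc _
    set S := ∑ i : Fin k, c i.castSucc
    set P := ∏ i : Fin k, M (c i.castSucc)
    have pos := M.pos
    refine le_of_mul_le_mul_right ?_ (mul_pos (pos k) (pos (S + 1)))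
    calc M (k + 1) * (P * M (1 + l)) * (M k * M (S + 1))
        = (M k * P) * M (k + 1) * (M (1 + l) * M (S + 1)) := by ring
      _ ≤ (M 1 ^ k * M S) * M (k + 1) * (M 1 * M (S + 1 + l)) :=
          mul_le_mul (mul_le_mul_of_nonneg_right ih (pos _).le)
            (M.mul_le_mul_add (Nat.le_add_left 1 S) l)
            (mul_nonneg (pos _).le (pos _).le)
            (mul_nonneg (mul_nonneg (pow_nonneg (pos 1).le k) (pos S).le) (pos (k + 1)).le)
      _ = M 1 ^ (k + 1) * M (S + (1 + l)) * (M (k + 1) * M S) := by ring_nf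
      _ ≤ M 1 ^ (k + 1) * M (S + (1 + l)) * (M k * M (S + 1)) :=
          mul_le_mul_of_nonneg_left (M.mul_le_mul_add k_le 1)
            (mul_nonneg (pow_nonneg (pos 1).le _) (pos _).le)

end RegularWeight

end Weight

section FaaDiBruno

variable {E F G : Type*} [NormedAddCommGroup E] [NormedSpace ℝ E] [NormedAddCommGroup F]
  [NormedSpace ℝ F] [NormedAddCommGroup G] [NormedSpace ℝ G]

theorem norm_iteratedFDeriv_comp_le_sum {g : F → G} {f : E → F} {x : E}
    (hg : ContDiffAt ℝ ∞ g (f x)) (hf : ContDiffAt ℝ ∞ f x) (n : ℕ) :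
    ‖iteratedFDeriv ℝ n (g ∘ f) x‖ ≤ ∑ c : OrderedFinpartition n,
      ‖iteratedFDeriv ℝ c.length g (f x)‖ * ∏ i, ‖iteratedFDeriv ℝ (c.partSize i) f x‖ := by
  rw [iteratedFDeriv_comp hg hf (mod_cast le_top)]
  exact (norm_sum_le _ _).trans
    (Finset.sum_le_sum fun c _ => c.norm_compAlongOrderedFinpartition_le _ _)

theorem iteratedDeriv_comp_eq_sum {g f : ℝ → ℝ} {x : ℝ} (hg : ContDiffAt ℝ ∞ g (f x))
    (hf : ContDiffAt ℝ ∞ f x) (n : ℕ) :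
    iteratedDeriv n (g ∘ f) x = ∑ c : OrderedFinpartition n,
      iteratedDeriv c.length g (f x) * ∏ i, iteratedDeriv (c.partSize i) f x := by
  rw [iteratedDeriv_eq_iteratedFDeriv, iteratedFDeriv_comp hg hf (mod_cast le_top)]
  simp only [FormalMultilinearSeries.taylorComp, _root_.sum_apply]
  refine Finset.sum_congr rfl fun c _ => ?_
  rw [FormalMultilinearSeries.compAlongOrderedFinpartition_apply]
  simp only [ftaylorSeries]
  rw [iteratedFDeriv_apply_eq_iteratedDeriv_mul_prod, smul_eq_mul, mul_comm]
  rfl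

end FaaDiBruno

section Analytic

variable {E F : Type*} [NormedAddCommGroup E] [NormedSpace ℝ E] [NormedAddCommGroup F]
  [NormedSpace ℝ F]

theorem norm_iteratedFDeriv_le_of_hasFPowerSeriesOnBall [CompleteSpace F] {f : E → F}
    {p : FormalMultilinearSeries ℝ E F} {a : E} {r : ENNReal} (h : HasFPowerSeriesOnBall f p a r)
    (n : ℕ) : ‖iteratedFDeriv ℝ n f a‖ ≤ n ! * ‖p n‖ := by
  refine ContinuousMultilinearMap.opNorm_le_bound (by positivity) fun v => ?_
  rw [h.iteratedFDeriv_eq_sum_of_completeSpace]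
  calc ‖∑ σ : Equiv.Perm (Fin n), p n fun i => v (σ i)‖
      ≤ ∑ _σ : Equiv.Perm (Fin n), ‖p n‖ * ∏ i, ‖v i‖ := by
        refine (norm_sum_le _ _).trans (Finset.sum_le_sum fun σ _ => ?_)
        refine ((p n).le_opNorm _).trans_eq ?_
        rw [Equiv.prod_comp σ fun i => ‖v i‖]
    _ = n ! * ‖p n‖ * ∏ i, ‖v i‖ := by
        simp only [Finset.sum_const, Finset.card_univ, Fintype.card_perm, Fintype.card_fin,
          nsmul_eq_mul, mul_assoc]

open scoped NNReal in
theorem exists_nnnorm_changeOrigin_mul_pow_le (p : FormalMultilinearSeries ℝ E F) {r s : ℝ≥0}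
    (hrs : (r + s : ENNReal) < p.radius) :
    ∃ T : ℝ≥0, ∀ y : E, ‖y‖₊ ≤ r → ∀ k, ‖p.changeOrigin y k‖₊ * s ^ k ≤ T := by
  refine ⟨∑' t : Σ k l : ℕ, { u : Finset (Fin (k + l)) // u.card = l },
    ‖p (t.1 + t.2.1)‖₊ * r ^ t.2.1 * s ^ t.1, fun y hy k => ?_⟩
  have r_lt : (r : ENNReal) < p.radius := lt_of_le_of_lt le_self_add hrs
  have y_lt : (‖y‖₊ : ENNReal) < p.radius := (ENNReal.coe_le_coe.2 hy).trans_lt r_lt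
  calc ‖p.changeOrigin y k‖₊ * s ^ k
      ≤ (∑' t : Σ l : ℕ, { u : Finset (Fin (k + l)) // u.card = l },
          ‖p (k + t.1)‖₊ * r ^ t.1) * s ^ k := by
        gcongr
        refine (p.nnnorm_changeOrigin_le k y_lt).trans (Summable.tsum_le_tsum (fun t => ?_)
          (p.changeOriginSeries_summable_aux₂ y_lt k) (p.changeOriginSeries_summable_aux₂ r_lt k))
        gcongr
    _ = ∑' t : Σ l : ℕ, { u : Finset (Fin (k + l)) // u.card = l },
          ‖p (k + t.1)‖₊ * r ^ t.1 * s ^ k := (NNReal.tsum_mul_right _ _).symm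
    _ ≤ _ := NNReal.tsum_comp_le_tsum_of_inj (p.changeOriginSeries_summable_aux₁ hrs)
        (i := Sigma.mk k) sigma_mk_injective

open scoped NNReal in
theorem exists_norm_changeOrigin_le (p : FormalMultilinearSeries ℝ E F) (hp : 0 < p.radius) :
    ∃ C D : ℝ, ∃ r : ℝ≥0, 0 < C ∧ 0 < D ∧ 0 < r ∧ ∀ y : E, ‖y‖₊ ≤ r → ∀ k,
      ‖p.changeOrigin y k‖ ≤ C * D ^ k := by
  obtain ⟨s, hs, hsp⟩ := ENNReal.lt_iff_exists_nnreal_btwn.1 hp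
  have hr : 0 < s / 2 := half_pos (by exact_mod_cast hs)
  have radius : ((s / 2 : ℝ≥0) : ENNReal) + (s / 2 : ℝ≥0) < p.radius := by
    rwa [← ENNReal.coe_add, add_halves]
  set r := s / 2
  obtain ⟨T, hT⟩ := exists_nnnorm_changeOrigin_mul_pow_le p radius
  refine ⟨T + 1, (r : ℝ)⁻¹, r, by positivity, by positivity, hr, fun y hy k => ?_⟩
  have key := NNReal.coe_le_coe.2 (hT y hy k)
  rw [NNReal.coe_mul, NNReal.coe_pow, coe_nnnorm] at key
  rw [inv_pow, ← div_eq_mul_inv, le_div_iff₀ (by positivity)]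
  exact key.trans (le_add_of_nonneg_right zero_le_one)

theorem exists_norm_iteratedFDeriv_le_of_analyticAt [CompleteSpace F] {f : E → F} {a : E}
    (hf : AnalyticAt ℝ f a) : ∃ C D : ℝ, 0 < C ∧ 0 < D ∧
      ∀ᶠ x in 𝓝 a, ∀ n, ‖iteratedFDeriv ℝ n f x‖ ≤ C * D ^ n * n ! := by
  obtain ⟨p, R, hp⟩ := hf
  obtain ⟨C, D, r, hC, hD, hr, bound⟩ := exists_norm_changeOrigin_le p (hp.r_pos.trans_le hp.r_le)
  refine ⟨C, D, hC, hD, ?_⟩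
  filter_upwards [Metric.ball_mem_nhds a (NNReal.coe_pos.2 hr), Metric.eball_mem_nhds a hp.r_pos]
    with x hx hxR n
  have hx : ‖x - a‖₊ ≤ r := by
    rw [← NNReal.coe_le_coe, coe_nnnorm, ← dist_eq_norm]
    exact (Metric.mem_ball.1 hx).le
  have hxR : (‖x - a‖₊ : ENNReal) < R := by
    simpa [edist_eq_enorm_sub, enorm_eq_nnnorm] using hxR
  have series := hp.changeOrigin hxR
  rw [add_sub_cancel] at series
  calc ‖iteratedFDeriv ℝ n f x‖ ≤ n ! * ‖p.changeOrigin (x - a) n‖ :=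
        norm_iteratedFDeriv_le_of_hasFPowerSeriesOnBall series n
    _ ≤ n ! * (C * D ^ n) := by gcongr; exact bound _ hx n
    _ = C * D ^ n * n ! := mul_comm _ _

end Analytic

section AffineComp

variable {E E' F : Type*} [NormedAddCommGroup E] [NormedSpace ℝ E] [NormedAddCommGroup E']
  [NormedSpace ℝ E'] [NormedAddCommGroup F] [NormedSpace ℝ F]

theorem norm_iteratedFDeriv_comp_const_add_clm_le {f : E → F} {c : E} {L : E' →L[ℝ] E} {x : E'}
    {n : ℕ} (hf : ContDiffAt ℝ n f (c + L x)) :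
    ‖iteratedFDeriv ℝ n (fun y => f (c + L y)) x‖ ≤
      ‖iteratedFDeriv ℝ n f (c + L x)‖ * ‖L‖ ^ n := by
  set G : E → F := fun y => f (c + y)
  have hG : ContDiffAt ℝ n G (L x) := ContDiffAt.comp (L x) hf (by fun_prop)
  obtain ⟨u, hu, hGu⟩ := hG.contDiffOn le_rfl (by simp)
  obtain ⟨O, hOu, hO, hxO⟩ := mem_nhds_iff.1 hu
  have hO' : IsOpen (L ⁻¹' O) := hO.preimage L.continuous
  change ‖iteratedFDeriv ℝ n (G ∘ L) x‖ ≤ _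
  rw [← iteratedFDeriv_comp_add_left, ← iteratedFDerivWithin_of_isOpen n hO' hxO,
    L.iteratedFDerivWithin_comp_right (hGu.mono hOu) hO.uniqueDiffOn hO'.uniqueDiffOn hxO le_rfl,
    iteratedFDerivWithin_of_isOpen n hO hxO]
  refine (ContinuousMultilinearMap.norm_compContinuousLinearMap_le _ _).trans_eq ?_
  rw [Finset.prod_const, Finset.card_univ, Fintype.card_fin]

end AffineComp

section CarlemanAt

variable {E F G : Type*} [NormedAddCommGroup E] [NormedSpace ℝ E] [NormedAddCommGroup F]
  [NormedSpace ℝ F] [NormedAddCommGroup G] [NormedSpace ℝ G] {M : RegularWeight}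

/-- The germ of `f` at `a` lies in the Denjoy-Carleman class of `M`. This is the coordinate-free
version of `CRM`, with the full derivatives instead of the partial ones. -/
@[fun_prop]
def CarlemanAt (M : RegularWeight) (f : E → F) (a : E) : Prop :=
  ∃ A B : ℝ, 0 < A ∧ 0 < B ∧ ∀ᶠ x in 𝓝 a, ContDiffAt ℝ ∞ f x ∧
    ∀ n : ℕ, ‖iteratedFDeriv ℝ n f x‖ ≤ A * B ^ n * n ! * M n

namespace CarlemanAt

theorem contDiffAt {f : E → F} {a : E} (hf : CarlemanAt M f a) : ContDiffAt ℝ ∞ f a := by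
  obtain ⟨A, B, _, _, h⟩ := hf
  exact h.self_of_nhds.1

theorem continuousAt {f : E → F} {a : E} (hf : CarlemanAt M f a) : ContinuousAt f a :=
  hf.contDiffAt.continuousAt

theorem differentiableAt {f : E → F} {a : E} (hf : CarlemanAt M f a) : DifferentiableAt ℝ f a :=
  hf.contDiffAt.differentiableAt (by simp)

theorem eventually {f : E → F} {a : E} (hf : CarlemanAt M f a) :
    ∀ᶠ x in 𝓝 a, CarlemanAt M f x := by
  obtain ⟨A, B, hA, hB, h⟩ := hf
  exact (eventually_eventually_nhds.2 h).mono fun x hx => ⟨A, B, hA, hB, hx⟩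

theorem congr {f g : E → F} {a : E} (hf : CarlemanAt M f a) (hfg : f =ᶠ[𝓝 a] g) :
    CarlemanAt M g a := by
  obtain ⟨A, B, hA, hB, h⟩ := hf
  refine ⟨A, B, hA, hB, ?_⟩
  filter_upwards [h, eventually_eventually_nhds.2 hfg] with x hx (hfgx : f =ᶠ[𝓝 x] g)
  refine ⟨hx.1.congr_of_eventuallyEq hfgx.symm, fun n => ?_⟩
  rw [← (hfgx.iteratedFDeriv ℝ n).self_of_nhds]
  exact hx.2 n

end CarlemanAt

@[fun_prop]
theorem carlemanAt_of_analyticAt [CompleteSpace F] {f : E → F} {a : E} (hf : AnalyticAt ℝ f a) :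
    CarlemanAt M f a := by
  obtain ⟨C, D, hC, hD, bound⟩ := exists_norm_iteratedFDeriv_le_of_analyticAt hf
  refine ⟨C, D, hC, hD, ?_⟩
  filter_upwards [bound, hf.eventually_analyticAt] with x hx hfx
  exact ⟨hfx.contDiffAt, fun n => (hx n).trans
    (le_mul_of_one_le_right (by positivity) (M.one_le n))⟩

@[fun_prop]
theorem CarlemanAt.prodMk {f : E → F} {g : E → G} {a : E} (hf : CarlemanAt M f a)
    (hg : CarlemanAt M g a) : CarlemanAt M (fun x => (f x, g x)) a := by
  obtain ⟨A, B, hA, hB, hf⟩ := hf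
  obtain ⟨A', B', _, hB', hg⟩ := hg
  refine ⟨max A A', max B B', by positivity, by positivity, ?_⟩
  filter_upwards [hf, hg] with x hfx hgx
  refine ⟨hfx.1.prodMk hgx.1, fun n => ?_⟩
  rw [iteratedFDeriv_prodMk hfx.1 hgx.1 (mod_cast le_top), ContinuousMultilinearMap.opNorm_prod]
  have pos := M.pos n
  refine max_le ((hfx.2 n).trans ?_) ((hgx.2 n).trans ?_)
  · gcongr <;> exact le_max_left _ _
  · gcongr <;> exact le_max_right _ _

theorem analyticAt_geometric (A B : ℝ) : AnalyticAt ℝ (fun t : ℝ => A * (1 - B * t)⁻¹) 0 :=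
  analyticAt_const.mul (AnalyticAt.inv (by fun_prop) (by simp))

theorem iteratedDeriv_geometric (A B : ℝ) (n : ℕ) :
    iteratedDeriv n (fun t : ℝ => A * (1 - B * t)⁻¹) 0 = A * B ^ n * n ! := by
  have affine : (fun t : ℝ => A * (1 - B * t)⁻¹) = fun t => A * (-B * t + 1)⁻¹ := by
    ext t; ring
  rw [affine, iteratedDeriv_const_mul_field, iteratedDeriv_eq_iterate, iter_deriv_inv_linear]
  simp only [mul_zero, zero_add, one_zpow, mul_one]
  rw [neg_pow B, show A * ((-1) ^ n * n ! * ((-1) ^ n * B ^ n)) =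
    A * B ^ n * n ! * ((-1) ^ n * (-1) ^ n) by ring, ← mul_pow, neg_one_mul, neg_neg, one_pow,
    mul_one]

-- Cauchy's method of majorants: by logarithmic convexity the weights `M` pass through the
-- Faà di Bruno formula, which reduces the estimate to one between scalar power series.
theorem norm_iteratedFDeriv_comp_le_of_majorant {g : F → G} {f : E → F} {x : E}
    (hg : ContDiffAt ℝ ∞ g (f x)) (hf : ContDiffAt ℝ ∞ f x) {A B : ℝ} (hA : 0 ≤ A) (hB : 0 ≤ B)
    (hgx : ∀ k, ‖iteratedFDeriv ℝ k g (f x)‖ ≤ A * B ^ k * k ! * M k)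
    {ψ : ℝ → ℝ} (hψ : AnalyticAt ℝ ψ 0) (hψ0 : ψ 0 = 0) {n : ℕ}
    (hfx : ∀ j, 1 ≤ j → j ≤ n → ‖iteratedFDeriv ℝ j f x‖ ≤ iteratedDeriv j ψ 0 * M j) :
    ‖iteratedFDeriv ℝ n (g ∘ f) x‖ ≤
      iteratedDeriv n ((fun t => A * (1 - (B * M 1) * t)⁻¹) ∘ ψ) 0 * M n := by
  have geometric : AnalyticAt ℝ (fun t => A * (1 - (B * M 1) * t)⁻¹) (ψ 0) := by
    rw [hψ0]; exact analyticAt_geometric A (B * M 1)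
  refine (norm_iteratedFDeriv_comp_le_sum hg hf n).trans ?_
  rw [iteratedDeriv_comp_eq_sum geometric.contDiffAt hψ.contDiffAt, Finset.sum_mul]
  refine Finset.sum_le_sum fun c _ => ?_
  rw [hψ0, iteratedDeriv_geometric]
  have pos := M.pos
  have inner (i : Fin c.length) := hfx _ (c.partSize_pos i) (c.partSize_le i)
  have inner_nonneg (i) : 0 ≤ iteratedDeriv (c.partSize i) ψ 0 :=
    nonneg_of_mul_nonneg_left ((norm_nonneg _).trans (inner i)) (pos _)
  have weights := M.mul_prod_le c.partSize c.partSize_pos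
  rw [show ∑ i, c.partSize i = n by simpa using c.sum_sigma_eq_sum fun _ => (1 : ℕ)] at weights
  calc ‖iteratedFDeriv ℝ c.length g (f x)‖ * ∏ i, ‖iteratedFDeriv ℝ (c.partSize i) f x‖
      ≤ (A * B ^ c.length * c.length ! * M c.length) *
          ∏ i, (iteratedDeriv (c.partSize i) ψ 0 * M (c.partSize i)) :=
        mul_le_mul (hgx _) (Finset.prod_le_prod (fun i _ => norm_nonneg _) fun i _ => inner i)
          (by positivity) ((norm_nonneg _).trans (hgx _))
    _ = A * B ^ c.length * c.length ! * (∏ i, iteratedDeriv (c.partSize i) ψ 0) *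
          (M c.length * ∏ i, M (c.partSize i)) := by rw [Finset.prod_mul_distrib]; ring
    _ ≤ A * B ^ c.length * c.length ! * (∏ i, iteratedDeriv (c.partSize i) ψ 0) *
          (M 1 ^ c.length * M n) := by
        gcongr
        exact mul_nonneg (by positivity) (Finset.prod_nonneg fun i _ => inner_nonneg i)
    _ = A * (B * M 1) ^ c.length * c.length ! * (∏ i, iteratedDeriv (c.partSize i) ψ 0) * M n := by
        rw [mul_pow]; ring

theorem CarlemanAt.comp {g : F → G} {f : E → F} {a : E} (hg : CarlemanAt M g (f a))
    (hf : CarlemanAt M f a) : CarlemanAt M (fun x => g (f x)) a := by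
  have hfa := hf.continuousAt
  obtain ⟨A, B, hA, hB, hg⟩ := hg
  obtain ⟨A', B', _, _, hf⟩ := hf
  set ψ : ℝ → ℝ := fun t => A' * (1 - B' * t)⁻¹ - A' with ψ_def
  have hψ0 : ψ 0 = 0 := by simp [ψ_def]
  have hψ : AnalyticAt ℝ ψ 0 := (analyticAt_geometric A' B').sub analyticAt_const
  have iteratedDeriv_ψ (j : ℕ) (hj : 1 ≤ j) : iteratedDeriv j ψ 0 = A' * B' ^ j * j ! := by
    change iteratedDeriv j ((fun t => A' * (1 - B' * t)⁻¹) - fun _ => A') 0 = _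
    rw [iteratedDeriv_sub (analyticAt_geometric A' B').contDiffAt contDiffAt_const,
      iteratedDeriv_const, iteratedDeriv_geometric]
    simp only [(Nat.one_le_iff_ne_zero.1 hj), if_false, sub_zero]
  obtain ⟨C, D, hC, hD, bound⟩ := exists_norm_iteratedFDeriv_le_of_analyticAt
    ((hψ0 ▸ analyticAt_geometric A (B * M 1) : AnalyticAt ℝ _ (ψ 0)).comp hψ)
  refine ⟨C, D, hC, hD, ?_⟩
  filter_upwards [hf, hfa.eventually hg] with x hfx hgx
  refine ⟨hgx.1.comp x hfx.1, fun n => ?_⟩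
  refine (norm_iteratedFDeriv_comp_le_of_majorant hgx.1 hfx.1 hA.le hB.le hgx.2 hψ hψ0
    fun j hj _ => (iteratedDeriv_ψ j hj).symm ▸ hfx.2 j).trans ?_
  refine mul_le_mul_of_nonneg_right ?_ (M.pos n).le
  exact (le_abs_self _).trans (norm_iteratedFDeriv_eq_norm_iteratedDeriv (𝕜 := ℝ).symm.trans_le
    (bound.self_of_nhds n))

end CarlemanAt

section Closure

variable {E F G : Type*} [NormedAddCommGroup E] [NormedSpace ℝ E] [NormedAddCommGroup F]
  [NormedSpace ℝ F] [NormedAddCommGroup G] [NormedSpace ℝ G] {M : RegularWeight}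
  {a : E}

@[fun_prop]
theorem carlemanAt_id [CompleteSpace E] (a : E) : CarlemanAt M (fun x => x) a :=
  carlemanAt_of_analyticAt analyticAt_id

@[fun_prop]
theorem carlemanAt_const [CompleteSpace F] (c : F) (a : E) : CarlemanAt M (fun _ => c) a :=
  carlemanAt_of_analyticAt analyticAt_const

attribute [fun_prop] CarlemanAt.comp

@[fun_prop]
theorem CarlemanAt.fst [CompleteSpace F] {f : E → F × G} (hf : CarlemanAt M f a) :
    CarlemanAt M (fun x => (f x).1) a :=
  (carlemanAt_of_analyticAt analyticAt_fst).comp hf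

@[fun_prop]
theorem CarlemanAt.snd [CompleteSpace G] {f : E → F × G} (hf : CarlemanAt M f a) :
    CarlemanAt M (fun x => (f x).2) a :=
  (carlemanAt_of_analyticAt analyticAt_snd).comp hf

@[fun_prop]
theorem CarlemanAt.add [CompleteSpace F] {f g : E → F} (hf : CarlemanAt M f a)
    (hg : CarlemanAt M g a) : CarlemanAt M (fun x => f x + g x) a :=
  (carlemanAt_of_analyticAt (f := fun p : F × F => p.1 + p.2)
    (analyticAt_fst.add analyticAt_snd)).comp (hf.prodMk hg)

@[fun_prop]
theorem CarlemanAt.sub [CompleteSpace F] {f g : E → F} (hf : CarlemanAt M f a)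
    (hg : CarlemanAt M g a) : CarlemanAt M (fun x => f x - g x) a :=
  (carlemanAt_of_analyticAt (f := fun p : F × F => p.1 - p.2)
    (analyticAt_fst.sub analyticAt_snd)).comp (hf.prodMk hg)

@[fun_prop]
theorem CarlemanAt.neg [CompleteSpace F] {f : E → F} (hf : CarlemanAt M f a) :
    CarlemanAt M (fun x => -f x) a :=
  (carlemanAt_of_analyticAt (f := fun y : F => -y) (by fun_prop)).comp hf

@[fun_prop]
theorem CarlemanAt.smul [CompleteSpace F] {f : E → ℝ} {g : E → F} (hf : CarlemanAt M f a)
    (hg : CarlemanAt M g a) : CarlemanAt M (fun x => f x • g x) a :=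
  (carlemanAt_of_analyticAt (f := fun p : ℝ × F => p.1 • p.2) (by fun_prop)).comp (hf.prodMk hg)

@[fun_prop]
theorem CarlemanAt.mul {f g : E → ℝ} (hf : CarlemanAt M f a) (hg : CarlemanAt M g a) :
    CarlemanAt M (fun x => f x * g x) a :=
  hf.smul hg

@[fun_prop]
theorem CarlemanAt.pow {f : E → ℝ} (hf : CarlemanAt M f a) (n : ℕ) :
    CarlemanAt M (fun x => f x ^ n) a :=
  (carlemanAt_of_analyticAt (f := fun t : ℝ => t ^ n) (by fun_prop)).comp hf

@[fun_prop]
theorem CarlemanAt.sum [CompleteSpace F] {ι : Type*} {s : Finset ι} {f : ι → E → F}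
    (hf : ∀ i ∈ s, CarlemanAt M (f i) a) : CarlemanAt M (fun x => ∑ i ∈ s, f i x) a := by
  classical
  induction s using Finset.induction_on with
  | empty => simpa only [Finset.sum_empty] using carlemanAt_const 0 a
  | insert i s hi ih =>
    simp only [Finset.sum_insert hi]
    exact (hf i (s.mem_insert_self i)).add (ih fun j hj => hf j (Finset.mem_insert_of_mem hj))

@[fun_prop]
theorem CarlemanAt.prod {ι : Type*} {s : Finset ι} {f : ι → E → ℝ}
    (hf : ∀ i ∈ s, CarlemanAt M (f i) a) : CarlemanAt M (fun x => ∏ i ∈ s, f i x) a := by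
  classical
  induction s using Finset.induction_on with
  | empty => simpa only [Finset.prod_empty] using carlemanAt_const 1 a
  | insert i s hi ih =>
    simp only [Finset.prod_insert hi]
    exact (hf i (s.mem_insert_self i)).mul (ih fun j hj => hf j (Finset.mem_insert_of_mem hj))

@[fun_prop]
theorem carlemanAt_continuousLinearMap [CompleteSpace F] (L : E →L[ℝ] F) (a : E) :
    CarlemanAt M (fun x => L x) a :=
  carlemanAt_of_analyticAt (L.analyticAt a)

@[fun_prop]
theorem CarlemanAt.clm_apply [CompleteSpace G] {f : E → F →L[ℝ] G} {g : E → F}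
    (hf : CarlemanAt M f a) (hg : CarlemanAt M g a) : CarlemanAt M (fun x => f x (g x)) a :=
  (carlemanAt_of_analyticAt (f := fun p : (F →L[ℝ] G) × F => p.1 p.2)
    ((ContinuousLinearMap.id ℝ (F →L[ℝ] G)).analyticAt_bilinear _)).comp (hf.prodMk hg)

@[fun_prop]
theorem CarlemanAt.clm_comp {E' : Type*} [NormedAddCommGroup E'] [NormedSpace ℝ E']
    [CompleteSpace G] {f : E → F →L[ℝ] G} {g : E → E' →L[ℝ] F} (hf : CarlemanAt M f a)
    (hg : CarlemanAt M g a) : CarlemanAt M (fun x => f x ∘L g x) a :=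
  ((carlemanAt_continuousLinearMap (ContinuousLinearMap.compL ℝ E' F G) _).comp hf).clm_apply hg

@[fun_prop]
theorem carlemanAt_apply {ι : Type*} [Fintype ι] [CompleteSpace F] (i : ι) (a : ι → F) :
    CarlemanAt M (fun x : ι → F => x i) a :=
  carlemanAt_continuousLinearMap (ContinuousLinearMap.proj i : (ι → F) →L[ℝ] F) a

@[fun_prop]
theorem CarlemanAt.pi {ι : Type*} [Fintype ι] [CompleteSpace F] {f : E → ι → F}
    (hf : ∀ i, CarlemanAt M (fun x => f x i) a) : CarlemanAt M (fun x i => f x i) a := by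
  classical
  have single : CarlemanAt M
      (fun x => ∑ i, ContinuousLinearMap.single ℝ (fun _ : ι => F) i (f x i)) a := by fun_prop
  exact single.congr (Eventually.of_forall fun x => Finset.univ_sum_single (f x))

protected theorem CarlemanAt.fderiv {f : E → F} (hf : CarlemanAt M f a) :
    CarlemanAt M (fderiv ℝ f) a := by
  obtain ⟨A, B, hA, hB, h⟩ := hf
  obtain ⟨C, hC, succ_le⟩ := M.exists_succ_le
  refine ⟨A * B * C, 2 * B * C, by positivity, by positivity, ?_⟩
  filter_upwards [h] with x hx
  refine ⟨hx.1.fderiv_right (m := ∞) (by simp), fun n => ?_⟩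
  rw [norm_iteratedFDeriv_fderiv]
  have pos := M.pos n
  calc ‖iteratedFDeriv ℝ (n + 1) f x‖ ≤ A * B ^ (n + 1) * (n + 1)! * M (n + 1) := hx.2 (n + 1)
    _ ≤ A * B ^ (n + 1) * (n + 1)! * (C ^ (n + 1) * M n) := by gcongr; exact succ_le n
    _ = (n + 1 : ℕ) * (A * B * C * (B * C) ^ n * n ! * M n) := by
        rw [Nat.factorial_succ, Nat.cast_mul, mul_pow]; ring
    _ ≤ (2 ^ n : ℕ) * (A * B * C * (B * C) ^ n * n ! * M n) := by
        gcongr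
        exact Nat.lt_two_pow_self
    _ = A * B * C * (2 * B * C) ^ n * n ! * M n := by push_cast; ring

end Closure

section ODE

/-- The solution of `ψ' = A / (1 - K ψ)`, `ψ 0 = 0`: the majorant of the solutions of an autonomous
differential equation whose right-hand side has the majorant `A / (1 - K t)`. -/
noncomputable def odeMajorant (A K t : ℝ) : ℝ := (1 - √(1 - 2 * A * K * t)) / K

theorem odeMajorant_zero (A K : ℝ) : odeMajorant A K 0 = 0 := by simp [odeMajorant]

theorem analyticAt_odeMajorant (A K : ℝ) : AnalyticAt ℝ (odeMajorant A K) 0 := by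
  have sqrt : AnalyticAt ℝ (fun t => √(1 - 2 * A * K * t)) 0 :=
    (ContDiffAt.sqrt (by fun_prop) (by simp)).analyticAt
  exact (analyticAt_const.sub sqrt).div_const

theorem deriv_odeMajorant (A : ℝ) {K : ℝ} (hK : K ≠ 0) :
    deriv (odeMajorant A K) =ᶠ[𝓝 0] (fun t => A * (1 - K * t)⁻¹) ∘ odeMajorant A K := by
  have near : ∀ᶠ t : ℝ in 𝓝 0, 0 < 1 - 2 * A * K * t :=
    (by fun_prop : ContinuousAt (fun t : ℝ => 1 - 2 * A * K * t) 0).eventually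
      (lt_mem_nhds (by simp))
  filter_upwards [near] with t ht
  have affine : HasDerivAt (fun t => 1 - 2 * A * K * t) (-(2 * A * K)) t := by
    simpa using ((hasDerivAt_id t).const_mul (2 * A * K)).const_sub 1
  have deriv : HasDerivAt (odeMajorant A K) _ t :=
    ((affine.sqrt ht.ne').const_sub 1).div_const K
  have denominator : 1 - K * odeMajorant A K t = √(1 - 2 * A * K * t) := by
    rw [odeMajorant]; field_simp; ring
  have := Real.sqrt_pos.2 ht
  rw [deriv.deriv, Function.comp_apply, denominator]
  field_simp

variable {E F : Type*} [NormedAddCommGroup E] [NormedSpace ℝ E] [NormedAddCommGroup F]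
  [NormedSpace ℝ F] {M : RegularWeight}

theorem norm_iteratedFDeriv_le_of_fderiv_eq {h : E → F} {g : F → E →L[ℝ] F} {x : E}
    (hg : ContDiffAt ℝ ∞ g (h x)) (hh : ContDiffAt ℝ ∞ h x) (ode : fderiv ℝ h =ᶠ[𝓝 x] g ∘ h)
    {A B : ℝ} (hA : 0 ≤ A) (hB : 0 < B)
    (hgx : ∀ k, ‖iteratedFDeriv ℝ k g (h x)‖ ≤ A * B ^ k * k ! * M k) {n : ℕ} (hn : 1 ≤ n) :
    ‖iteratedFDeriv ℝ n h x‖ ≤ iteratedDeriv n (odeMajorant A (B * M 1)) 0 * M n := by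
  induction n using Nat.strong_induction_on with
  | _ n ih =>
    obtain ⟨m, rfl⟩ := Nat.exists_eq_add_of_le' hn
    have majorant_succ : iteratedDeriv (m + 1) (odeMajorant A (B * M 1)) 0 =
        iteratedDeriv m ((fun t => A * (1 - (B * M 1) * t)⁻¹) ∘ odeMajorant A (B * M 1)) 0 := by
      rw [iteratedDeriv_succ']
      exact (deriv_odeMajorant A (mul_pos hB (M.pos 1)).ne').iteratedDeriv_eq m
    have bound := norm_iteratedFDeriv_comp_le_of_majorant (n := m) hg hh hA hB.le hgx
      (analyticAt_odeMajorant A (B * M 1)) (odeMajorant_zero _ _)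
      fun j hj hjm => ih j (by omega) hj
    rw [← norm_iteratedFDeriv_fderiv, (ode.iteratedFDeriv ℝ m).self_of_nhds, majorant_succ]
    refine bound.trans (mul_le_mul_of_nonneg_left (M.monotone m.le_succ) ?_)
    exact nonneg_of_mul_nonneg_left ((norm_nonneg _).trans bound) (M.pos m)

theorem carlemanAt_of_fderiv_eq {h : E → F} {a : E} {g : F → E →L[ℝ] F}
    (hg : CarlemanAt M g (h a)) (hh : ∀ᶠ x in 𝓝 a, ContDiffAt ℝ ∞ h x)
    (ode : ∀ᶠ x in 𝓝 a, fderiv ℝ h x = g (h x)) : CarlemanAt M h a := by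
  have ha : ContinuousAt h a := hh.self_of_nhds.continuousAt
  obtain ⟨A, B, hA, hB, hg⟩ := hg
  obtain ⟨C, D, hC, hD, bound⟩ :=
    exists_norm_iteratedFDeriv_le_of_analyticAt (analyticAt_odeMajorant A (B * M 1))
  have bounded : ∀ᶠ x in 𝓝 a, ‖h x‖ < ‖h a‖ + 1 :=
    ha.norm.eventually (gt_mem_nhds (lt_add_one _))
  refine ⟨C + (‖h a‖ + 1), D, by positivity, hD, ?_⟩
  filter_upwards [eventually_eventually_nhds.2 ode, hh, ha.eventually hg, bounded]
    with x odex hhx hgx hx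
  refine ⟨hhx, fun n => ?_⟩
  have pos := M.pos n
  rcases Nat.eq_zero_or_pos n with rfl | hn
  · simp only [norm_iteratedFDeriv_zero, pow_zero, mul_one, Nat.factorial_zero, Nat.cast_one,
      M.zero_eq_one]
    linarith
  · refine (norm_iteratedFDeriv_le_of_fderiv_eq hgx.1 hhx odex hA.le hB hgx.2 hn).trans ?_
    gcongr
    calc iteratedDeriv n (odeMajorant A (B * M 1)) 0 ≤ C * D ^ n * n ! :=
          (le_abs_self _).trans (norm_iteratedFDeriv_eq_norm_iteratedDeriv (𝕜 := ℝ).symm.trans_le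
            (bound.self_of_nhds n))
      _ ≤ (C + (‖h a‖ + 1)) * D ^ n * n ! := by
          gcongr
          exact le_add_of_nonneg_right (by positivity)

end ODE

section ParametricIntegral

theorem intervalIntegrable_of_continuousAt_uncurry {X F : Type*} [TopologicalSpace X]
    [NormedAddCommGroup F] {H : ℝ → X → F} {a b : ℝ} {x : X}
    (hH : ∀ s ∈ uIcc a b, ContinuousAt (Function.uncurry H) (s, x)) :
    IntervalIntegrable (fun s => H s x) MeasureTheory.volume a b :=
  ContinuousOn.intervalIntegrable fun s hs =>
    ((hH s hs).comp (f := fun s => (s, x)) (by fun_prop)).continuousWithinAt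

variable {E F : Type*} [NormedAddCommGroup E] [NormedSpace ℝ E] [NormedAddCommGroup F]
  [NormedSpace ℝ F] {H : ℝ → E → F} {a b : ℝ} {U : Set E} {x : E}

theorem contDiffAt_uncurry_iteratedFDeriv {s : ℝ} {x : E}
    (hH : ContDiffAt ℝ ∞ (Function.uncurry H) (s, x)) (n : ℕ) :
    ContDiffAt ℝ ∞ (Function.uncurry fun s => iteratedFDeriv ℝ n (H s)) (s, x) := by
  induction n with
  | zero => exact (continuousMultilinearCurryFin0 ℝ E F).symm.contDiff.contDiffAt.comp _ hH
  | succ n ih =>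
    have fderiv : ContDiffAt ℝ ∞ (fun p : ℝ × E => fderiv ℝ (iteratedFDeriv ℝ n (H p.1)) p.2)
        (s, x) :=
      ContDiffAt.fderiv (n := ∞) (f := fun p : ℝ × E => iteratedFDeriv ℝ n (H p.1))
        (ih.comp ((s, x), x) (f := fun q : (ℝ × E) × E => (q.1.1, q.2)) (by fun_prop))
        contDiffAt_snd (by simp)
    exact (continuousMultilinearCurryLeftEquiv ℝ (fun _ : Fin (n + 1) => E)
      F).symm.contDiff.contDiffAt.comp (s, x) fderiv

theorem hasFDerivAt_intervalIntegral_of_contDiffAt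
    (hH : ∀ᶠ y in 𝓝 x, ∀ s ∈ uIcc a b, ContDiffAt ℝ ∞ (Function.uncurry H) (s, y)) :
    HasFDerivAt (fun x => ∫ s in a..b, H s x) (∫ s in a..b, fderiv ℝ (H s) x) x := by
  have fderiv_continuousAt : ∀ᶠ y in 𝓝 x, ∀ s ∈ uIcc a b,
      ContinuousAt (Function.uncurry fun s => fderiv ℝ (H s)) (s, y) :=
    hH.mono fun y hy s hs => ((continuousMultilinearCurryFin1 ℝ E F).continuous.continuousAt.comp
      (contDiffAt_uncurry_iteratedFDeriv (hy s hs) 1).continuousAt).congr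
        (.of_forall fun p => by ext; simp [Function.uncurry])
  obtain ⟨C, hC⟩ := (isCompact_uIcc (a := a) (b := b)).exists_bound_of_continuousOn
    (f := fun s => fderiv ℝ (H s) x) fun s hs =>
      ((fderiv_continuousAt.self_of_nhds s hs).comp
        (f := fun s => (s, x)) (by fun_prop)).continuousWithinAt
  have bounded : ∀ᶠ y in 𝓝 x, ∀ s ∈ uIcc a b, ‖fderiv ℝ (H s) y‖ < C + 1 := by
    refine isCompact_uIcc.eventually_forall_of_forall_eventually fun s hs => ?_
    have near := (fderiv_continuousAt.self_of_nhds s hs).norm.eventually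
      (gt_mem_nhds ((hC s hs).trans_lt (lt_add_one C)))
    exact (continuous_swap.tendsto (x, s)).eventually near
  have integrable := fderiv_continuousAt.self_of_nhds
  refine intervalIntegral.hasFDerivAt_integral_of_dominated_of_fderiv_le
    (s := {y | (∀ s ∈ uIcc a b, ContDiffAt ℝ ∞ (Function.uncurry H) (s, y)) ∧
      ∀ s ∈ uIcc a b, ‖fderiv ℝ (H s) y‖ < C + 1})
    (F := fun x s => H s x) (F' := fun x s => fderiv ℝ (H s) x) (bound := fun _ => C + 1)
    (hH.and bounded) ?_ ?_ ?_ ?_ intervalIntegrable_const ?_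
  · filter_upwards [hH] with y hy
    exact (intervalIntegrable_iff.1 (intervalIntegrable_of_continuousAt_uncurry
      fun s hs => (hy s hs).continuousAt)).aestronglyMeasurable
  · exact intervalIntegrable_of_continuousAt_uncurry
      fun s hs => (hH.self_of_nhds s hs).continuousAt
  · exact (intervalIntegrable_iff.1
      (intervalIntegrable_of_continuousAt_uncurry integrable)).aestronglyMeasurable
  · exact .of_forall fun s hs y hy => (hy.2 s (uIoc_subset_uIcc hs)).le
  · refine .of_forall fun s hs y hy => DifferentiableAt.hasFDerivAt ?_
    exact ((hy.1 s (uIoc_subset_uIcc hs)).comp (f := fun y => (s, y)) y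
      (by fun_prop)).differentiableAt (by simp)

theorem hasFTaylorSeriesUpToOn_intervalIntegral [CompleteSpace F] (hU : IsOpen U)
    (hH : ∀ x ∈ U, ∀ s ∈ uIcc a b, ContDiffAt ℝ ∞ (Function.uncurry H) (s, x)) :
    HasFTaylorSeriesUpToOn ∞ (fun x => ∫ s in a..b, H s x)
      (fun x n => ∫ s in a..b, iteratedFDeriv ℝ n (H s) x) U := by
  have derivative (n : ℕ) (x : E) (hx : x ∈ U) :
      HasFDerivAt (fun x => ∫ s in a..b, iteratedFDeriv ℝ n (H s) x)
        (∫ s in a..b, iteratedFDeriv ℝ (n + 1) (H s) x).curryLeft x := by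
    refine (hasFDerivAt_intervalIntegral_of_contDiffAt (H := fun s => iteratedFDeriv ℝ n (H s))
      (eventually_of_mem (hU.mem_nhds hx) fun y hy s hs =>
        contDiffAt_uncurry_iteratedFDeriv (hH y hy s hs) n)).congr_fderiv ?_
    exact (ContinuousLinearMap.intervalIntegral_comp_comm (𝕜 := ℝ) (E := E [×(n + 1)]→L[ℝ] F)
      (F := E →L[ℝ] E [×n]→L[ℝ] F) (continuousMultilinearCurryLeftEquiv ℝ
        (fun _ : Fin (n + 1) => E) F).toContinuousLinearEquiv.toContinuousLinearMap
        (intervalIntegrable_of_continuousAt_uncurry fun s hs =>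
          (contDiffAt_uncurry_iteratedFDeriv (hH x hx s hs) (n + 1)).continuousAt))
  refine ⟨fun x hx => ?_, fun n _ x hx => (derivative n x hx).hasFDerivWithinAt,
    fun n _ x hx => (derivative n x hx).continuousAt.continuousWithinAt⟩
  exact ((continuousMultilinearCurryFin0 ℝ E
    F).toContinuousLinearEquiv.toContinuousLinearMap.intervalIntegral_comp_comm
      (intervalIntegrable_of_continuousAt_uncurry fun s hs =>
        (contDiffAt_uncurry_iteratedFDeriv (hH x hx s hs) 0).continuousAt)).symm

theorem norm_iteratedFDeriv_le_uncurry {s : ℝ} {n : ℕ}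
    (hH : ContDiffAt ℝ n (Function.uncurry H) (s, x)) :
    ‖iteratedFDeriv ℝ n (H s) x‖ ≤ ‖iteratedFDeriv ℝ n (Function.uncurry H) (s, x)‖ := by
  have := norm_iteratedFDeriv_comp_const_add_clm_le (c := (s, (0 : E)))
    (L := ContinuousLinearMap.inr ℝ ℝ E) (x := x) (n := n) (f := Function.uncurry H) (by simpa)
  simp only [ContinuousLinearMap.inr_apply, Prod.mk_add_mk, add_zero, zero_add,
    Function.uncurry_apply_pair] at this
  refine this.trans (mul_le_of_le_one_right (norm_nonneg _) (pow_le_one₀ (norm_nonneg _) ?_))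
  exact ContinuousLinearMap.norm_inr_le_one ℝ ℝ E

variable {M : RegularWeight}

theorem eventually_forall_bound_of_carlemanAt_uncurry {S : Set ℝ} (hS : IsCompact S)
    (hH : ∀ s ∈ S, CarlemanAt M (Function.uncurry H) (s, x)) :
    ∃ A B : ℝ, 0 < A ∧ 0 < B ∧ ∀ᶠ y in 𝓝 x, ∀ s ∈ S,
      ContDiffAt ℝ ∞ (Function.uncurry H) (s, y) ∧
        ∀ n, ‖iteratedFDeriv ℝ n (Function.uncurry H) (s, y)‖ ≤ A * B ^ n * n ! * M n := by
  refine hS.induction_on ⟨1, 1, one_pos, one_pos, by simp⟩ ?_ ?_ fun s hs => ?_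
  · rintro S T hST ⟨A, B, hA, hB, h⟩
    exact ⟨A, B, hA, hB, h.mono fun y hy s hs => hy s (hST hs)⟩
  · rintro S T ⟨A, B, hA, hB, h⟩ ⟨A', B', _, hB', h'⟩
    refine ⟨max A A', max B B', by positivity, by positivity, ?_⟩
    filter_upwards [h, h'] with y hy hy' s hs
    have pos := M.pos
    rcases hs with hs | hs
    · refine ⟨(hy s hs).1, fun n => ((hy s hs).2 n).trans ?_⟩
      have := pos n
      gcongr <;> exact le_max_left _ _
    · refine ⟨(hy' s hs).1, fun n => ((hy' s hs).2 n).trans ?_⟩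
      have := pos n
      gcongr <;> exact le_max_right _ _
  · obtain ⟨A, B, hA, hB, h⟩ := hH s hs
    rw [nhds_prod_eq] at h
    obtain ⟨near_s, hs, near_x, hx, h⟩ := eventually_prod_iff.1 h
    exact ⟨{t | near_s t}, mem_nhdsWithin_of_mem_nhds hs, A, B, hA, hB,
      hx.mono fun y hy t ht => h ht hy⟩

theorem carlemanAt_intervalIntegral [CompleteSpace F]
    (hH : ∀ s ∈ uIcc a b, CarlemanAt M (Function.uncurry H) (s, x)) :
    CarlemanAt M (fun x => ∫ s in a..b, H s x) x := by
  obtain ⟨A, B, hA, hB, near⟩ := eventually_forall_bound_of_carlemanAt_uncurry isCompact_uIcc hH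
  obtain ⟨U, hxU, hU, bound⟩ : ∃ U, x ∈ U ∧ IsOpen U ∧ ∀ y ∈ U, _ := by
    obtain ⟨U, bound, hU, hxU⟩ := eventually_nhds_iff.1 near
    exact ⟨U, hxU, hU, bound⟩
  have taylor := hasFTaylorSeriesUpToOn_intervalIntegral hU fun y hy s hs => (bound y hy s hs).1
  refine ⟨A * (|b - a| + 1), B, by positivity, hB, ?_⟩
  filter_upwards [hU.mem_nhds hxU] with y hy
  refine ⟨taylor.contDiffOn.contDiffAt (hU.mem_nhds hy), fun n => ?_⟩
  have pos := M.pos n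
  rw [← iteratedFDerivWithin_of_isOpen n hU hy, ← taylor.eq_iteratedFDerivWithin_of_uniqueDiffOn
    (mod_cast le_top) hU.uniqueDiffOn hy]
  calc ‖∫ s in a..b, iteratedFDeriv ℝ n (H s) y‖ ≤ A * B ^ n * n ! * M n * |b - a| :=
        intervalIntegral.norm_integral_le_of_norm_le_const fun s hs =>
          (norm_iteratedFDeriv_le_uncurry ((bound y hy s (uIoc_subset_uIcc hs)).1.of_le
            (mod_cast le_top))).trans ((bound y hy s (uIoc_subset_uIcc hs)).2 n)
    _ ≤ A * B ^ n * n ! * M n * (|b - a| + 1) := by gcongr; linarith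
    _ = A * (|b - a| + 1) * B ^ n * n ! * M n := by ring

end ParametricIntegral

section Division

variable {E F : Type*} [NormedAddCommGroup E] [NormedSpace ℝ E] [CompleteSpace E]
  [NormedAddCommGroup F] [NormedSpace ℝ F] [CompleteSpace F] {M : RegularWeight}

theorem CarlemanAt.exists_sub_eq_smul {f : E → F} {a : E} (hf : CarlemanAt M f a) (l : E →L[ℝ] ℝ)
    (e : E) (ha : l a = 0) :
    ∃ g : E → F, CarlemanAt M g a ∧ ∀ᶠ x in 𝓝 a, f x - f (x - l x • e) = l x • g x := by
  have path (t : ℝ) : a - (t * l a) • e = a := by simp [ha]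
  have integrand (t : ℝ) :
      CarlemanAt M (fun p : ℝ × E => fderiv ℝ f (p.2 - (p.1 * l p.2) • e) e) (t, a) := by
    have : CarlemanAt M (fderiv ℝ f) (a - (t * l a) • e) := by rw [path]; exact hf.fderiv
    have := this.comp (f := fun p : ℝ × E => p.2 - (p.1 * l p.2) • e) (a := (t, a)) (by fun_prop)
    fun_prop
  refine ⟨fun x => ∫ t in (0 : ℝ)..1, fderiv ℝ f (x - (t * l x) • e) e,
    carlemanAt_intervalIntegral fun t _ => integrand t, ?_⟩
  have smooth : ∀ᶠ x in 𝓝 a, ∀ t ∈ uIcc (0 : ℝ) 1, CarlemanAt M f (x - (t * l x) • e) ∧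
      CarlemanAt M (fun p : ℝ × E => fderiv ℝ f (p.2 - (p.1 * l p.2) • e) e) (t, x) := by
    refine isCompact_uIcc.eventually_forall_of_forall_eventually fun t _ => Eventually.and ?_ ?_
    · refine (by fun_prop : ContinuousAt (fun p : E × ℝ => p.1 - (p.2 * l p.1) • e)
        (a, t)).eventually ?_
      simpa only [path] using hf.eventually
    · exact (continuous_swap.tendsto (a, t)).eventually (integrand t).eventually
  filter_upwards [smooth] with x hx
  have derivative (t : ℝ) (ht : t ∈ uIcc (0 : ℝ) 1) : HasDerivAt (fun t => f (x - (t * l x) • e))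
      (-(l x • fderiv ℝ f (x - (t * l x) • e) e)) t := by
    have line : HasDerivAt (fun t => x - (t * l x) • e) (-(l x • e)) t := by
      simpa using (((hasDerivAt_id t).mul_const (l x)).smul_const e).const_sub x
    simpa [Function.comp_def] using (hx t ht).1.differentiableAt.hasFDerivAt.comp_hasDerivAt t line
  have integrable : IntervalIntegrable (fun t => -(l x • fderiv ℝ f (x - (t * l x) • e) e))
      MeasureTheory.volume 0 1 :=
    intervalIntegrable_of_continuousAt_uncurry
      (H := fun t x => -(l x • fderiv ℝ f (x - (t * l x) • e) e)) fun t ht =>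
        ((l.continuous.comp continuous_snd).continuousAt.smul (hx t ht).2.continuousAt).neg
  have ftc := intervalIntegral.integral_eq_sub_of_hasDerivAt derivative integrable
  rw [intervalIntegral.integral_neg, intervalIntegral.integral_smul] at ftc
  simpa using (congrArg Neg.neg ftc).symm

theorem CarlemanAt.exists_eq_smul {f : E → F} {a : E} (hf : CarlemanAt M f a) (l : E →L[ℝ] ℝ)
    {e : E} (he : l e = 1) (ha : l a = 0) (h0 : ∀ᶠ x in 𝓝 a, l x = 0 → f x = 0) :
    ∃ g : E → F, CarlemanAt M g a ∧ ∀ᶠ x in 𝓝 a, f x = l x • g x := by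
  obtain ⟨g, hg, hfg⟩ := hf.exists_sub_eq_smul l e ha
  have projection : Tendsto (fun x => x - l x • e) (𝓝 a) (𝓝 a) :=
    (by fun_prop : Continuous fun x => x - l x • e).tendsto' a a (by simp [ha])
  refine ⟨g, hg, ?_⟩
  filter_upwards [hfg, projection.eventually h0] with x hx hx0
  rw [← hx, hx0 (by simp [he]), sub_zero]

end Division

section ImplicitFunction

variable {E F G : Type*} [NormedAddCommGroup E] [NormedSpace ℝ E] [CompleteSpace E]
  [NormedAddCommGroup F] [NormedSpace ℝ F] [CompleteSpace F] [NormedAddCommGroup G]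
  [NormedSpace ℝ G] [CompleteSpace G] {f : E × F → G} {u : E × F}

theorem eventually_hasFDerivAt_implicitFunction (hf : ∀ᶠ p in 𝓝 u, ContDiffAt ℝ ∞ f p)
    (invertible : (fderiv ℝ f u ∘L .inr ℝ E F).IsInvertible) :
    let g := hf.self_of_nhds.implicitFunction (by simp) invertible
    ∀ᶠ x in 𝓝 u.1, ContDiffAt ℝ ∞ g x ∧ HasFDerivAt g
      (-(fderiv ℝ f (x, g x) ∘L .inr ℝ E F).inverse ∘L (fderiv ℝ f (x, g x) ∘L .inl ℝ E F)) x := by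
  intro g
  have g_self : g u.1 = u.2 := hf.self_of_nhds.implicitFunction_apply_self (by simp) invertible
  have g_smooth : ContDiffAt ℝ 1 g u.1 :=
    (hf.self_of_nhds.contDiffAt_implicitFunction (by simp) invertible).of_le (mod_cast le_top)
  have graph : Tendsto (fun x => (x, g x)) (𝓝 u.1) (𝓝 u) := by
    simpa [ContinuousAt, g_self] using continuousAt_id.prodMk g_smooth.continuousAt
  have invertible_near : ∀ᶠ p in 𝓝 u, (fderiv ℝ f p ∘L .inr ℝ E F).IsInvertible := by
    have : ContinuousAt (fun p => fderiv ℝ f p ∘L .inr ℝ E F) u :=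
      (hf.self_of_nhds.continuousAt_fderiv (by simp)).clm_comp continuousAt_const
    exact this.eventually (ContinuousLinearEquiv.isOpen.mem_nhds invertible)
  have equation := hf.self_of_nhds.eventually_apply_implicitFunction (by simp) invertible
  filter_upwards [graph.eventually hf, graph.eventually invertible_near,
    eventually_eventually_nhds.2 equation, g_smooth.eventually (by simp)]
    with x hfx hinv hx hgx
  have unique : hfx.implicitFunction (by simp) hinv =ᶠ[𝓝 x] g := by
    have graph : Tendsto (fun y => (y, g y)) (𝓝 x) (𝓝 (x, g x)) :=
      continuousAt_id.prodMk hgx.continuousAt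
    filter_upwards [hx, graph.eventually
      (hfx.eventually_apply_eq_iff_implicitFunction (by simp) hinv)] with y hy hyx
    exact hyx.1 (hy.trans hx.self_of_nhds.symm)
  exact ⟨(hfx.contDiffAt_implicitFunction (by simp) hinv).congr_of_eventuallyEq unique.symm,
    (hfx.hasStrictFDerivAt_implicitFunction (by simp) hinv).hasFDerivAt.congr_of_eventuallyEq
      unique.symm⟩

variable {M : RegularWeight}

theorem CarlemanAt.implicitFunction (hf : CarlemanAt M f u)
    (invertible : (fderiv ℝ f u ∘L .inr ℝ E F).IsInvertible) :
    CarlemanAt M (hf.contDiffAt.implicitFunction (by simp) invertible) u.1 := by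
  set g := hf.contDiffAt.implicitFunction (by simp) invertible
  have derivative := eventually_hasFDerivAt_implicitFunction
    (hf.eventually.mono fun _ => CarlemanAt.contDiffAt) invertible
  have g_self : g u.1 = u.2 := hf.contDiffAt.implicitFunction_apply_self (by simp) invertible
  have smooth_fderiv := hf.fderiv
  have smooth_inverse : CarlemanAt M (fun p => (fderiv ℝ f p ∘L .inr ℝ E F).inverse) u := by
    obtain ⟨e, he⟩ := invertible
    refine CarlemanAt.comp (g := ContinuousLinearMap.inverse) ?_ (by fun_prop)
    rw [← he]
    exact carlemanAt_of_analyticAt (contDiffAt_map_inverse e).analyticAt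
  have smooth_rhs : CarlemanAt M (fun p => ContinuousLinearMap.inl ℝ E F +
      ContinuousLinearMap.inr ℝ E F ∘L
        (-((fderiv ℝ f p ∘L .inr ℝ E F).inverse ∘L (fderiv ℝ f p ∘L .inl ℝ E F)))) u := by
    fun_prop
  -- The graph `x ↦ (x, g x)` solves an autonomous differential equation, unlike `g` itself.
  have smooth_graph : CarlemanAt M (fun x => (x, g x)) u.1 := by
    refine carlemanAt_of_fderiv_eq (by rwa [g_self]) ?_ ?_
    · filter_upwards [derivative] with x hx using contDiffAt_id.prodMk hx.1
    · filter_upwards [derivative] with x hx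
      refine ((hasFDerivAt_id x).prodMk hx.2).fderiv.trans ?_
      ext v <;> simp [g]
  exact smooth_graph.snd

end ImplicitFunction

section Bang

theorem contDiffAt_iteratedDeriv {g : ℝ → ℝ} {x : ℝ} (n : ℕ) (hg : ContDiffAt ℝ ∞ g x) :
    ContDiffAt ℝ ∞ (iteratedDeriv n g) x := by
  induction n with
  | zero => simpa using hg
  | succ n ih =>
    rw [iteratedDeriv_succ]
    exact (ih.fderiv_right (m := ∞) (by simp)).clm_apply (contDiffAt_const (c := (1 : ℝ)))

theorem iteratedDeriv_iteratedDeriv (g : ℝ → ℝ) (n j : ℕ) :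
    iteratedDeriv j (iteratedDeriv n g) = iteratedDeriv (n + j) g := by
  simp only [iteratedDeriv_eq_iterate, ← Function.iterate_add_apply, add_comm]

theorem abs_apply_add_le_sum_of_abs_iteratedDeriv_le {g : ℝ → ℝ} {x h : ℝ} {p : ℕ} {D : ℕ → ℝ}
    (hh : 0 < h) (hg : ∀ y ∈ Icc x (x + h), ContDiffAt ℝ ∞ g y)
    (at_left : ∀ j ≤ p, |iteratedDeriv j g x| ≤ D j)
    (on_interval : ∀ y ∈ Icc x (x + h), |iteratedDeriv (p + 1) g y| ≤ D (p + 1)) :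
    |g (x + h)| ≤ ∑ j ∈ Finset.range (p + 2), D j * h ^ j / j ! := by
  have lt : x < x + h := by linarith
  have smooth (n : ℕ) : ContDiffOn ℝ n g (uIcc x (x + h)) := fun y hy =>
    ((hg y (uIcc_of_le lt.le ▸ hy)).of_le (mod_cast le_top)).contDiffWithinAt
  obtain ⟨y, hy, remainder⟩ := taylor_mean_remainder_lagrange_iteratedDeriv lt.ne (smooth (p + 1))
  have hy : y ∈ Icc x (x + h) := uIcc_of_le lt.le ▸ Ioo_subset_Icc_self hy
  have polynomial : taylorWithinEval g p (uIcc x (x + h)) x (x + h) =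
      ∑ j ∈ Finset.range (p + 1), iteratedDeriv j g x * h ^ j / j ! := by
    rw [taylor_within_apply]
    refine Finset.sum_congr rfl fun j _ => ?_
    rw [iteratedDerivWithin_eq_iteratedDeriv (uniqueDiffOn_uIcc lt.ne)
      ((hg x (left_mem_Icc.2 lt.le)).of_le (mod_cast le_top)) left_mem_uIcc, smul_eq_mul,
      add_sub_cancel_left]
    ring
  rw [polynomial, add_sub_cancel_left, sub_eq_iff_eq_add'] at remainder
  have term {j : ℕ} {d : ℝ} (hd : |d| ≤ D j) : |d * h ^ j / j !| ≤ D j * h ^ j / j ! := by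
    rw [abs_div, abs_mul, abs_of_pos (pow_pos hh j), Nat.abs_cast]
    gcongr
  rw [remainder, Finset.sum_range_succ _ (p + 1)]
  exact (abs_add_le _ _).trans (add_le_add ((Finset.abs_sum_le_sum_abs _ _).trans
    (Finset.sum_le_sum fun j hj => term (at_left j (Finset.mem_range_succ_iff.1 hj))))
    (term (on_interval y hy)))

variable {m : ℕ → ℝ} (m_pos : ∀ n, 0 < m n) (ratio_mono : Monotone fun n => m (n + 1) / m n)
include m_pos ratio_mono

theorem apply_add_le_mul_ratio_pow {n j k : ℕ} (h : n + j ≤ k + 1) :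
    m (n + j) ≤ m n * (m (k + 1) / m k) ^ j := by
  induction j with
  | zero => simp
  | succ j ih =>
    have pos := m_pos
    have ratio_le : m (n + j + 1) / m (n + j) ≤ m (k + 1) / m k :=
      ratio_mono (by omega : n + j ≤ k)
    calc m (n + (j + 1)) = m (n + j) * (m (n + j + 1) / m (n + j)) := by
          rw [mul_div_cancel₀ _ (pos _).ne', add_assoc]
      _ ≤ m n * (m (k + 1) / m k) ^ j * (m (k + 1) / m k) := by
          have := pos n; have := pos k; have := pos (k + 1)
          have := ih (by omega)
          gcongr
          exact (div_pos (pos _) (pos _)).le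
      _ = m n * (m (k + 1) / m k) ^ (j + 1) := by ring

variable {g : ℝ → ℝ} {x h c : ℝ} {k : ℕ}

-- Taylor expansion to order `k + 1 - n`: the hypothesis on `c` makes the bound at `x` weaker than
-- the uniform bound `m` exactly at the order of the remainder.
theorem abs_iteratedDeriv_apply_add_le_of_le (hh : 0 < h)
    (hg : ∀ y ∈ Icc x (x + h), ContDiffAt ℝ ∞ g y ∧ ∀ n, |iteratedDeriv n g y| ≤ m n)
    (hc : Real.exp (-(k + 1)) ≤ c) (hx : ∀ n, |iteratedDeriv n g x| ≤ c * Real.exp n * m n)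
    {n : ℕ} (hn : n ≤ k) :
    |iteratedDeriv n g (x + h)| ≤
      c * Real.exp (Real.exp 1 * h * (m (k + 1) / m k)) * Real.exp n * m n := by
  have c_pos : 0 < c := (Real.exp_pos _).trans_le hc
  have mn_pos := m_pos n
  obtain ⟨p, rfl⟩ := Nat.exists_eq_add_of_le hn
  set ρ := m (n + p + 1) / m (n + p)
  have ρ_pos : 0 < ρ := div_pos (m_pos _) (m_pos _)
  have growth {j : ℕ} (hj : j ≤ p + 1) : m (n + j) ≤ m n * ρ ^ j :=
    apply_add_le_mul_ratio_pow m_pos ratio_mono (by omega)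
  have taylor := abs_apply_add_le_sum_of_abs_iteratedDeriv_le (g := iteratedDeriv n g) (p := p)
    (D := fun j => c * Real.exp (n + j) * (m n * ρ ^ j)) hh
    (fun y hy => contDiffAt_iteratedDeriv n (hg y hy).1)
    (fun j hj => by
      rw [iteratedDeriv_iteratedDeriv]
      refine (hx (n + j)).trans ?_
      push_cast
      gcongr
      exact growth (by omega))
    (fun y hy => by
      rw [iteratedDeriv_iteratedDeriv]
      have one_le : 1 ≤ c * Real.exp (n + (p + 1 : ℕ)) := by
        calc (1 : ℝ) = Real.exp (-((n + p : ℕ) + 1)) * Real.exp (n + (p + 1 : ℕ)) := by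
              rw [← Real.exp_add, eq_comm, Real.exp_eq_one_iff]; push_cast; ring
          _ ≤ c * Real.exp (n + (p + 1 : ℕ)) := by gcongr
      calc |iteratedDeriv (n + (p + 1)) g y| ≤ 1 * m (n + (p + 1)) := by
            rw [one_mul]; exact (hg y hy).2 _
        _ ≤ c * Real.exp (n + (p + 1 : ℕ)) * (m n * ρ ^ (p + 1)) := by
          have := (m_pos (n + (p + 1))).le
          gcongr
          exact growth le_rfl)
  calc |iteratedDeriv n g (x + h)|
      ≤ ∑ j ∈ Finset.range (p + 2), c * Real.exp (n + j) * (m n * ρ ^ j) * h ^ j / j ! := taylor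
    _ = c * Real.exp n * m n * ∑ j ∈ Finset.range (p + 2), (Real.exp 1 * h * ρ) ^ j / j ! := by
        rw [Finset.mul_sum]
        refine Finset.sum_congr rfl fun j _ => ?_
        rw [Real.exp_add, ← Real.exp_one_pow j]
        ring
    _ ≤ c * Real.exp n * m n * Real.exp (Real.exp 1 * h * ρ) := by
        gcongr
        exact Real.sum_le_exp_of_nonneg (by positivity) (p + 2)
    _ = c * Real.exp (Real.exp 1 * h * ρ) * Real.exp n * m n := by ring

theorem abs_iteratedDeriv_apply_add_le (hh : 0 < h)
    (hg : ∀ y ∈ Icc x (x + h), ContDiffAt ℝ ∞ g y ∧ ∀ n, |iteratedDeriv n g y| ≤ m n)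
    (hc : Real.exp (-(k + 1)) ≤ c) (hx : ∀ n, |iteratedDeriv n g x| ≤ c * Real.exp n * m n)
    (n : ℕ) :
    |iteratedDeriv n g (x + h)| ≤
      c * Real.exp (Real.exp 1 * h * (m (k + 1) / m k)) * Real.exp n * m n := by
  rcases le_or_gt n k with hn | hn
  · exact abs_iteratedDeriv_apply_add_le_of_le m_pos ratio_mono hh hg hc hx hn
  have mn_pos := m_pos n
  have one_le_exp : 1 ≤ Real.exp (Real.exp 1 * h * (m (k + 1) / m k)) :=
    Real.one_le_exp (mul_nonneg (by positivity) (div_pos (m_pos _) (m_pos _)).le)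
  have one_le : 1 ≤ c * Real.exp n :=
    calc (1 : ℝ) = Real.exp (-n) * Real.exp n := by rw [← Real.exp_add]; simp
      _ ≤ c * Real.exp n := by
        gcongr
        refine le_trans (Real.exp_le_exp.2 (neg_le_neg ?_)) hc
        exact_mod_cast hn
  calc |iteratedDeriv n g (x + h)| ≤ 1 * 1 * m n := by
        simpa using (hg (x + h) ⟨by linarith, le_rfl⟩).2 n
    _ ≤ (c * Real.exp n) * Real.exp (Real.exp 1 * h * (m (k + 1) / m k)) * m n := by gcongr
    _ = c * Real.exp (Real.exp 1 * h * (m (k + 1) / m k)) * Real.exp n * m n := by ring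

variable {T : ℝ} (hg : ∀ y ∈ Icc 0 T, ContDiffAt ℝ ∞ g y ∧ ∀ n, |iteratedDeriv n g y| ≤ m n)
  (flat : ∀ n, iteratedDeriv n g 0 = 0)
include hg flat

-- Downward induction on `N`: each step of length at most `m N / (e * m (N + 1))` costs one factor
-- `e` in the bound.
theorem abs_iteratedDeriv_le_exp_neg_mul {N K : ℕ} (hNK : N ≤ K) :
    ∀ x ∈ Icc 0 T, Real.exp 1 * x ≤ ∑ k ∈ Finset.Ico N K, m k / m (k + 1) →
      ∀ n, |iteratedDeriv n g x| ≤ Real.exp (-N) * Real.exp n * m n := by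
  induction hNK using Nat.decreasingInduction with
  | self =>
    intro x hx hxK n
    have x_zero : x = 0 := by
      rw [Finset.Ico_self, Finset.sum_empty] at hxK
      exact le_antisymm (nonpos_of_mul_nonpos_right hxK (Real.exp_pos 1)) hx.1
    have := m_pos n
    rw [x_zero, flat, abs_zero]
    positivity
  | of_succ N hN ih =>
    intro x hx hxN n
    have mn_pos := m_pos n
    have mN_pos := m_pos N
    have mN_succ_pos := m_pos (N + 1)
    rw [Finset.sum_eq_sum_Ico_succ_bot hN] at hxN
    rcases le_or_gt (Real.exp 1 * x) (∑ k ∈ Finset.Ico (N + 1) K, m k / m (k + 1)) with near | far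
    · refine (ih x hx near n).trans ?_
      gcongr
      simp
    obtain ⟨y, hy⟩ : ∃ y, Real.exp 1 * y = ∑ k ∈ Finset.Ico (N + 1) K, m k / m (k + 1) :=
      ⟨_ / Real.exp 1, mul_div_cancel₀ _ (Real.exp_pos 1).ne'⟩
    have y_nonneg : 0 ≤ y := by
      refine nonneg_of_mul_nonneg_right (hy ▸ Finset.sum_nonneg fun k _ => ?_) (Real.exp_pos 1)
      exact (div_pos (m_pos _) (m_pos _)).le
    have y_lt : y < x := lt_of_mul_lt_mul_left (hy ▸ far) (Real.exp_pos 1).le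
    have advance := abs_iteratedDeriv_apply_add_le m_pos ratio_mono (k := N) (sub_pos.2 y_lt)
      (fun z hz => hg z ⟨y_nonneg.trans hz.1, by linarith [hz.2, hx.2]⟩)
      (c := Real.exp (-(N + 1 : ℕ))) (by push_cast; exact le_rfl)
      (ih y ⟨y_nonneg, y_lt.le.trans hx.2⟩ hy.le) n
    rw [add_sub_cancel] at advance
    have step_le_one : Real.exp 1 * (x - y) * (m (N + 1) / m N) ≤ 1 :=
      calc _ ≤ m N / m (N + 1) * (m (N + 1) / m N) := by gcongr; linarith
        _ = 1 := by field_simp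
    calc _ ≤ Real.exp (-(N + 1 : ℕ)) * Real.exp 1 * Real.exp n * m n := advance.trans (by gcongr)
      _ = Real.exp (-N) * Real.exp n * m n := by rw [← Real.exp_add]; push_cast; ring_nf

theorem eq_zero_of_iteratedDeriv_eq_zero (hT : 0 ≤ T)
    (diverges : ¬ Summable fun k => m k / m (k + 1)) : g T = 0 := by
  have ratio_nonneg (k : ℕ) : 0 ≤ m k / m (k + 1) := (div_pos (m_pos _) (m_pos _)).le
  have bound (N : ℕ) : |g T| ≤ Real.exp (-N) * m 0 := by
    obtain ⟨K, hNK, hK⟩ := ((eventually_ge_atTop N).and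
      (((not_summable_iff_tendsto_nat_atTop_of_nonneg ratio_nonneg).1 diverges).eventually_ge_atTop
        (∑ k ∈ Finset.range N, m k / m (k + 1) + Real.exp 1 * T))).exists
    rw [← Finset.sum_range_add_sum_Ico _ hNK] at hK
    simpa using abs_iteratedDeriv_le_exp_neg_mul m_pos ratio_mono hg flat hNK T ⟨hT, le_rfl⟩
      (by linarith) 0
  have limit : Tendsto (fun N : ℕ => Real.exp (-N) * m 0) atTop (𝓝 (0 * m 0)) :=
    (Real.tendsto_exp_neg_atTop_nhds_zero.comp tendsto_natCast_atTop_atTop).mul_const _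
  rw [zero_mul] at limit
  exact abs_eq_zero.1 (le_antisymm (ge_of_tendsto' limit bound) (abs_nonneg _))

end Bang

section Quasianalytic

/-- The Denjoy–Carleman divergence condition, which characterizes the weights whose class contains
no nonzero flat germ. -/
def RegularWeight.Quasianalytic (M : RegularWeight) : Prop :=
  ¬ Summable fun k : ℕ => M k / ((k + 1) * M (k + 1))

variable {E : Type*} [NormedAddCommGroup E] [NormedSpace ℝ E] {M : RegularWeight}

theorem RegularWeight.Quasianalytic.eq_zero_of_bound (hM : M.Quasianalytic) {g : ℝ → ℝ} {A B T : ℝ}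
    (hA : 0 < A) (hB : 0 < B) (hT : 0 ≤ T)
    (hg : ∀ y ∈ Icc 0 T, ContDiffAt ℝ ∞ g y ∧ ∀ n, |iteratedDeriv n g y| ≤ A * B ^ n * n ! * M n)
    (flat : ∀ n, iteratedDeriv n g 0 = 0) : g T = 0 := by
  have ratio (n : ℕ) : A * B ^ (n + 1) * (n + 1)! * M (n + 1) / (A * B ^ n * n ! * M n) =
      B * ((n + 1) * (M (n + 1) / M n)) := by
    have := M.pos n
    rw [Nat.factorial_succ]
    push_cast
    field_simp
    ring
  refine eq_zero_of_iteratedDeriv_eq_zero (m := fun n => A * B ^ n * n ! * M n)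
    (fun n => ?_) (fun i j hij => ?_) hg flat hT fun summable => hM ?_
  · have := M.pos n
    positivity
  · simp only [ratio]
    have := (div_pos (M.pos (i + 1)) (M.pos i)).le
    have : M (i + 1) / M i ≤ M (j + 1) / M j := M.ratio_monotone hij
    gcongr
  · refine (summable.mul_left B).congr fun n => ?_
    rw [← inv_div, ratio]
    have := M.pos n
    have := M.pos (n + 1)
    field_simp

theorem RegularWeight.Quasianalytic.eq_zero_of_line (hM : M.Quasianalytic) {f : E → ℝ} {s : Set E}
    (hs : Convex ℝ s) {A B : ℝ} (hA : 0 < A) (hB : 0 < B)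
    (hf : ∀ x ∈ s, ContDiffAt ℝ ∞ f x ∧ ∀ n, ‖iteratedFDeriv ℝ n f x‖ ≤ A * B ^ n * n ! * M n)
    {p q : E} (hp : p ∈ s) (hq : q ∈ s)
    (flat : ∀ n, iteratedDeriv n (fun t : ℝ => f (p + t • (q - p))) 0 = 0) : f q = 0 := by
  have segment : ∀ t ∈ Icc (0 : ℝ) 1, p + t • (q - p) ∈ s := fun t ht =>
    hs.add_smul_sub_mem hp hq ht
  have := hM.eq_zero_of_bound (g := fun t : ℝ => f (p + t • (q - p))) (T := 1) hA
    (B := B * (‖q - p‖ + 1)) (by positivity) zero_le_one (fun t ht => ?_) flat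
  · simpa using this
  obtain ⟨smooth, bound⟩ := hf _ (segment t ht)
  refine ⟨smooth.comp t (by fun_prop), fun n => ?_⟩
  have chain := norm_iteratedFDeriv_comp_const_add_clm_le (f := f) (c := p) (x := t) (n := n)
    (L := ContinuousLinearMap.toSpanSingleton ℝ (q - p)) (by
      simpa using smooth.of_le (mod_cast le_top))
  simp only [ContinuousLinearMap.toSpanSingleton_apply, ContinuousLinearMap.norm_toSpanSingleton,
    norm_iteratedFDeriv_eq_norm_iteratedDeriv, Real.norm_eq_abs] at chain
  have := M.pos n
  calc _ ≤ A * B ^ n * n ! * M n * (‖q - p‖ + 1) ^ n := by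
        refine chain.trans ?_
        gcongr
        · exact bound n
        · simp
    _ = A * (B * (‖q - p‖ + 1)) ^ n * n ! * M n := by rw [mul_pow]; ring

theorem CarlemanAt.exists_iteratedDeriv_line_ne_zero (hM : M.Quasianalytic) {f : E → ℝ} {a : E}
    (hf : CarlemanAt M f a) (nonzero : ¬ ∀ᶠ x in 𝓝 a, f x = 0) :
    ∃ (v : E) (d : ℕ), iteratedDeriv d (fun t : ℝ => f (a + t • v)) 0 ≠ 0 := by
  by_contra! flat
  obtain ⟨A, B, hA, hB, hf⟩ := hf
  obtain ⟨r, hr, bound⟩ := Metric.eventually_nhds_iff_ball.1 hf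
  refine nonzero ?_
  filter_upwards [Metric.ball_mem_nhds a hr] with q hq
  exact hM.eq_zero_of_line (convex_ball a r) hA hB bound (Metric.mem_ball_self hr) hq
    (flat (q - a))

theorem CarlemanAt.eventually_eq_zero_or_of_mul (hM : M.Quasianalytic) {f g : E → ℝ} {a : E}
    (hf : CarlemanAt M f a) (hg : CarlemanAt M g a) (hfg : ∀ᶠ x in 𝓝 a, f x * g x = 0) :
    (∀ᶠ x in 𝓝 a, f x = 0) ∨ ∀ᶠ x in 𝓝 a, g x = 0 := by
  have hf_cont : ∀ᶠ x in 𝓝 a, ContinuousAt f x := hf.eventually.mono fun x h => h.continuousAt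
  obtain ⟨A, B, hA, hB, hg⟩ := hg
  obtain ⟨r, hr, ball⟩ := Metric.eventually_nhds_iff_ball.1 (hg.and (hf_cont.and hfg))
  refine or_iff_not_imp_left.2 fun hf_ne => ?_
  obtain ⟨p, hp, hpf⟩ : ∃ p ∈ Metric.ball a r, f p ≠ 0 := by
    by_contra! hf_zero
    exact hf_ne (by filter_upwards [Metric.ball_mem_nhds a hr] using hf_zero)
  have g_zero_near : ∀ᶠ x in 𝓝 p, g x = 0 := by
    filter_upwards [(ball p hp).2.1.eventually_ne hpf, Metric.isOpen_ball.mem_nhds hp] with x hx hxr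
    exact (mul_eq_zero.1 (ball x hxr).2.2).resolve_left hx
  filter_upwards [Metric.ball_mem_nhds a hr] with q hq
  refine hM.eq_zero_of_line (convex_ball a r) hA hB (fun x hx => (ball x hx).1) hp hq fun n => ?_
  have line_zero : (fun t : ℝ => g (p + t • (q - p))) =ᶠ[𝓝 0] fun _ => (0 : ℝ) := by
    have : ContinuousAt (fun t : ℝ => p + t • (q - p)) 0 := by fun_prop
    exact this.eventually (p := fun y => g y = 0) (by simpa using g_zero_near)
  rw [line_zero.iteratedDeriv_eq, iteratedDeriv_const]
  split_ifs <;> rfl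

theorem CarlemanAt.exists_eventually_eq_zero_of_prod (hM : M.Quasianalytic) {ι : Type*}
    {s : Finset ι} {f : ι → E → ℝ} {a : E} (hf : ∀ i ∈ s, CarlemanAt M (f i) a)
    (h : ∀ᶠ x in 𝓝 a, ∏ i ∈ s, f i x = 0) : ∃ i ∈ s, ∀ᶠ x in 𝓝 a, f i x = 0 := by
  classical
  induction s using Finset.induction_on with
  | empty => simpa using h.self_of_nhds
  | insert i s hi ih =>
    have hs : ∀ j ∈ s, CarlemanAt M (f j) a := fun j hj => hf j (Finset.mem_insert_of_mem hj)
    simp only [Finset.prod_insert hi] at h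
    rcases CarlemanAt.eventually_eq_zero_or_of_mul hM (hf i (s.mem_insert_self i))
      (CarlemanAt.prod hs) h with h | h
    · exact ⟨i, s.mem_insert_self i, h⟩
    · obtain ⟨j, hj, h⟩ := ih hs h
      exact ⟨j, Finset.mem_insert_of_mem hj, h⟩

end Quasianalytic

section PartialDerivatives

variable {ι : Type} [Fintype ι] [DecidableEq ι] {U : Set (EuclideanSpace ℝ ι)}
  {f g : EuclideanSpace ℝ ι → ℝ}

/-- The iterated partial derivative `∂_{i₁} ⋯ ∂_{iₙ} f` along the list of indices `i₁, …, iₙ`: the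
common form of the multi-index derivative `mderiv` and of the entries of `iteratedFDeriv`. -/
noncomputable def listDeriv (l : List ι) (f : EuclideanSpace ℝ ι → ℝ) : EuclideanSpace ℝ ι → ℝ :=
  l.foldr pd f

theorem contDiffOn_pd (hU : IsOpen U) (i : ι) (hf : ContDiffOn ℝ ∞ f U) :
    ContDiffOn ℝ ∞ (pd i f) U :=
  (hf.fderiv_of_isOpen hU (by simp)).clm_apply contDiffOn_const

theorem contDiffOn_listDeriv (hU : IsOpen U) (l : List ι) (hf : ContDiffOn ℝ ∞ f U) :
    ContDiffOn ℝ ∞ (listDeriv l f) U := by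
  induction l with
  | nil => exact hf
  | cons i l ih => exact contDiffOn_pd hU i ih

theorem eqOn_pd (hU : IsOpen U) (i : ι) (h : EqOn f g U) : EqOn (pd i f) (pd i g) U :=
  fun x hx => by rw [pd, pd, (h.eventuallyEq_of_mem (hU.mem_nhds hx)).fderiv_eq]

theorem eqOn_pd_comm (hU : IsOpen U) (i j : ι) (hf : ContDiffOn ℝ ∞ f U) :
    EqOn (pd i (pd j f)) (pd j (pd i f)) U := by
  intro x hx
  have hfx : ContDiffAt ℝ ∞ f x := hf.contDiffAt (hU.mem_nhds hx)
  have diff : DifferentiableAt ℝ (fderiv ℝ f) x :=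
    (hfx.fderiv_right (m := ∞) (by simp)).differentiableAt (by simp)
  have second (i j : ι) : pd i (pd j f) x =
      fderiv ℝ (fderiv ℝ f) x (EuclideanSpace.single i 1) (EuclideanSpace.single j 1) := by
    rw [pd, show pd j f = fun y => fderiv ℝ f y (EuclideanSpace.single j 1) from rfl,
      fderiv_clm_apply diff (by fun_prop)]
    simp
  have symmetric : IsSymmSndFDerivAt ℝ f x :=
    hfx.isSymmSndFDerivAt (by
      rw [minSmoothness_of_isRCLikeNormedField]
      exact WithTop.coe_le_coe.2 le_top)
  rw [second, second]
  exact symmetric _ _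

theorem eqOn_listDeriv_of_perm (hU : IsOpen U) (hf : ContDiffOn ℝ ∞ f U) {l l' : List ι}
    (h : l.Perm l') : EqOn (listDeriv l f) (listDeriv l' f) U := by
  induction h with
  | nil => exact eqOn_refl _ _
  | cons i _ ih => exact eqOn_pd hU i ih
  | swap i j l => exact eqOn_pd_comm hU j i (contDiffOn_listDeriv hU l hf)
  | trans _ _ ih₁ ih₂ => exact ih₁.trans ih₂

theorem listDeriv_append (l l' : List ι) (f : EuclideanSpace ℝ ι → ℝ) :
    listDeriv (l ++ l') f = listDeriv l (listDeriv l' f) :=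
  List.foldr_append

theorem listDeriv_replicate (i : ι) (k : ℕ) (f : EuclideanSpace ℝ ι → ℝ) :
    listDeriv (List.replicate k i) f = (pd i)^[k] f := by
  induction k with
  | zero => rfl
  | succ k ih => rw [List.replicate_succ, Function.iterate_succ_apply', ← ih]; rfl

theorem mderiv_eq_listDeriv (α : ι → ℕ) (f : EuclideanSpace ℝ ι → ℝ) :
    mderiv α f =
      listDeriv ((Finset.univ : Finset ι).toList.flatMap fun i => List.replicate (α i) i) f := by
  unfold mderiv
  induction (Finset.univ : Finset ι).toList with
  | nil => rfl
  | cons i l ih =>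
    rw [List.foldr_cons, ih, List.flatMap_cons, listDeriv_append, listDeriv_replicate]

theorem perm_flatMap_replicate_count (l : List ι) :
    l.Perm ((Finset.univ : Finset ι).toList.flatMap fun i => List.replicate (l.count i) i) := by
  refine List.perm_iff_count.2 fun j => ?_
  rw [List.count_flatMap, Finset.sum_map_toList]
  simp [List.count_replicate]

theorem iteratedFDeriv_single_eq_listDeriv (hU : IsOpen U) (hf : ContDiffOn ℝ ∞ f U) {n : ℕ}
    (i : Fin n → ι) :
    EqOn (fun x => iteratedFDeriv ℝ n f x fun k => EuclideanSpace.single (i k) 1)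
      (listDeriv (List.ofFn i) f) U := by
  induction n with
  | zero => intro x _; simp [listDeriv]
  | succ n ih =>
    intro x hx
    have diff : DifferentiableAt ℝ (iteratedFDeriv ℝ n f) x :=
      ((hf.contDiffAt (hU.mem_nhds hx)).iteratedFDeriv_right (m := ∞) (i := n)
        (by rfl)).differentiableAt (by simp)
    calc iteratedFDeriv ℝ (n + 1) f x (fun k => EuclideanSpace.single (i k) 1)
        = pd (i 0) (fun y => iteratedFDeriv ℝ n f y
            fun k => EuclideanSpace.single (i k.succ) 1) x := by
          rw [iteratedFDeriv_succ_apply_left, pd,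
            fderiv_continuousMultilinear_apply_const_apply diff]
          rfl
      _ = listDeriv (List.ofFn i) f x := by
          rw [eqOn_pd hU (i 0) (ih fun k => i k.succ) hx, List.ofFn_succ]
          rfl

theorem norm_continuousMultilinearMap_le_card_pow_mul {n : ℕ} {C : ℝ}
    (T : ContinuousMultilinearMap ℝ (fun _ : Fin n => EuclideanSpace ℝ ι) ℝ)
    (hT : ∀ i : Fin n → ι, |T fun k => EuclideanSpace.single (i k) 1| ≤ C) (hC : 0 ≤ C) :
    ‖T‖ ≤ Fintype.card ι ^ n * C := by
  refine T.opNorm_le_bound (by positivity) fun v => ?_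
  have expand (k : Fin n) : v k = ∑ i, v k i • EuclideanSpace.single i (1 : ℝ) := by
    simpa using ((EuclideanSpace.basisFun ι ℝ).sum_repr (v k)).symm
  calc ‖T v‖ = ‖∑ i : Fin n → ι, T fun k => v k (i k) • EuclideanSpace.single (i k) (1 : ℝ)‖ := by
        rw [← T.map_sum fun k i => v k i • EuclideanSpace.single i (1 : ℝ)]
        simp only [← expand]
    _ ≤ ∑ i : Fin n → ι, ‖T fun k => v k (i k) • EuclideanSpace.single (i k) (1 : ℝ)‖ :=
        norm_sum_le _ _
    _ ≤ ∑ _i : Fin n → ι, (∏ k, ‖v k‖) * C := by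
        gcongr with i
        rw [T.map_smul_univ, norm_smul, norm_prod]
        gcongr with k
        · exact PiLp.norm_apply_le (v k) _
        · exact hT i
    _ = Fintype.card ι ^ n * C * ∏ k, ‖v k‖ := by simp; ring

variable {M : RegularWeight}

theorem abs_listDeriv_le_of_mderiv_le (hU : IsOpen U) (hf : ContDiffOn ℝ ∞ f U) {A B : ℝ}
    {x : EuclideanSpace ℝ ι} (hx : x ∈ U) (hA : 0 ≤ A) (hB : 0 ≤ B)
    (bound : ∀ α : ι → ℕ, (1 / (∏ i, ((α i)! : ℝ))) * |mderiv α f x| ≤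
      A * B ^ (∑ i, α i) * M (∑ i, α i)) (l : List ι) :
    |listDeriv l f x| ≤ A * B ^ l.length * l.length ! * M l.length := by
  have length : ∑ i, l.count i = l.length := by
    rw [(perm_flatMap_replicate_count l).length_eq, List.length_flatMap, Finset.sum_map_toList]
    simp
  have factorial_le : ∏ i, ((l.count i)! : ℝ) ≤ l.length ! := by
    have := Nat.le_of_dvd (Nat.factorial_pos _)
      (Nat.prod_factorial_dvd_factorial_sum Finset.univ fun i => l.count i)
    rw [length] at this
    exact_mod_cast this
  have bound_l := bound fun i => l.count i
  rw [length, one_div, inv_mul_le_iff₀ (by positivity), mderiv_eq_listDeriv,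
    ← eqOn_listDeriv_of_perm hU hf (perm_flatMap_replicate_count l) hx] at bound_l
  have := M.pos l.length
  calc |listDeriv l f x| ≤ (∏ i, ((l.count i)! : ℝ)) * (A * B ^ l.length * M l.length) := bound_l
    _ ≤ l.length ! * (A * B ^ l.length * M l.length) := by gcongr
    _ = A * B ^ l.length * l.length ! * M l.length := by ring

theorem carlemanAt_of_crm (hU : IsOpen U) (hf : CRM M U f) {a : EuclideanSpace ℝ ι} (ha : a ∈ U) :
    CarlemanAt M f a := by
  obtain ⟨K, hKa, hKU, hK⟩ := local_compact_nhds (hU.mem_nhds ha)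
  obtain ⟨A, B, hA, hB, bound⟩ := hf.2 K hKU hK
  refine ⟨A, (Fintype.card ι + 1) * B, hA, by positivity, ?_⟩
  filter_upwards [hKa] with x hx
  refine ⟨hf.1.contDiffAt (hU.mem_nhds (hKU hx)), fun n => ?_⟩
  have pos := M.pos n
  have entries (i : Fin n → ι) :
      |iteratedFDeriv ℝ n f x fun k => EuclideanSpace.single (i k) 1| ≤ A * B ^ n * n ! * M n := by
    simpa [iteratedFDeriv_single_eq_listDeriv hU hf.1 i (hKU hx)] using
      abs_listDeriv_le_of_mderiv_le hU hf.1 (hKU hx) hA.le hB.le (bound x hx) (List.ofFn i)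
  calc ‖iteratedFDeriv ℝ n f x‖ ≤ Fintype.card ι ^ n * (A * B ^ n * n ! * M n) :=
        norm_continuousMultilinearMap_le_card_pow_mul _ entries (by positivity)
    _ ≤ (Fintype.card ι + 1) ^ n * (A * B ^ n * n ! * M n) := by gcongr; linarith
    _ = A * ((Fintype.card ι + 1) * B) ^ n * n ! * M n := by rw [mul_pow]; ring

end PartialDerivatives

section WeightSequence

theorem exists_succ_le_of_ratio_rpow_le {m : ℕ → ℝ} (m_pos : ∀ j, 0 < m j) (m_mono : Monotone m)
    (m_zero : m 0 = 1)
    (bound : ∃ C : ℝ, ∀ j : ℕ, 1 ≤ j → (m (j + 1) / m j) ^ ((1 : ℝ) / j) ≤ C) :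
    ∃ C : ℝ, 1 ≤ C ∧ ∀ j, m (j + 1) ≤ C ^ (j + 1) * m j := by
  obtain ⟨C, hC⟩ := bound
  have one_le : 1 ≤ max C (m 1) := m_zero ▸ (m_mono zero_le_one).trans (le_max_right _ _)
  refine ⟨max C (m 1), one_le, fun j => ?_⟩
  rcases Nat.eq_zero_or_pos j with rfl | hj
  · simp [m_zero]
  have ratio_nonneg : 0 ≤ m (j + 1) / m j := (div_pos (m_pos _) (m_pos _)).le
  rw [← div_le_iff₀ (m_pos j)]
  calc m (j + 1) / m j = ((m (j + 1) / m j) ^ ((1 : ℝ) / j)) ^ j := by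
        rw [one_div, Real.rpow_inv_natCast_pow ratio_nonneg hj.ne']
    _ ≤ max C (m 1) ^ j := by
        gcongr
        exact (hC j hj).trans (le_max_left _ _)
    _ ≤ max C (m 1) ^ (j + 1) := pow_le_pow_right₀ one_le j.le_succ

theorem RegularWeight.quasianalytic_of_tsum_eq_top {M : RegularWeight}
    (h : ∑' k : ℕ, ENNReal.ofReal (M k / ((k + 1) * M (k + 1))) = ⊤) : M.Quasianalytic :=
  fun summable => summable.tsum_ofReal_ne_top h

end WeightSequence

section Monomial

variable {ι : Type*} [Fintype ι]

/-- The monomial `x ^ α` with exponent `α`. -/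
def monomial (α : ι → ℕ) (x : ι → ℝ) : ℝ := ∏ i, x i ^ α i

theorem monomial_zero (x : ι → ℝ) : monomial 0 x = 1 := by
  simp [monomial]

theorem monomial_add (α β : ι → ℕ) (x : ι → ℝ) :
    monomial (α + β) x = monomial α x * monomial β x := by
  simp only [monomial, Pi.add_apply, pow_add, Finset.prod_mul_distrib]

theorem monomial_smul (k : ℕ) (α : ι → ℕ) (x : ι → ℝ) :
    monomial (k • α) x = monomial α x ^ k := by
  simp only [monomial, ← Finset.prod_pow, Pi.smul_apply, smul_eq_mul, ← pow_mul, mul_comm k]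

theorem monomial_single [DecidableEq ι] (i : ι) (k : ℕ) (x : ι → ℝ) :
    monomial (Pi.single i k) x = x i ^ k := by
  rw [monomial, Finset.prod_eq_single i (fun j _ hj => by simp [hj]) (by simp), Pi.single_eq_same]

theorem monomial_mul (α : ι → ℕ) (x y : ι → ℝ) :
    monomial α (x * y) = monomial α x * monomial α y := by
  simp only [monomial, Pi.mul_apply, mul_pow, Finset.prod_mul_distrib]

theorem monomial_pow (α : ι → ℕ) (x : ι → ℝ) (k : ℕ) : monomial α (x ^ k) = monomial (k • α) x := by
  simp only [monomial, Pi.pow_apply, Pi.smul_apply, smul_eq_mul, ← pow_mul]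

theorem monomial_eq_zero_iff {α : ι → ℕ} {x : ι → ℝ} :
    monomial α x = 0 ↔ ∃ i, x i = 0 ∧ α i ≠ 0 := by
  simp [monomial, Finset.prod_eq_zero_iff, pow_eq_zero_iff']

@[fun_prop]
theorem carlemanAt_monomial {M : RegularWeight} (α : ι → ℕ) (a : ι → ℝ) :
    CarlemanAt M (monomial α) a := by
  unfold monomial
  fun_prop

end Monomial

section Monomializable

variable {E F : Type*} [NormedAddCommGroup E] [NormedSpace ℝ E] [NormedAddCommGroup F]
  [NormedSpace ℝ F] {M : RegularWeight} {f g : E → ℝ} {a b : E} {n : ℕ}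

/-- The germ of `f` at `a` becomes a monomial times a unit, in suitable linear coordinates, after
finitely many substitutions. In a substitution step every point near `a` has to be the image of a
point near one of the finitely many compact sets `L i`, each of which is sent to `a`. -/
inductive Monomializable (M : RegularWeight) {E : Type*} [NormedAddCommGroup E] [NormedSpace ℝ E] :
    (E → ℝ) → E → Prop
  | of_monomial {f : E → ℝ} {a : E} {n : ℕ} (e : E ≃L[ℝ] (Fin n → ℝ)) (α : Fin n → ℕ) {u : E → ℝ}
      (carleman : CarlemanAt M u a) (ne_zero : u a ≠ 0)
      (eq : ∀ᶠ x in 𝓝 a, f x = monomial α (e (x - a)) * u x) : Monomializable M f a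
  | cover {f : E → ℝ} {a : E} {ι : Type} [Finite ι] (Φ : ι → E → E) (L : ι → Set E)
      (compact : ∀ i, IsCompact (L i)) (carleman : ∀ i, ∀ y ∈ L i, CarlemanAt M (Φ i) y)
      (maps : ∀ i, ∀ y ∈ L i, Φ i y = a) (covers : 𝓝 a ≤ ⨆ i, map (Φ i) (𝓝ˢ (L i)))
      (comp : ∀ i, ∀ y ∈ L i, Monomializable M (fun x => f (Φ i x)) y) : Monomializable M f a

namespace Monomializable

theorem congr (hf : Monomializable M f a) (hfg : f =ᶠ[𝓝 a] g) : Monomializable M g a := by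
  induction hf generalizing g with
  | of_monomial e α carleman ne_zero eq =>
    exact .of_monomial e α carleman ne_zero (by filter_upwards [eq, hfg] with x h h'; rw [← h', h])
  | cover Φ L compact carleman maps covers _ ih =>
    refine .cover Φ L compact carleman maps covers fun i y hy => ih i y hy ?_
    exact (carleman i y hy).continuousAt.eventually ((maps i y hy).symm ▸ hfg)

theorem comp_symm [CompleteSpace E] [CompleteSpace F] (hf : Monomializable M f a)
    (T : E ≃L[ℝ] F) : Monomializable M (fun y => f (T.symm y)) (T a) := by
  have carleman_symm (y : F) : CarlemanAt M (fun y => T.symm y) y :=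
    carlemanAt_continuousLinearMap (T.symm : F →L[ℝ] E) y
  induction hf with
  | @of_monomial f a n e α u carleman ne_zero eq =>
    have tendsto : Tendsto T.symm (𝓝 (T a)) (𝓝 a) := by
      simpa using T.symm.continuous.tendsto (T a)
    refine .of_monomial (T.symm.trans e) α (u := fun y => u (T.symm y))
      (.comp (by simpa using carleman) (carleman_symm _)) (by simpa using ne_zero) ?_
    filter_upwards [tendsto.eventually eq] with y hy
    simpa using hy
  | cover Φ L compact carleman maps covers _ ih =>
    refine .cover (fun i y => T (Φ i (T.symm y))) (fun i => T '' L i)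
      (fun i => (compact i).image T.continuous) ?_ ?_ ?_ ?_
    · rintro i _ ⟨y, hy, rfl⟩
      exact (carlemanAt_continuousLinearMap (T : E →L[ℝ] F) _).comp
        ((by simpa using carleman i y hy : CarlemanAt M (Φ i) (T.symm (T y))).comp
          (carleman_symm _))
    · rintro i _ ⟨y, hy, rfl⟩
      simp [maps i y hy]
    · have map_nhdsSet (i) : map (fun y => T (Φ i (T.symm y))) (𝓝ˢ (T '' L i)) =
          map T (map (Φ i) (𝓝ˢ (L i))) := by
        have image : map T (𝓝ˢ (L i)) = 𝓝ˢ (T '' L i) :=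
          T.toHomeomorph.isOpenMap.map_nhdsSet_eq T.continuous (L i)
        rw [← image, map_map, map_map]
        congr 1
        ext x
        simp
      simp_rw [map_nhdsSet, ← Filter.map_iSup]
      exact (T.toHomeomorph.map_nhds_eq _).ge.trans (map_mono covers)
    · rintro i _ ⟨y, hy, rfl⟩
      simpa using ih i y hy

theorem of_comp {Φ Ψ : E → E} (hΦ : CarlemanAt M Φ b) (hΦb : Φ b = a) (hΨ : ContinuousAt Ψ a)
    (hΨa : Ψ a = b) (inverse : ∀ᶠ x in 𝓝 a, Φ (Ψ x) = x)
    (hf : Monomializable M (fun x => f (Φ x)) b) : Monomializable M f a := by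
  refine .cover (ι := Unit) (fun _ => Φ) (fun _ => {b}) (fun _ => isCompact_singleton) ?_ ?_ ?_ ?_
  · rintro _ y rfl; exact hΦ
  · rintro _ y rfl; exact hΦb
  · rw [iSup_const, nhdsSet_singleton]
    calc 𝓝 a = map (Φ ∘ Ψ) (𝓝 a) := ((map_congr inverse).trans map_id').symm
      _ ≤ map Φ (𝓝 b) := by rw [← map_map]; exact map_mono (hΨa ▸ hΨ)
  · rintro _ y rfl; exact hf

theorem of_ne_zero (e : E ≃L[ℝ] (Fin n → ℝ)) (hf : CarlemanAt M f a) (hfa : f a ≠ 0) :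
    Monomializable M f a :=
  .of_monomial e 0 hf hfa (by simp [monomial_zero])

theorem of_eq_monomial_mul [CompleteSpace E] (e : E ≃L[ℝ] (Fin n → ℝ)) (α : Fin n → ℕ)
    (hg : CarlemanAt M g a) (hga : g a ≠ 0) (hf : ∀ᶠ x in 𝓝 a, f x = monomial α (e x) * g x) :
    Monomializable M f a := by
  have carleman_e : CarlemanAt M (fun x => e x) a :=
    carlemanAt_continuousLinearMap (e : E →L[ℝ] (Fin n → ℝ)) a
  let vanishing : Fin n → ℕ := fun i => if e a i = 0 then α i else 0
  let rest : Fin n → ℕ := fun i => if e a i = 0 then 0 else α i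
  have split (x : E) :
      monomial α (e x) = monomial vanishing (e (x - a)) * monomial rest (e x) := by
    simp only [monomial, ← Finset.prod_mul_distrib, vanishing, rest]
    refine Finset.prod_congr rfl fun i _ => ?_
    split_ifs with hi <;> simp [hi]
  refine .of_monomial e vanishing (u := fun x => monomial rest (e x) * g x)
    (((carlemanAt_monomial rest (e a)).comp carleman_e).mul hg) (mul_ne_zero ?_ hga) ?_
  · rw [Ne, monomial_eq_zero_iff]
    rintro ⟨i, hi, h⟩
    exact h (if_pos hi)
  · filter_upwards [hf] with x hx
    rw [hx, split, mul_assoc]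

end Monomializable

end Monomializable

section Lojasiewicz

open Metric Asymptotics

theorem exists_eventually_nhdsSet_of_monotone {X : Type*} [TopologicalSpace X]
    {p : ℕ → X → Prop} (hp : Monotone p) {K : Set X} (hK : IsCompact K)
    (h : ∀ x ∈ K, ∃ n, ∀ᶠ y in 𝓝 x, p n y) : ∃ n, ∀ᶠ y in 𝓝ˢ K, p n y := by
  refine hK.induction_on (p := fun s => ∃ n, ∀ᶠ y in 𝓝ˢ s, p n y) (by simp) ?_ ?_ ?_
  · rintro s t hst ⟨n, hn⟩
    exact ⟨n, nhdsSet_mono hst hn⟩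
  · rintro s t ⟨m, hm⟩ ⟨n, hn⟩
    refine ⟨max m n, ?_⟩
    rw [nhdsSet_union, eventually_sup]
    exact ⟨hm.mono (hp (le_max_left m n)), hn.mono (hp (le_max_right m n))⟩
  · intro x hx
    obtain ⟨n, hn⟩ := h x hx
    obtain ⟨t, ht, t_open, hxt⟩ := eventually_nhds_iff.1 hn
    exact ⟨t, mem_nhdsWithin_of_mem_nhds (t_open.mem_nhds hxt), n,
      by rw [t_open.nhdsSet_eq]; exact ht⟩

theorem eventually_infDist_inter_eq {X : Type*} [PseudoMetricSpace X] {S V : Set X} {a : X}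
    (ha : a ∈ S) (hV : V ∈ 𝓝 a) : ∀ᶠ x in 𝓝 a, infDist x (S ∩ V) = infDist x S := by
  have haV : a ∈ S ∩ V := ⟨ha, mem_of_mem_nhds hV⟩
  obtain ⟨r, hr, ball_subset⟩ := Metric.mem_nhds_iff.1 hV
  filter_upwards [ball_mem_nhds a (half_pos hr)] with x hx
  refine le_antisymm ((le_infDist ⟨a, ha⟩).2 fun y hy => ?_)
    (infDist_le_infDist_of_subset inter_subset_left ⟨a, haV⟩)
  by_cases hyV : y ∈ V
  · exact infDist_le_dist_of_mem ⟨hy, hyV⟩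
  · have far : r ≤ dist y a := not_lt.1 fun h => hyV (ball_subset h)
    have near : dist x a < r / 2 := hx
    calc infDist x (S ∩ V) ≤ dist x a := infDist_le_dist_of_mem haV
      _ ≤ dist x y := by linarith [dist_triangle_left y a x]

/-- The Łojasiewicz inequality at `x` between `f` and the distance to `Z`. The number `n` serves as
both exponent and constant, and the distance is truncated at `1`, so that the condition becomes
weaker as `n` grows. -/
def LojasiewiczBound {X : Type*} [PseudoMetricSpace X] (f : X → ℝ) (Z : Set X) (n : ℕ) (x : X) :
    Prop :=
  min 1 (infDist x Z) ^ n ≤ n * |f x|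

theorem monotone_lojasiewiczBound {X : Type*} [PseudoMetricSpace X] (f : X → ℝ) (Z : Set X) :
    Monotone (LojasiewiczBound f Z) := fun m n hmn x h =>
  calc min 1 (infDist x Z) ^ n ≤ min 1 (infDist x Z) ^ m :=
        pow_le_pow_of_le_one (le_min zero_le_one infDist_nonneg) (min_le_left _ _) hmn
    _ ≤ m * |f x| := h
    _ ≤ n * |f x| := by gcongr

variable {E F : Type*} [NormedAddCommGroup E] [NormedSpace ℝ E] [NormedAddCommGroup F]
  [NormedSpace ℝ F]

theorem exists_eventually_infDist_le_mul {f : F → ℝ} {g : E → ℝ} {Φ : E → F} {y : E}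
    (hΦ : ContDiffAt ℝ 1 Φ y) (hgy : g y = 0) (hg : ∀ᶠ x in 𝓝 y, g x = 0 → f (Φ x) = 0) :
    ∃ C : ℝ, 1 ≤ C ∧ ∀ᶠ x in 𝓝 y, infDist (Φ x) (f ⁻¹' {0}) ≤ C * infDist x (g ⁻¹' {0}) := by
  obtain ⟨K, t, ht, lipschitz⟩ := hΦ.exists_lipschitzOnWith
  refine ⟨K + 1, by linarith [K.2], ?_⟩
  filter_upwards [ht, eventually_infDist_inter_eq (S := g ⁻¹' {0}) hgy (inter_mem ht hg)]
    with x hxt hx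
  have hK : (0 : ℝ) < K + 1 := by positivity
  rw [← hx, ← div_le_iff₀' hK]
  refine (le_infDist ?_).2 ?_
  · exact ⟨y, hgy, mem_of_mem_nhds ht, mem_of_mem_nhds hg⟩
  rintro z ⟨hgz, hzt, hz⟩
  rw [div_le_iff₀' hK]
  calc infDist (Φ x) (f ⁻¹' {0}) ≤ dist (Φ x) (Φ z) := infDist_le_dist_of_mem (hz hgz)
    _ ≤ K * dist x z := lipschitz.dist_le_mul x hxt z hzt
    _ ≤ (K + 1) * dist x z := by gcongr; linarith

theorem exists_eventually_lojasiewiczBound_comp {f : F → ℝ} {g : E → ℝ} {Φ : E → F} {y : E}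
    (hΦ : ContDiffAt ℝ 1 Φ y) (hgy : g y = 0) (hgf : g =Θ[𝓝 y] fun x => f (Φ x))
    (hg : ∃ n, ∀ᶠ x in 𝓝 y, LojasiewiczBound g (g ⁻¹' {0}) n x) :
    ∃ n, ∀ᶠ x in 𝓝 y, LojasiewiczBound f (f ⁻¹' {0}) n (Φ x) := by
  obtain ⟨n, hn⟩ := hg
  obtain ⟨B, _, bound⟩ := hgf.1.exists_nonneg
  obtain ⟨C, hC, infDist_le⟩ := exists_eventually_infDist_le_mul (f := f) hΦ hgy
    hgf.2.eq_zero_imp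
  set N : ℕ := max n ⌈C ^ n * (n * B)⌉₊
  refine ⟨N, ?_⟩
  filter_upwards [hn, bound.bound, infDist_le] with x hn bound infDist_le
  have min_le : min 1 (infDist (Φ x) (f ⁻¹' {0})) ≤ C * min 1 (infDist x (g ⁻¹' {0})) := by
    rw [mul_min_of_nonneg _ _ (by linarith)]
    exact min_le_min (by linarith) infDist_le
  have min_nonneg : 0 ≤ min 1 (infDist (Φ x) (f ⁻¹' {0})) := le_min zero_le_one infDist_nonneg
  calc min 1 (infDist (Φ x) (f ⁻¹' {0})) ^ N
      ≤ min 1 (infDist (Φ x) (f ⁻¹' {0})) ^ n :=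
        pow_le_pow_of_le_one min_nonneg (min_le_left _ _) (le_max_left _ _)
    _ ≤ (C * min 1 (infDist x (g ⁻¹' {0}))) ^ n := by gcongr
    _ = C ^ n * min 1 (infDist x (g ⁻¹' {0})) ^ n := mul_pow _ _ _
    _ ≤ C ^ n * (n * (B * |f (Φ x)|)) := by gcongr; exact hn.trans (by gcongr; exact bound)
    _ = C ^ n * (n * B) * |f (Φ x)| := by ring
    _ ≤ N * |f (Φ x)| := by
        gcongr
        exact (Nat.le_ceil _).trans (by exact_mod_cast le_max_right _ _)

theorem infDist_monomial_le {ι : Type*} [Fintype ι] {α : ι → ℕ} (hα : α ≠ 0) (y : ι → ℝ) :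
    infDist y (monomial α ⁻¹' {0}) ^ (∑ i, α i) ≤ |monomial α y| := by
  classical
  obtain ⟨i₀, hi₀⟩ := Function.ne_iff.1 hα
  obtain ⟨j, hj, minimal⟩ := (Finset.univ.filter fun i => α i ≠ 0).exists_min_image (fun i => |y i|)
    ⟨i₀, by simpa using hi₀⟩
  replace hj : α j ≠ 0 := by simpa using hj
  have infDist_le : infDist y (monomial α ⁻¹' {0}) ≤ |y j| := by
    refine (infDist_le_dist_of_mem (y := Function.update y j 0)
      (monomial_eq_zero_iff.2 ⟨j, by simp, hj⟩)).trans ?_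
    refine (dist_pi_le_iff (abs_nonneg _)).2 fun i => ?_
    rcases eq_or_ne i j with rfl | hij <;> simp [*]
  rw [monomial, Finset.abs_prod, ← Finset.prod_pow_eq_pow_sum]
  refine Finset.prod_le_prod (fun i _ => pow_nonneg infDist_nonneg _) fun i _ => ?_
  rw [abs_pow]
  by_cases hi : α i = 0
  · simp [hi]
  · exact pow_le_pow_left₀ infDist_nonneg (infDist_le.trans (minimal i (by simpa using hi))) _

theorem lojasiewiczBound_monomial {ι : Type*} [Fintype ι] {α : ι → ℕ} (hα : α ≠ 0) (y : ι → ℝ) :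
    LojasiewiczBound (monomial α) (monomial α ⁻¹' {0}) (∑ i, α i) y := by
  obtain ⟨i, hi⟩ := Function.ne_iff.1 hα
  have one_le : 1 ≤ ∑ i, α i :=
    (Nat.one_le_iff_ne_zero.2 hi).trans (Finset.single_le_sum (by simp) (Finset.mem_univ i))
  calc min 1 (infDist y (monomial α ⁻¹' {0})) ^ (∑ i, α i)
      ≤ infDist y (monomial α ⁻¹' {0}) ^ (∑ i, α i) :=
        pow_le_pow_left₀ (le_min zero_le_one infDist_nonneg) (min_le_right _ _) _
    _ ≤ |monomial α y| := infDist_monomial_le hα y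
    _ ≤ (∑ i, α i : ℕ) * |monomial α y| :=
        le_mul_of_one_le_left (abs_nonneg _) (by exact_mod_cast one_le)

theorem exists_eventually_lojasiewiczBound_of_eq_monomial_mul {f u : E → ℝ} {a : E} {n : ℕ}
    (e : E ≃L[ℝ] (Fin n → ℝ)) {α : Fin n → ℕ} (hu : ContinuousAt u a) (hua : u a ≠ 0)
    (hf : ∀ᶠ x in 𝓝 a, f x = monomial α (e (x - a)) * u x) (hfa : f a = 0) :
    ∃ n, ∀ᶠ x in 𝓝 a, LojasiewiczBound f (f ⁻¹' {0}) n x := by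
  have monomial_zero_eq : monomial α 0 = 0 := by
    simpa [hfa, hua, eq_comm] using hf.self_of_nhds
  have hα : α ≠ 0 := by rintro rfl; simp [monomial_zero] at monomial_zero_eq
  have tendsto_symm : Tendsto (fun y => a + e.symm y) (𝓝 0) (𝓝 a) := by
    simpa using (e.symm.continuous.const_add a).tendsto 0
  have theta : monomial α =Θ[𝓝 0] fun y => f (a + e.symm y) := by
    have unit : (fun y => u (a + e.symm y)) =Θ[𝓝 0] fun _ => u a :=
      ((isEquivalent_const_iff_tendsto hua).2 (hu.tendsto.comp tendsto_symm)).isTheta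
    refine IsTheta.trans_eventuallyEq (g₁ := fun y => monomial α y * u (a + e.symm y)) ?_ ?_
    · simpa using ((isTheta_refl (monomial α) _).mul unit).trans
        ((isTheta_refl (monomial α) _).mul (isTheta_const_const hua one_ne_zero)) |>.symm
    · filter_upwards [tendsto_symm.eventually hf] with y hy
      simpa using hy.symm
  obtain ⟨n, hn⟩ := exists_eventually_lojasiewiczBound_comp (f := f)
    (Φ := fun y => a + e.symm y) (by fun_prop) monomial_zero_eq theta
    ⟨_, .of_forall (lojasiewiczBound_monomial hα)⟩
  refine ⟨n, ?_⟩
  have tendsto : Tendsto (fun x => e (x - a)) (𝓝 a) (𝓝 0) :=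
    (e.continuous.comp (continuous_sub_right a)).tendsto' a 0 (by simp)
  filter_upwards [tendsto.eventually hn] with x hx
  simpa using hx

theorem Monomializable.exists_eventually_lojasiewiczBound {M : RegularWeight} {f : E → ℝ} {a : E}
    (hf : Monomializable M f a) (hfa : f a = 0) :
    ∃ n, ∀ᶠ x in 𝓝 a, LojasiewiczBound f (f ⁻¹' {0}) n x := by
  induction hf with
  | of_monomial e α carleman ne_zero eq =>
    exact exists_eventually_lojasiewiczBound_of_eq_monomial_mul e carleman.continuousAt ne_zero eq
      hfa
  | @cover f a ι _ Φ L compact carleman maps covers _ ih =>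
    have bound (i) : ∃ n, ∀ᶠ x in 𝓝ˢ (L i), LojasiewiczBound f (f ⁻¹' {0}) n (Φ i x) := by
      refine exists_eventually_nhdsSet_of_monotone
        (fun m n hmn x => monotone_lojasiewiczBound _ _ hmn (Φ i x)) (compact i) fun y hy => ?_
      have hfy : f (Φ i y) = 0 := by rw [maps i y hy, hfa]
      exact exists_eventually_lojasiewiczBound_comp
        ((carleman i y hy).contDiffAt.of_le (by simp)) hfy (isTheta_refl _ _) (ih i y hy hfy)
    choose n hn using bound
    obtain ⟨N, hN⟩ := (finite_range n).bddAbove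
    refine ⟨N, covers (eventually_iSup.2 fun i => ?_)⟩
    exact (hn i).mono fun x => monotone_lojasiewiczBound _ _ (hN ⟨i, rfl⟩) (Φ i x)

end Lojasiewicz

section HasMonomialForm

theorem exists_eq_zero_iff_mem_of_eventually {ι : Type*} {p : (ι → ℝ) → Prop}
    (hp : ∀ᶠ x in 𝓝 0, p x) (S : Set ι) : ∃ x, p x ∧ ∀ i, x i = 0 ↔ i ∈ S := by
  classical
  have path : Tendsto (fun t : ℝ => fun i => if i ∈ S then 0 else t) (𝓝[≠] 0)
      (𝓝 (0 : ι → ℝ)) := by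
    refine tendsto_nhdsWithin_of_tendsto_nhds (Continuous.tendsto' ?_ _ _ (by ext; simp))
    exact continuous_pi fun i => by split_ifs <;> fun_prop
  obtain ⟨t, ht, ht0⟩ := ((path.eventually hp).and self_mem_nhdsWithin).exists
  have ht0 : t ≠ 0 := ht0
  exact ⟨_, ht, fun i => by simp [ht0]⟩

theorem exists_eq_single_add_of_ne_zero {ι : Type*} [DecidableEq ι] {γ : ι → ℕ} {j : ι}
    (hj : γ j ≠ 0) : ∃ γ' : ι → ℕ, γ = Pi.single j 1 + γ' := by
  refine le_iff_exists_add.1 (fun i => ?_ : Pi.single j 1 ≤ γ)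
  rcases eq_or_ne i j with rfl | hij
  · simpa using Nat.one_le_iff_ne_zero.2 hj
  · simp [hij]

variable {ι : Type*} [Fintype ι] {M : RegularWeight} {f g v w : (ι → ℝ) → ℝ} {α β γ : ι → ℕ}

/-- The germ of `f` at the origin is a unit times the monomial with exponent `α`. -/
def HasMonomialForm (M : RegularWeight) (f : (ι → ℝ) → ℝ) (α : ι → ℕ) : Prop :=
  ∃ u, CarlemanAt M u 0 ∧ u 0 ≠ 0 ∧ ∀ᶠ x in 𝓝 0, f x = monomial α x * u x

theorem eventually_eq_zero_of_monomial_mul (hM : M.Quasianalytic) (hf : CarlemanAt M f 0)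
    (h : ∀ᶠ x in 𝓝 0, monomial γ x * f x = 0) : ∀ᶠ x in 𝓝 0, f x = 0 := by
  refine ((carlemanAt_monomial γ 0).eventually_eq_zero_or_of_mul hM hf h).resolve_left fun h => ?_
  obtain ⟨x, hx, hx0⟩ := exists_eq_zero_iff_mem_of_eventually h ∅
  obtain ⟨i, hi, -⟩ := monomial_eq_zero_iff.1 hx
  exact (hx0 i).1 hi

theorem eventually_eq_of_monomial_mul (hM : M.Quasianalytic) (hf : CarlemanAt M f 0)
    (hg : CarlemanAt M g 0) (h : ∀ᶠ x in 𝓝 0, monomial γ x * f x = monomial γ x * g x) :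
    ∀ᶠ x in 𝓝 0, f x = g x := by
  have := eventually_eq_zero_of_monomial_mul hM (hf.sub hg)
    (h.mono fun x hx => by rw [mul_sub, hx, sub_self])
  exact this.mono fun x => sub_eq_zero.1

theorem CarlemanAt.exists_eq_apply_mul (hf : CarlemanAt M f 0) (j : ι)
    (h : ∀ᶠ x in 𝓝 0, x j = 0 → f x = 0) :
    ∃ g, CarlemanAt M g 0 ∧ ∀ᶠ x in 𝓝 0, f x = x j * g x := by
  classical
  exact hf.exists_eq_smul (ContinuousLinearMap.proj j) (e := Pi.single j 1) (by simp) (by simp) h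

theorem CarlemanAt.eventually_eq_zero_or_of_mul_of_apply_eq_zero (hM : M.Quasianalytic)
    (hf : CarlemanAt M f 0) (hg : CarlemanAt M g 0) (j : ι)
    (h : ∀ᶠ x in 𝓝 0, x j = 0 → f x * g x = 0) :
    (∀ᶠ x in 𝓝 0, x j = 0 → f x = 0) ∨ ∀ᶠ x in 𝓝 0, x j = 0 → g x = 0 := by
  classical
  let proj (x : ι → ℝ) : ι → ℝ := Function.update x j 0
  have proj_zero : proj 0 = 0 := by simp [proj]
  have proj_eq {x : ι → ℝ} (hx : x j = 0) : proj x = x := by simp [proj, ← hx]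
  have carleman_proj : CarlemanAt M proj 0 := by
    refine CarlemanAt.pi fun i => ?_
    rcases eq_or_ne i j with rfl | hij
    · simpa [proj] using carlemanAt_const (0 : ℝ) (0 : ι → ℝ)
    · simpa [proj, hij] using carlemanAt_apply i (0 : ι → ℝ)
  have h_proj : ∀ᶠ x in 𝓝 0, f (proj x) * g (proj x) = 0 := by
    have tendsto := carleman_proj.continuousAt.tendsto
    rw [proj_zero] at tendsto
    exact (tendsto.eventually h).mono fun x hx => hx (by simp [proj])
  have hf_proj : CarlemanAt M (fun x => f (proj x)) 0 := .comp (by rwa [proj_zero]) carleman_proj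
  have hg_proj : CarlemanAt M (fun x => g (proj x)) 0 := .comp (by rwa [proj_zero]) carleman_proj
  refine (hf_proj.eventually_eq_zero_or_of_mul hM hg_proj h_proj).imp ?_ ?_ <;>
    exact fun h0 => h0.mono fun x hx hxj => by rwa [proj_eq hxj] at hx

theorem eventually_mul_eq_monomial_mul_of_single_add [DecidableEq ι] (hM : M.Quasianalytic) {j : ι}
    {f₁ : (ι → ℝ) → ℝ} (hf₁ : CarlemanAt M f₁ 0) (hg : CarlemanAt M g 0) (hv : CarlemanAt M v 0)
    (hf : ∀ᶠ x in 𝓝 0, f x = x j * f₁ x)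
    (h : ∀ᶠ x in 𝓝 0, f x * g x = monomial (Pi.single j 1 + γ) x * v x) :
    ∀ᶠ x in 𝓝 0, f₁ x * g x = monomial γ x * v x := by
  refine eventually_eq_of_monomial_mul hM (γ := Pi.single j 1) (by fun_prop) (by fun_prop) ?_
  filter_upwards [h, hf] with x h hf
  rw [hf, monomial_add] at h
  rw [← mul_assoc (monomial _ x) (monomial _ x), ← h, monomial_single, pow_one, mul_assoc]

namespace HasMonomialForm

theorem not_eventually_eq_zero (hf : HasMonomialForm M f α) : ¬ ∀ᶠ x in 𝓝 0, f x = 0 := by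
  intro h
  obtain ⟨u, hu, hu0, hfu⟩ := hf
  obtain ⟨x, ⟨hx, hfx, hux⟩, hx0⟩ := exists_eq_zero_iff_mem_of_eventually
    (h.and (hfu.and (hu.continuousAt.eventually_ne hu0))) ∅
  obtain ⟨i, hi, -⟩ := monomial_eq_zero_iff.1
    ((mul_eq_zero.1 (hfx.symm.trans hx)).resolve_right hux)
  exact (hx0 i).1 hi

theorem exists_of_mul_eq (hM : M.Quasianalytic) (hf : CarlemanAt M f 0) (hg : CarlemanAt M g 0)
    (hv : CarlemanAt M v 0) (hv0 : v 0 ≠ 0)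
    (eq : ∀ᶠ x in 𝓝 0, f x * g x = monomial γ x * v x) : ∃ α, HasMonomialForm M f α := by
  classical
  induction hk : ∑ i, γ i generalizing γ f g with
  | zero =>
    obtain rfl : γ = 0 := funext fun i => by simpa using Finset.sum_eq_zero_iff.1 hk i
    refine ⟨0, f, hf, left_ne_zero_of_mul (b := g 0) ?_, by simp [monomial_zero]⟩
    rwa [eq.self_of_nhds, monomial_zero, one_mul]
  | succ k ih =>
    obtain ⟨j, -, hj⟩ := Finset.exists_ne_zero_of_sum_ne_zero (hk.trans_ne k.succ_ne_zero)
    obtain ⟨γ, rfl⟩ := exists_eq_single_add_of_ne_zero hj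
    have sum_eq : ∑ i, γ i = k := by
      simpa [Finset.sum_add_distrib, add_comm 1] using hk
    have vanish : ∀ᶠ x in 𝓝 0, x j = 0 → f x * g x = 0 := eq.mono fun x hx hxj => by
      rw [hx, monomial_add, monomial_single, pow_one, hxj, zero_mul, zero_mul]
    rcases hf.eventually_eq_zero_or_of_mul_of_apply_eq_zero hM hg j vanish with h0 | h0
    · obtain ⟨f₁, hf₁, hff₁⟩ := hf.exists_eq_apply_mul j h0
      obtain ⟨α, w, hw, hw0, hfw⟩ := ih hf₁ hg
        (eventually_mul_eq_monomial_mul_of_single_add hM hf₁ hg hv hff₁ eq) sum_eq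
      refine ⟨Pi.single j 1 + α, w, hw, hw0, ?_⟩
      filter_upwards [hff₁, hfw] with x hx hx'
      rw [hx, hx', monomial_add, monomial_single, pow_one, mul_assoc]
    · obtain ⟨g₁, hg₁, hgg₁⟩ := hg.exists_eq_apply_mul j h0
      simp only [mul_comm (f _)] at eq
      have eq₁ := eventually_mul_eq_monomial_mul_of_single_add hM hg₁ hf hv hgg₁ eq
      exact ih hf hg₁ (eq₁.mono fun x hx => by rw [mul_comm, hx]) sum_eq

theorem exists_of_mul (hM : M.Quasianalytic) (hf : CarlemanAt M f 0) (hg : CarlemanAt M g 0)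
    (h : HasMonomialForm M (fun x => f x * g x) γ) : ∃ α, HasMonomialForm M f α := by
  obtain ⟨u, hu, hu0, eq⟩ := h
  exact exists_of_mul_eq hM hf hg hu hu0 eq

theorem exists_of_prod (hM : M.Quasianalytic) {κ : Type*} {s : Finset κ} {f : κ → (ι → ℝ) → ℝ}
    (hf : ∀ i ∈ s, CarlemanAt M (f i) 0) (h : HasMonomialForm M (fun x => ∏ i ∈ s, f i x) γ)
    {i : κ} (hi : i ∈ s) : ∃ α, HasMonomialForm M (f i) α := by
  classical
  refine exists_of_mul (γ := γ) (g := fun x => ∏ k ∈ s.erase i, f k x) hM (hf i hi)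
    (.prod fun k hk => hf k (Finset.mem_of_mem_erase hk)) ?_
  convert h using 2 with x
  exact Finset.mul_prod_erase s (fun k => f k x) hi

end HasMonomialForm

theorem eq_zero_or_eq_zero_of_eventually_eq_of_apply_eq_zero (hαβ : α ⊓ β = 0)
    (hv : ContinuousAt v 0) (hv0 : v 0 ≠ 0) (hw : ContinuousAt w 0) (hw0 : w 0 ≠ 0) (k : ι)
    (h : ∀ᶠ x in 𝓝 0, x k = 0 → monomial α x * v x = monomial β x * w x) : α = 0 ∨ β = 0 := by
  have disjoint (i) : α i = 0 ∨ β i = 0 :=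
    Nat.min_eq_zero_iff.1 (congrFun hαβ i)
  wlog hαk : α k = 0 generalizing α β v w
  · refine (this (inf_comm α β ▸ hαβ) hw hw0 hv hv0 (h.mono fun x hx hxk => (hx hxk).symm)
      (fun i => (disjoint i).symm) ((disjoint k).resolve_left hαk)).symm
  refine .inr (by_contra fun hβ => ?_)
  obtain ⟨i, hi⟩ := Function.ne_iff.1 hβ
  have hαi : α i = 0 := (disjoint i).resolve_right hi
  obtain ⟨x, ⟨hx, hvx⟩, hx0⟩ :=
    exists_eq_zero_iff_mem_of_eventually (h.and (hv.eventually_ne hv0)) {k, i}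
  have hβx : monomial β x = 0 := monomial_eq_zero_iff.2 ⟨i, (hx0 i).2 (by simp), hi⟩
  rw [hβx, zero_mul] at hx
  obtain ⟨l, hl, hαl⟩ :=
    monomial_eq_zero_iff.1 ((mul_eq_zero.1 (hx ((hx0 k).2 (by simp)))).resolve_right hvx)
  rcases (hx0 l).1 hl with rfl | rfl <;> contradiction

/-- The germ of `f` at the origin is zero or a unit times a monomial. -/
def IsZeroOrMonomial (M : RegularWeight) (f : (ι → ℝ) → ℝ) : Prop :=
  (∀ᶠ x in 𝓝 0, f x = 0) ∨ ∃ γ, HasMonomialForm M f γ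

namespace IsZeroOrMonomial

theorem of_monomial_mul (hM : M.Quasianalytic) (hg : CarlemanAt M g 0)
    (hf : IsZeroOrMonomial M f) (hfg : ∀ᶠ x in 𝓝 0, f x = monomial γ x * g x) :
    IsZeroOrMonomial M g := by
  refine hf.imp (fun hf => ?_) fun ⟨δ, u, hu, hu0, hfu⟩ => ?_
  · exact eventually_eq_zero_of_monomial_mul hM hg
      (by filter_upwards [hf, hfg] with x h h'; rw [← h', h])
  · refine HasMonomialForm.exists_of_mul_eq (g := monomial γ) (γ := δ) hM hg (by fun_prop) hu hu0 ?_
    filter_upwards [hfg, hfu] with x h h'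
    rw [← h', h, mul_comm]

theorem exists_eventually_apply_eq_zero_imp [Nonempty ι] (hf : IsZeroOrMonomial M f)
    (hf0 : f 0 = 0) : ∃ k, ∀ᶠ x in 𝓝 0, x k = 0 → f x = 0 := by
  rcases hf with hf | ⟨γ, u, -, hu0, hfu⟩
  · exact ⟨Classical.arbitrary ι, hf.mono fun x hx _ => hx⟩
  · have hγ : monomial γ 0 = 0 := by
      simpa [hf0, hu0, eq_comm] using hfu.self_of_nhds
    obtain ⟨k, -, hk⟩ := monomial_eq_zero_iff.1 hγ
    refine ⟨k, hfu.mono fun x hx hxk => ?_⟩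
    rw [hx, monomial_eq_zero_iff.2 ⟨k, hxk, hk⟩, zero_mul]

end IsZeroOrMonomial

theorem HasMonomialForm.le_or_le (hM : M.Quasianalytic) (hf : HasMonomialForm M f α)
    (hg : HasMonomialForm M g β) (hfg : IsZeroOrMonomial M fun x => f x - g x) :
    α ≤ β ∨ β ≤ α := by
  obtain ⟨v, hv, hv0, hfv⟩ := hf
  obtain ⟨w, hw, hw0, hgw⟩ := hg
  obtain ⟨μ, α, β, hαβ, rfl, rfl⟩ : ∃ μ α' β', α' ⊓ β' = 0 ∧ α = μ + α' ∧ β = μ + β' := by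
    refine ⟨α ⊓ β, α - α ⊓ β, β - α ⊓ β, ?_, ?_, ?_⟩ <;> ext i <;>
      simp only [Pi.inf_apply, Pi.sub_apply, Pi.add_apply, Pi.zero_apply] <;> omega
  suffices α = 0 ∨ β = 0 by rcases this with rfl | rfl <;> simp
  by_contra! hne
  obtain ⟨⟨i, hi⟩, ⟨j, hj⟩⟩ := hne.imp Function.ne_iff.1 Function.ne_iff.1
  let q : (ι → ℝ) → ℝ := fun x => monomial α x * v x - monomial β x * w x
  have hq : IsZeroOrMonomial M q := by
    refine hfg.of_monomial_mul (γ := μ) hM (by fun_prop) ?_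
    filter_upwards [hfv, hgw] with x hfx hgx
    simp only [hfx, hgx, monomial_add, q]
    ring
  have hq0 : q 0 = 0 := by
    simp only [q, monomial_eq_zero_iff.2 ⟨i, Pi.zero_apply i, hi⟩,
      monomial_eq_zero_iff.2 ⟨j, Pi.zero_apply j, hj⟩, zero_mul, sub_zero]
  have : Nonempty ι := ⟨i⟩
  obtain ⟨k, hk⟩ := hq.exists_eventually_apply_eq_zero_imp hq0
  exact not_or_intro hne.1 hne.2 <| eq_zero_or_eq_zero_of_eventually_eq_of_apply_eq_zero hαβ
    hv.continuousAt hv0 hw.continuousAt hw0 k (hk.mono fun x hx hxk => sub_eq_zero.1 (hx hxk))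

end HasMonomialForm

section TaylorForm

theorem iteratedDeriv_pow_mul_of_lt {i d : ℕ} {u : ℝ → ℝ} (hu : ContDiffAt ℝ ∞ u 0) (hi : i < d) :
    iteratedDeriv i (fun t => t ^ d * u t) 0 = 0 := by
  rw [iteratedDeriv_fun_mul (by fun_prop) (hu.of_le (by exact_mod_cast le_top))]
  refine Finset.sum_eq_zero fun k hk => ?_
  have hkd : k ≠ d := by have := Finset.mem_range.1 hk; omega
  rw [iteratedDeriv_fun_pow_zero]; simp [hkd]

theorem iteratedDeriv_pow_mul_self {d : ℕ} {u : ℝ → ℝ} (hu : ContDiffAt ℝ ∞ u 0) :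
    iteratedDeriv d (fun t => t ^ d * u t) 0 = d ! * u 0 := by
  rw [iteratedDeriv_fun_mul (by fun_prop) (hu.of_le (by exact_mod_cast le_top)),
    Finset.sum_eq_single d (fun k _ hk => by rw [iteratedDeriv_fun_pow_zero]; simp [hk]) (by simp)]
  rw [iteratedDeriv_fun_pow_zero]
  simp

theorem iteratedDeriv_sum_const_mul_pow {d : ℕ} (c : Fin d → ℝ) (k : ℕ) (x : ℝ) :
    iteratedDeriv k (fun t => ∑ i, c i * t ^ (i : ℕ)) x =
      ∑ i, c i * (((i : ℕ).descFactorial k : ℝ) * x ^ ((i : ℕ) - k)) := by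
  rw [iteratedDeriv_fun_sum (by fun_prop)]
  refine Finset.sum_congr rfl fun i _ => ?_
  rw [iteratedDeriv_const_mul _ (by fun_prop), iteratedDeriv_pow]

variable {E : Type*} {M : RegularWeight} {h u : E × ℝ → ℝ} {d : ℕ} {c : Fin d → E → ℝ} {a : E}
  {b : ℝ}

/-- The Taylor expansion of order `d` in the last variable with coefficients `c` and remainder
`u`. -/
def taylorForm (c : Fin d → E → ℝ) (u : E × ℝ → ℝ) (p : E × ℝ) : ℝ :=
  ∑ i, c i p.1 * p.2 ^ (i : ℕ) + p.2 ^ d * u p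

theorem iteratedDeriv_taylorForm_coeff (hu : ContDiffAt ℝ ∞ (fun t => u (a, t)) 0) (i : Fin d) :
    iteratedDeriv i (fun t => taylorForm c u (a, t)) 0 = (i : ℕ)! * c i a := by
  have remainder : ContDiffAt ℝ (i : ℕ) (fun t => t ^ d * u (a, t)) 0 :=
    (contDiffAt_id.pow d).mul (hu.of_le (by exact_mod_cast le_top))
  simp only [taylorForm]
  rw [iteratedDeriv_fun_add (by fun_prop) remainder, iteratedDeriv_sum_const_mul_pow,
    iteratedDeriv_pow_mul_of_lt hu i.2, Finset.sum_eq_single i ?_ (by simp)]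
  · simp [Nat.descFactorial_self, mul_comm]
  · intro k _ hk
    rcases lt_or_gt_of_ne hk with hk | hk
    · simp [Nat.descFactorial_of_lt hk]
    · simp [Nat.sub_ne_zero_of_lt hk]

theorem iteratedDeriv_taylorForm_self (hu : ContDiffAt ℝ ∞ (fun t => u (a, t)) 0) :
    iteratedDeriv d (fun t => taylorForm c u (a, t)) 0 = d ! * u (a, 0) := by
  have remainder : ContDiffAt ℝ d (fun t => t ^ d * u (a, t)) 0 :=
    (contDiffAt_id.pow d).mul (hu.of_le (by exact_mod_cast le_top))
  simp only [taylorForm]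
  rw [iteratedDeriv_fun_add (by fun_prop) remainder, iteratedDeriv_sum_const_mul_pow,
    iteratedDeriv_pow_mul_self hu, Finset.sum_eq_zero, zero_add]
  intro k _
  simp [Nat.descFactorial_of_lt k.2]

theorem iteratedDeriv_taylorForm_of_last_eq_zero {c : Fin (d + 1) → E → ℝ}
    (hc : c (Fin.last d) a = 0) {w : ℝ} (hu : ∀ t, u (a, t) = w) (τ : ℝ) :
    iteratedDeriv d (fun t => taylorForm c u (a, t)) τ = (d + 1)! * τ * w := by
  simp only [taylorForm, hu, mul_comm _ w]
  rw [iteratedDeriv_fun_add (by fun_prop) (by fun_prop), iteratedDeriv_sum_const_mul_pow,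
    iteratedDeriv_const_mul _ (by fun_prop), iteratedDeriv_pow, Fin.sum_univ_castSucc, hc,
    Finset.sum_eq_zero fun i _ => by simp [Nat.descFactorial_of_lt i.2]]
  have : (d + 1).descFactorial d = (d + 1)! := by
    simpa using (Nat.descFactorial_succ (d + 1) d).symm.trans (Nat.descFactorial_self (d + 1))
  simp [this, mul_comm]

variable [NormedAddCommGroup E] [NormedSpace ℝ E] [CompleteSpace E]

theorem CarlemanAt.comp_fst {F G : Type*} [NormedAddCommGroup F] [NormedSpace ℝ F]
    [NormedAddCommGroup G] [NormedSpace ℝ G] [CompleteSpace G] {f : E → F}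
    (hf : CarlemanAt M f a) (b : G) : CarlemanAt M (fun p : E × G => f p.1) (a, b) :=
  hf.comp (carlemanAt_id (a, b)).fst

theorem carlemanAt_taylorForm (hc : ∀ i, CarlemanAt M (c i) a) (hu : CarlemanAt M u (a, b)) :
    CarlemanAt M (taylorForm c u) (a, b) := by
  have : ∀ i, CarlemanAt M (fun p : E × ℝ => c i p.1) (a, b) := fun i => (hc i).comp_fst b
  unfold taylorForm
  fun_prop

theorem CarlemanAt.exists_eventually_eq_taylorForm (hh : CarlemanAt M h (a, 0)) (d : ℕ) :
    ∃ (c : Fin d → E → ℝ) (u : E × ℝ → ℝ), (∀ i, CarlemanAt M (c i) a) ∧ CarlemanAt M u (a, 0) ∧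
      ∀ᶠ p in 𝓝 (a, (0 : ℝ)), h p = taylorForm c u p := by
  induction d with
  | zero => exact ⟨Fin.elim0, h, fun i => i.elim0, hh, by simp [taylorForm]⟩
  | succ d ih =>
    obtain ⟨c, u, hc, hu, eq⟩ := ih
    have restriction : CarlemanAt M (fun x => u (x, 0)) a := .comp hu (by fun_prop)
    have extension : CarlemanAt M (fun p : E × ℝ => u (p.1, 0)) (a, 0) :=
      .comp (g := fun x => u (x, 0)) restriction (by fun_prop)
    obtain ⟨g, hg, hug⟩ := (hu.sub extension).exists_eq_smul (.snd ℝ E ℝ) (e := (0, 1)) rfl rfl <|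
      .of_forall fun p (hp : p.2 = 0) => sub_eq_zero.2 (congrArg u (Prod.ext rfl hp))
    refine ⟨Fin.snoc c fun x => u (x, 0), g, Fin.lastCases (by simpa) (by simpa), hg, ?_⟩
    filter_upwards [eq, hug] with p hp hup
    have hup : u p = u (p.1, 0) + p.2 * g p := by rw [← sub_eq_iff_eq_add']; exact hup
    rw [hp, taylorForm, taylorForm, hup, Fin.sum_univ_castSucc]
    simp only [Fin.snoc_castSucc, Fin.snoc_last, Fin.val_castSucc, Fin.val_last]
    ring

theorem CarlemanAt.iteratedDeriv_snd (hh : CarlemanAt M h (a, b)) (k : ℕ) :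
    CarlemanAt M (fun p : E × ℝ => iteratedDeriv k (fun t => h (p.1, t)) p.2) (a, b) := by
  induction k with
  | zero => simpa using hh
  | succ k ih =>
    refine (ih.fderiv.clm_apply (carlemanAt_const (0, 1) _)).congr ?_
    filter_upwards [ih.eventually] with p hp
    have line : HasDerivAt (fun t : ℝ => (p.1, t)) (0, 1) p.2 :=
      (hasDerivAt_const _ _).prodMk (hasDerivAt_id _)
    rw [iteratedDeriv_succ]
    exact (hp.differentiableAt.hasFDerivAt.comp_hasDerivAt p.2 line).deriv.symm

theorem CarlemanAt.exists_iteratedDeriv_eq_zero (hh : CarlemanAt M h (a, b))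
    {k : ℕ} (eq_zero : iteratedDeriv k (fun t => h (a, t)) b = 0)
    (ne_zero : iteratedDeriv (k + 1) (fun t => h (a, t)) b ≠ 0) :
    ∃ g : E → ℝ, CarlemanAt M g a ∧ g a = b ∧
      ∀ᶠ x in 𝓝 a, iteratedDeriv k (fun t => h (x, t)) (g x) = 0 := by
  have hH := hh.iteratedDeriv_snd k
  set H : E × ℝ → ℝ := fun p => iteratedDeriv k (fun t => h (p.1, t)) p.2 with H_def
  have partial_ne_zero : fderiv ℝ H (a, b) (0, 1) ≠ 0 := by
    have line : HasDerivAt (fun t : ℝ => (a, t)) (0, 1) b :=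
      (hasDerivAt_const _ _).prodMk (hasDerivAt_id _)
    rw [iteratedDeriv_succ] at ne_zero
    rwa [← (hH.differentiableAt.hasFDerivAt.comp_hasDerivAt b line).deriv]
  have invertible : (fderiv ℝ H (a, b) ∘L .inr ℝ E ℝ).IsInvertible :=
    ⟨.unitsEquivAut ℝ (Units.mk0 _ partial_ne_zero), by ext; simp⟩
  refine ⟨_, hH.implicitFunction invertible, hH.contDiffAt.implicitFunction_apply_self .., ?_⟩
  filter_upwards [hH.contDiffAt.eventually_apply_implicitFunction (by simp) invertible] with x hx
  exact hx.trans eq_zero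

theorem CarlemanAt.exists_eventually_comp_shift_eq_taylorForm
    (hh : CarlemanAt M h (a, b)) (ne_zero : iteratedDeriv d (fun t => h (a, t)) b ≠ 0)
    (eq_zero : ∀ i, i + 1 = d → iteratedDeriv i (fun t => h (a, t)) b = 0) :
    ∃ (g : E → ℝ) (c : Fin d → E → ℝ) (u : E × ℝ → ℝ), CarlemanAt M g a ∧ g a = b ∧
      (∀ i, CarlemanAt M (c i) a) ∧ CarlemanAt M u (a, 0) ∧ u (a, 0) ≠ 0 ∧
      (∀ i : Fin d, (i : ℕ) + 1 = d → ∀ᶠ x in 𝓝 a, c i x = 0) ∧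
      ∀ᶠ p in 𝓝 (a, (0 : ℝ)), h (p.1, g p.1 + p.2) = taylorForm c u p := by
  obtain ⟨g, hg, hga, shift⟩ : ∃ g : E → ℝ, CarlemanAt M g a ∧ g a = b ∧
      ∀ i, i + 1 = d → ∀ᶠ x in 𝓝 a, iteratedDeriv i (fun t => h (x, t)) (g x) = 0 := by
    cases d with
    | zero => exact ⟨fun _ => b, carlemanAt_const b a, rfl, by simp⟩
    | succ k =>
      obtain ⟨g, hg, hga, eq⟩ := hh.exists_iteratedDeriv_eq_zero (eq_zero k rfl) ne_zero
      exact ⟨g, hg, hga, fun i hi => Nat.succ_injective hi ▸ eq⟩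
  have : CarlemanAt M (fun p : E × ℝ => g p.1) (a, 0) := hg.comp_fst 0
  have shifted : CarlemanAt M (fun p : E × ℝ => h (p.1, g p.1 + p.2)) (a, 0) :=
    .comp (by simpa [hga] using hh) (by fun_prop)
  obtain ⟨c, u, hc, hu, eq⟩ := shifted.exists_eventually_eq_taylorForm d
  have derivatives : ∀ᶠ x in 𝓝 a, ContDiffAt ℝ ∞ (fun t => u (x, t)) 0 ∧
      ∀ i, iteratedDeriv i (fun t => h (x, t)) (g x) =
        iteratedDeriv i (fun t => taylorForm c u (x, t)) 0 := by
    have smooth : ∀ᶠ x in 𝓝 a, CarlemanAt M u (x, 0) :=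
      (by fun_prop : ContinuousAt (fun x : E => (x, (0 : ℝ))) a).eventually hu.eventually
    filter_upwards [eq.curry_nhds, smooth] with x (hx : _ =ᶠ[𝓝 0] _) hux
    refine ⟨hux.contDiffAt.comp (0 : ℝ) (by fun_prop), fun i => ?_⟩
    simp [← hx.iteratedDeriv_eq, iteratedDeriv_comp_const_add i fun t => h (x, t)]
  refine ⟨g, c, u, hg, hga, hc, hu, fun hu0 => ne_zero ?_, fun i hi => ?_, eq⟩
  · obtain ⟨smooth, eq⟩ := derivatives.self_of_nhds
    rw [← hga, eq, iteratedDeriv_taylorForm_self smooth, hu0, mul_zero]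
  · filter_upwards [derivatives, shift i hi] with x ⟨smooth, eq⟩ hx
    rw [eq, iteratedDeriv_taylorForm_coeff smooth] at hx
    exact (mul_eq_zero.1 hx).resolve_left (by positivity)

end TaylorForm

section BlowUp

variable {ι : Type*}

/-- The chart `(x, t) ↦ (x, x j * t)` of the blow-up of the subspace `x j = t = 0`. -/
def scaleLast (j : ι) (p : (ι → ℝ) × ℝ) : (ι → ℝ) × ℝ := (p.1, p.1 j * p.2)

theorem scaleLast_zero (j : ι) (τ : ℝ) : scaleLast j (0, τ) = (0, 0) := by
  simp [scaleLast]

variable [DecidableEq ι]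

/-- The chart of the blow-up of the subspace `x j = t = 0` multiplying the coordinate `x j`
by `t`. -/
def scaleCoord (j : ι) (p : (ι → ℝ) × ℝ) : (ι → ℝ) × ℝ :=
  (Function.update p.1 j (p.2 * p.1 j), p.2)

theorem scaleCoord_single (j : ι) (r : ℝ) : scaleCoord j (Pi.single j r, 0) = (0, 0) := by
  simp [scaleCoord, Pi.single]

theorem nhds_le_map_scaleLast_sup_map_scaleCoord (j : ι) {δ : ℝ} (hδ : 0 < δ) :
    𝓝 ((0 : ι → ℝ), (0 : ℝ)) ≤ map (scaleLast j) (𝓝ˢ ({0} ×ˢ Icc (-δ⁻¹) δ⁻¹)) ⊔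
      map (scaleCoord j) (𝓝ˢ ((Pi.single j '' Icc (-δ) δ) ×ˢ {0})) := by
  rintro s ⟨hLast, hCoord⟩
  rw [mem_map, mem_nhdsSet_iff_forall] at hLast hCoord
  have preimage_last : ∀ᶠ p : (ι → ℝ) × ℝ in 𝓝 (0, 0), ∀ τ ∈ Icc (-δ⁻¹) δ⁻¹,
      scaleLast j (p.1, τ) ∈ s := by
    refine isCompact_Icc.eventually_forall_of_forall_eventually fun τ hτ => ?_
    have : ContinuousAt (fun z : ((ι → ℝ) × ℝ) × ℝ => (z.1.1, z.2)) ((0, 0), τ) := by fun_prop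
    exact this.eventually (hLast (0, τ) ⟨rfl, hτ⟩)
  have preimage_coord : ∀ᶠ p : (ι → ℝ) × ℝ in 𝓝 (0, 0), ∀ r ∈ Icc (-δ) δ,
      scaleCoord j (Function.update p.1 j r, p.2) ∈ s := by
    refine isCompact_Icc.eventually_forall_of_forall_eventually fun r hr => ?_
    have : Continuous fun z : ((ι → ℝ) × ℝ) × ℝ => (Function.update z.1.1 j z.2, z.1.2) :=
      ((continuous_fst.comp continuous_fst).update j continuous_snd).prodMk (by fun_prop)
    exact (this.tendsto ((0, 0), r)).eventually (hCoord (Pi.single j r, 0) ⟨⟨r, hr, rfl⟩, rfl⟩)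
  filter_upwards [preimage_last, preimage_coord] with p hp_last hp_coord
  rcases le_or_gt |p.2| (δ⁻¹ * |p.1 j|) with h | h
  · convert hp_last (p.2 / p.1 j) ?_
    · refine Prod.ext rfl (mul_div_cancel_of_imp' fun h0 => ?_).symm
      rw [h0, abs_zero, mul_zero] at h
      exact abs_nonpos_iff.1 h
    · rw [mem_Icc, ← abs_le, abs_div]
      exact div_le_of_le_mul₀ (abs_nonneg _) (by positivity) h
  · have hp : 0 < |p.2| := h.trans_le' (by positivity)
    convert hp_coord (p.1 j / p.2) ?_
    · simp [scaleCoord, mul_div_cancel₀ _ (abs_pos.1 hp)]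
    · rw [mem_Icc, ← abs_le, abs_div, div_le_iff₀ hp]
      exact ((inv_mul_lt_iff₀ hδ).1 h).le

end BlowUp

section ScaledTaylorForm

variable {ι : Type*} [Fintype ι] {M : RegularWeight} {d : ℕ} {c : Fin d → (ι → ℝ) → ℝ}
  {f u : (ι → ℝ) × ℝ → ℝ} {a : ι → ℝ}

@[fun_prop]
theorem carlemanAt_scaleLast (j : ι) (p : (ι → ℝ) × ℝ) : CarlemanAt M (scaleLast j) p := by
  have coord : CarlemanAt M (fun p : (ι → ℝ) × ℝ => p.1 j) p :=
    (carlemanAt_apply j p.1).comp_fst p.2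
  exact (carlemanAt_id p).fst.prodMk (coord.mul (carlemanAt_id p).snd)

/-- The coefficients `c i`, `i < d`, multiplied by the monomials with exponents `(d - i) • β`, so
that dividing `β` by a coordinate amounts to a blow-up. -/
def scaledCoeff (β : ι → ℕ) (c : Fin d → (ι → ℝ) → ℝ) (i : Fin d) (x : ι → ℝ) : ℝ :=
  monomial ((d - i) • β) x * c i x

theorem carlemanAt_scaledCoeff (β : ι → ℕ) {i : Fin d} (hc : CarlemanAt M (c i) a) :
    CarlemanAt M (scaledCoeff β c i) a := by
  unfold scaledCoeff
  fun_prop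

variable [DecidableEq ι]

@[fun_prop]
theorem carlemanAt_scaleCoord (j : ι) (p : (ι → ℝ) × ℝ) : CarlemanAt M (scaleCoord j) p := by
  have coord (i : ι) : CarlemanAt M (fun p : (ι → ℝ) × ℝ => p.1 i) p :=
    (carlemanAt_apply i p.1).comp_fst p.2
  refine .prodMk (.pi fun i => ?_) (carlemanAt_id p).snd
  rcases eq_or_ne i j with rfl | hij
  · simpa using (carlemanAt_id p).snd.mul (coord i)
  · simpa [hij] using coord i

theorem Monomializable.of_blowUp (j : ι) {δ : ℝ} (hδ : 0 < δ)
    (hlast : ∀ τ, Monomializable M (fun p => f (scaleLast j p)) (0, τ))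
    (hcoord : ∀ r, |r| ≤ δ → Monomializable M (fun p => f (scaleCoord j p)) (Pi.single j r, 0)) :
    Monomializable M f (0, 0) := by
  have compact_coord : IsCompact ((Pi.single j '' Icc (-δ) δ : Set (ι → ℝ)) ×ˢ {(0 : ℝ)}) :=
    (isCompact_Icc.image (continuous_single j)).prod isCompact_singleton
  refine .cover (fun b => cond b (scaleLast j) (scaleCoord j))
    (fun b => cond b ({0} ×ˢ Icc (-δ⁻¹) δ⁻¹) ((Pi.single j '' Icc (-δ) δ) ×ˢ {0}))
    ?_ ?_ ?_ ?_ ?_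
  · exact Bool.forall_bool.2 ⟨compact_coord, isCompact_singleton.prod isCompact_Icc⟩
  · exact Bool.forall_bool.2
      ⟨fun y _ => carlemanAt_scaleCoord j y, fun y _ => carlemanAt_scaleLast j y⟩
  · refine Bool.forall_bool.2 ⟨?_, ?_⟩
    · rintro ⟨_, _⟩ ⟨⟨r, -, rfl⟩, rfl⟩
      exact scaleCoord_single j r
    · rintro ⟨_, τ⟩ ⟨rfl, -⟩
      exact scaleLast_zero j τ
  · rw [iSup_bool_eq]
    exact nhds_le_map_scaleLast_sup_map_scaleCoord j hδ
  · refine Bool.forall_bool.2 ⟨?_, ?_⟩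
    · rintro ⟨_, _⟩ ⟨⟨r, hr, rfl⟩, rfl⟩
      exact hcoord r (abs_le.2 hr)
    · rintro ⟨_, τ⟩ ⟨rfl, -⟩
      exact hlast τ

theorem monomial_update_mul (α : ι → ℕ) (x : ι → ℝ) (j : ι) (t : ℝ) :
    monomial α (Function.update x j (t * x j)) = t ^ α j * monomial α x := by
  have : Function.update x j (t * x j) = Function.update (1 : ι → ℝ) j t * x := by
    ext i
    rcases eq_or_ne i j with rfl | hij <;> simp [*]
  rw [this, monomial_mul, monomial, Finset.prod_eq_single j _ (by simp), Function.update_self]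
  intro i _ hij
  simp [hij]

theorem abs_monomial_single_le {γ : ι → ℕ} {j : ι} (hj : γ j ≠ 0) {r : ℝ} (hr : |r| ≤ 1) :
    |monomial γ (Pi.single j r)| ≤ |r| := by
  obtain ⟨γ, rfl⟩ := exists_eq_single_add_of_ne_zero hj
  rw [monomial_add, monomial_single, pow_one, abs_mul, Pi.single_eq_same]
  refine mul_le_of_le_one_right (abs_nonneg r) ?_
  rw [monomial, Finset.abs_prod]
  refine Finset.prod_le_one (fun i _ => abs_nonneg _) fun i _ => ?_
  rw [abs_pow]
  refine pow_le_one₀ (abs_nonneg _) ?_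
  rcases eq_or_ne i j with rfl | hij <;> simp [*]

theorem taylorForm_scaledCoeff_scaleLast (j : ι) (β : ι → ℕ) (p : (ι → ℝ) × ℝ) :
    taylorForm (scaledCoeff (Pi.single j 1 + β) c) u (scaleLast j p) =
      monomial (Pi.single j d) p.1 *
        taylorForm (scaledCoeff β c) (fun p => u (scaleLast j p)) p := by
  simp only [taylorForm, scaledCoeff, scaleLast, mul_add, Finset.mul_sum, monomial_single,
    mul_pow, smul_add, monomial_add, monomial_smul, pow_one]
  refine congrArg₂ _ (Finset.sum_congr rfl fun i _ => ?_) (by ring)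
  rw [← pow_sub_mul_pow (p.1 j) i.2.le]
  ring

/-- The quotient by `t ^ d` of the Taylor expansion with coefficients
`scaledCoeff (Pi.single j 1 + β) c` and remainder `u` in the chart `scaleCoord j`. -/
def scaleCoordUnit (j : ι) (β : ι → ℕ) (c : Fin d → (ι → ℝ) → ℝ) (u : (ι → ℝ) × ℝ → ℝ)
    (p : (ι → ℝ) × ℝ) : ℝ :=
  ∑ i : Fin d, monomial ((d - i) • (Pi.single j 1 + β)) p.1 * p.2 ^ ((d - i) * β j) *
    c i (scaleCoord j p).1 + u (scaleCoord j p)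

theorem taylorForm_scaledCoeff_scaleCoord (j : ι) (β : ι → ℕ) (p : (ι → ℝ) × ℝ) :
    taylorForm (scaledCoeff (Pi.single j 1 + β) c) u (scaleCoord j p) =
      p.2 ^ d * scaleCoordUnit j β c u p := by
  simp only [taylorForm, scaledCoeff, scaleCoordUnit, scaleCoord, mul_add, Finset.mul_sum,
    monomial_update_mul]
  refine congrArg (· + _) (Finset.sum_congr rfl fun i _ => ?_)
  have exponent : ((d - (i : ℕ)) • (Pi.single j 1 + β) : ι → ℕ) j = (d - i) + (d - i) * β j := by
    simp [mul_add]
  rw [exponent, pow_add, ← pow_sub_mul_pow p.2 i.2.le]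
  ring

theorem carlemanAt_scaleCoordUnit (hc : ∀ i, CarlemanAt M (c i) 0) (hu : CarlemanAt M u (0, 0))
    (j : ι) (β : ι → ℕ) (r : ℝ) :
    CarlemanAt M (scaleCoordUnit j β c u) (Pi.single j r, 0) := by
  have hu : CarlemanAt M (fun p => u (scaleCoord j p)) (Pi.single j r, 0) :=
    .comp (by rwa [scaleCoord_single]) (by fun_prop)
  have hc (i : Fin d) : CarlemanAt M (fun p => c i (scaleCoord j p).1) (Pi.single j r, 0) :=
    .comp (by rw [scaleCoord_single]; exact hc i) (carlemanAt_scaleCoord j _).fst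
  have monomial_fst (γ : ι → ℕ) :
      CarlemanAt M (fun p : (ι → ℝ) × ℝ => monomial γ p.1) (Pi.single j r, 0) :=
    (carlemanAt_monomial γ _).comp_fst 0
  exact (CarlemanAt.sum fun i _ =>
    ((monomial_fst _).mul ((carlemanAt_id _).snd.pow _)).mul (hc i)).add hu

theorem scaleCoordUnit_ne_zero {δ : ℝ} (hδ : δ ≤ 1) (hcu : (∑ i, |c i 0|) * δ < |u (0, 0)|) (j : ι)
    (β : ι → ℕ) {r : ℝ} (hr : |r| ≤ δ) : scaleCoordUnit j β c u (Pi.single j r, 0) ≠ 0 := by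
  intro h
  rw [scaleCoordUnit, scaleCoord_single, add_comm] at h
  refine hcu.not_ge ?_
  rw [eq_neg_of_add_eq_zero_left h, abs_neg, Finset.sum_mul]
  refine (Finset.abs_sum_le_sum_abs _ _).trans (Finset.sum_le_sum fun i _ => ?_)
  have monomial_le : |monomial ((d - i) • (Pi.single j 1 + β)) (Pi.single j r)| ≤ δ :=
    (abs_monomial_single_le (by simp [Nat.sub_ne_zero_of_lt i.2]) (hr.trans hδ)).trans hr
  have pow_le : |(0 : ℝ) ^ ((d - i) * β j)| ≤ 1 := by
    rw [abs_pow]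
    exact pow_le_one₀ (abs_nonneg _) (by simp)
  calc |_ * _ * c i 0| ≤ δ * 1 * |c i 0| := by
        rw [abs_mul, abs_mul]
        gcongr
        exact (abs_nonneg r).trans hr
    _ = |c i 0| * δ := by ring

end ScaledTaylorForm

section ScaledCoefficients

variable {ι : Type*} [Fintype ι] {M : RegularWeight} {f : (ι → ℝ) → ℝ} {α : ι → ℕ}

theorem HasMonomialForm.carlemanAt (hf : HasMonomialForm M f α) : CarlemanAt M f 0 := by
  obtain ⟨u, hu, -, eq⟩ := hf
  exact ((carlemanAt_monomial α 0).mul hu).congr (eq.mono fun x hx => hx.symm)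

protected theorem HasMonomialForm.monomial_mul (hf : HasMonomialForm M f α) (γ : ι → ℕ) :
    HasMonomialForm M (fun x => monomial γ x * f x) (γ + α) := by
  obtain ⟨u, hu, hu0, eq⟩ := hf
  exact ⟨u, hu, hu0, eq.mono fun x hx => by simp only [hx, monomial_add, mul_assoc]⟩

variable {n d : ℕ} {m : (Fin n → ℝ) → ℝ} {μ : Fin n → ℕ} {u : (Fin n → ℝ) × ℝ → ℝ}
  {a : Fin n → ℝ} {b : ℝ}

theorem Monomializable.of_eq_pow_mul_monomial_mul {f g : (Fin n → ℝ) × ℝ → ℝ} (k : ℕ)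
    (α : Fin n → ℕ) (hg : CarlemanAt M g (a, b)) (hg0 : g (a, b) ≠ 0)
    (hf : ∀ᶠ p in 𝓝 (a, b), f p = p.2 ^ k * monomial α p.1 * g p) :
    Monomializable M f (a, b) := by
  refine .of_eq_monomial_mul ((ContinuousLinearEquiv.prodComm ℝ (Fin n → ℝ) ℝ).trans
    (Fin.consEquivL ℝ fun _ => ℝ)) (Fin.cons k α) hg hg0 (hf.mono fun p hp => ?_)
  simp [hp, monomial, Fin.prod_univ_succ, Fin.consEquivL]

/-- Near `(a, b)`, the product of a germ in the first `n` variables that is not identically zero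
and a germ of order `d` in the last variable is monomializable. -/
def MonomializableOfOrder (M : RegularWeight) (n d : ℕ) : Prop :=
  ∀ (a : Fin n → ℝ) (b : ℝ) (m : (Fin n → ℝ) → ℝ) (h : (Fin n → ℝ) × ℝ → ℝ),
    CarlemanAt M m a → (¬ ∀ᶠ x in 𝓝 a, m x = 0) → CarlemanAt M h (a, b) →
    iteratedDeriv d (fun t => h (a, t)) b ≠ 0 → Monomializable M (fun p => m p.1 * h p) (a, b)

namespace MonomializableOfOrder

theorem mul_taylorForm_of_coeff_ne_zero {c : Fin d → (Fin n → ℝ) → ℝ} {i : Fin d}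
    (order : MonomializableOfOrder M n i) (hm : CarlemanAt M m a) (hm0 : ¬ ∀ᶠ x in 𝓝 a, m x = 0)
    (hc : ∀ i, CarlemanAt M (c i) a) (hu : CarlemanAt M u (a, 0)) (hci : c i a ≠ 0) :
    Monomializable M (fun p => m p.1 * taylorForm c u p) (a, 0) := by
  refine order a 0 m _ hm hm0 (carlemanAt_taylorForm hc hu) ?_
  rw [iteratedDeriv_taylorForm_coeff (hu.contDiffAt.comp (0 : ℝ) (by fun_prop))]
  exact mul_ne_zero (by positivity) hci

theorem mul_taylorForm_of_last_eq_zero {c : Fin (d + 1) → (Fin n → ℝ) → ℝ} {τ w : ℝ}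
    (order : MonomializableOfOrder M n d) (hm : CarlemanAt M m a) (hm0 : ¬ ∀ᶠ x in 𝓝 a, m x = 0)
    (hc : ∀ i, CarlemanAt M (c i) a) (hc_last : c (Fin.last d) a = 0)
    (hu : CarlemanAt M u (a, τ)) (hu_const : ∀ t, u (a, t) = w) (hw : w ≠ 0) (hτ : τ ≠ 0) :
    Monomializable M (fun p => m p.1 * taylorForm c u p) (a, τ) := by
  refine order a τ m _ hm hm0 (carlemanAt_taylorForm hc hu) ?_
  rw [iteratedDeriv_taylorForm_of_last_eq_zero hc_last hu_const]
  positivity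

end MonomializableOfOrder

variable {c : Fin d → (Fin n → ℝ) → ℝ}

theorem exists_forall_abs_le_monomializable_comp_scaleCoord (hm : HasMonomialForm M m μ)
    (hc : ∀ i, CarlemanAt M (c i) 0) (hu : CarlemanAt M u (0, 0)) (hu0 : u (0, 0) ≠ 0)
    (j : Fin n) (β : Fin n → ℕ) : ∃ δ > 0, ∀ r, |r| ≤ δ →
      Monomializable M (fun p => m (scaleCoord j p).1 *
        taylorForm (scaledCoeff (Pi.single j 1 + β) c) u (scaleCoord j p)) (Pi.single j r, 0) := by
  obtain ⟨v, hv, hv0, hmv⟩ := hm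
  set S := ∑ i, |c i 0|
  have : 0 ≤ S := Finset.sum_nonneg fun i _ => abs_nonneg (c i 0)
  obtain ⟨δ, hδ, hδ_one, hSδ⟩ : ∃ δ > 0, δ ≤ 1 ∧ S * δ < |u (0, 0)| := by
    refine ⟨min 1 (|u (0, 0)| / (S + 1)), by positivity, min_le_left _ _, ?_⟩
    calc S * min 1 (|u (0, 0)| / (S + 1)) ≤ S * (|u (0, 0)| / (S + 1)) := by
          gcongr
          exact min_le_right _ _
      _ < |u (0, 0)| := by
          rw [mul_div_assoc', div_lt_iff₀ (by positivity)]
          linarith [abs_pos.2 hu0]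
  refine ⟨δ, hδ, fun r hr => ?_⟩
  have tendsto : Tendsto (fun p => (scaleCoord j p).1) (𝓝 (Pi.single j r, 0)) (𝓝 0) := by
    simpa only [ContinuousAt, scaleCoord_single] using
      (carlemanAt_scaleCoord (M := M) j (Pi.single j r, 0)).fst.continuousAt
  refine .of_eq_pow_mul_monomial_mul (μ j + d) μ
    (g := fun p => v (scaleCoord j p).1 * scaleCoordUnit j β c u p) ?_ ?_ ?_
  · refine .mul (.comp (by rwa [scaleCoord_single]) (carlemanAt_scaleCoord j _).fst)
      (carlemanAt_scaleCoordUnit hc hu j β r)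
  · rw [scaleCoord_single]
    exact mul_ne_zero hv0 (scaleCoordUnit_ne_zero hδ_one hSδ j β hr)
  · filter_upwards [tendsto.eventually hmv] with p hp
    rw [hp, taylorForm_scaledCoeff_scaleCoord]
    simp only [scaleCoord]
    rw [monomial_update_mul]
    ring

theorem monomializable_mul_taylorForm_scaledCoeff
    (order : ∀ i < d, MonomializableOfOrder M n i) (hm : HasMonomialForm M m μ)
    (hc : ∀ i, CarlemanAt M (c i) 0) (hc_last : ∀ i : Fin d, (i : ℕ) + 1 = d → c i 0 = 0)
    {i : Fin d} (hci : c i 0 ≠ 0) (hu : CarlemanAt M u (0, 0)) (hu0 : u (0, 0) ≠ 0)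
    (β : Fin n → ℕ) :
    Monomializable M (fun p => m p.1 * taylorForm (scaledCoeff β c) u p) (0, 0) := by
  have hc_scaled (β i) : CarlemanAt M (scaledCoeff β c i) 0 := carlemanAt_scaledCoeff β (hc i)
  induction hk : ∑ i, β i generalizing β μ m u with
  | zero =>
    obtain rfl : β = 0 := funext fun i => by simpa using Finset.sum_eq_zero_iff.1 hk i
    exact (order i i.2).mul_taylorForm_of_coeff_ne_zero hm.carlemanAt hm.not_eventually_eq_zero
      (hc_scaled 0) hu (by simpa [scaledCoeff, monomial_zero] using hci)
  | succ k ih =>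
    obtain ⟨j, -, hj⟩ := Finset.exists_ne_zero_of_sum_ne_zero (hk.trans_ne k.succ_ne_zero)
    obtain ⟨β, rfl⟩ := exists_eq_single_add_of_ne_zero hj
    obtain ⟨δ, hδ, coord⟩ :=
      exists_forall_abs_le_monomializable_comp_scaleCoord hm hc hu hu0 j β
    refine .of_blowUp j hδ (fun τ => ?_) coord
    have hm' := hm.monomial_mul (Pi.single j d)
    have hu' : CarlemanAt M (fun p => u (scaleLast j p)) (0, τ) :=
      .comp (by rwa [scaleLast_zero]) (by fun_prop)
    suffices Monomializable M (fun p => monomial (Pi.single j d) p.1 * m p.1 *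
        taylorForm (scaledCoeff β c) (fun p => u (scaleLast j p)) p) (0, τ) by
      refine this.congr (.of_forall fun p => ?_)
      beta_reduce
      rw [taylorForm_scaledCoeff_scaleLast, ← mul_assoc, mul_comm (m _)]
      rfl
    rcases eq_or_ne τ 0 with rfl | hτ
    · exact ih hm' hu' (by rwa [scaleLast_zero]) β
        (by simpa [Finset.sum_add_distrib, add_comm 1] using hk)
    · obtain _ | d := d
      · exact i.elim0
      · exact (order d d.lt_succ_self).mul_taylorForm_of_last_eq_zero hm'.carlemanAt
          hm'.not_eventually_eq_zero (hc_scaled β)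
          (by simp [scaledCoeff, hc_last (Fin.last d)]) hu'
          (fun t => by rw [scaleLast_zero]) hu0 hτ

end ScaledCoefficients

section PowerSubstitution

variable {ι : Type*} {D : ℕ}

theorem tendsto_mul_pow_nhds_zero (g : ι → ℝ) (hD : D ≠ 0) :
    Tendsto (fun x => g * x ^ D) (𝓝 0) (𝓝 0) := by
  have : Continuous fun x => g * x ^ D := by fun_prop
  simpa [hD] using this.tendsto 0

theorem exists_intCast_units_mul_abs_eq (x : ι → ℝ) :
    ∃ ε : ι → ℤˣ, ∀ k, ((ε k : ℤ) : ℝ) * |x k| = x k := by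
  refine ⟨fun k => if 0 ≤ x k then 1 else -1, fun k => ?_⟩
  dsimp only
  split_ifs with h
  · simp [abs_of_nonneg h]
  · simp [abs_of_neg (not_le.1 h)]

theorem nhds_le_iSup_map_mul_pow [Finite ι] (hD : D ≠ 0) :
    𝓝 ((0 : ι → ℝ), (0 : ℝ)) ≤ ⨆ ε : ι → ℤˣ,
      map (fun p => ((fun k => ((ε k : ℤ) : ℝ)) * p.1 ^ D, p.2)) (𝓝 (0, 0)) := by
  let root : (ι → ℝ) × ℝ → (ι → ℝ) × ℝ := fun p => (fun k => |p.1 k| ^ (D : ℝ)⁻¹, p.2)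
  have exponent_pos : 0 < (D : ℝ)⁻¹ := by positivity
  have tendsto_root : Tendsto root (𝓝 (0, 0)) (𝓝 (0, 0)) := by
    have continuous_root : Continuous root := (continuous_pi fun k =>
      .rpow_const (by fun_prop) fun _ => .inr exponent_pos.le).prodMk continuous_snd
    convert continuous_root.tendsto (0, 0)
    simp [Real.zero_rpow exponent_pos.ne']
  intro s hs
  have := eventually_all.2 fun ε => tendsto_root.eventually (mem_iSup.1 hs ε)
  filter_upwards [this] with p hp
  obtain ⟨ε, hε⟩ := exists_intCast_units_mul_abs_eq p.1
  convert hp ε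
  ext k
  simp [root, Real.rpow_inv_natCast_pow (abs_nonneg _) hD, hε]

variable [Fintype ι] {M : RegularWeight} {f : (ι → ℝ) → ℝ} {α γ : ι → ℕ} {g : ι → ℝ}

@[fun_prop]
theorem carlemanAt_mul_pow (g : ι → ℝ) (D : ℕ) (x : ι → ℝ) :
    CarlemanAt M (fun x => g * x ^ D) x :=
  .pi fun k => (carlemanAt_const (g k) x).mul ((carlemanAt_apply k x).pow D)

theorem Monomializable.of_comp_mul_pow {n : ℕ} {f : (Fin n → ℝ) × ℝ → ℝ} (hD : D ≠ 0)
    (hf : ∀ g : Fin n → ℝ, (∀ k, g k ≠ 0) →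
      Monomializable M (fun p => f (g * p.1 ^ D, p.2)) (0, 0)) : Monomializable M f (0, 0) := by
  refine .cover (fun (ε : Fin n → ℤˣ) p => ((fun k => ((ε k : ℤ) : ℝ)) * p.1 ^ D, p.2))
    (fun _ => {(0, 0)}) (fun _ => isCompact_singleton) ?_ ?_ ?_ ?_
  · intro ε y _
    exact ((carlemanAt_mul_pow _ D y.1).comp_fst y.2).prodMk (carlemanAt_id y).snd
  · rintro ε _ rfl
    simp [hD]
  · simpa only [nhdsSet_singleton] using nhds_le_iSup_map_mul_pow hD
  · rintro ε _ rfl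
    exact hf _ fun k => by simp

namespace HasMonomialForm

theorem exists_comp_mul_pow_eq (hf : HasMonomialForm M f α) (hD : D ≠ 0) (hg : ∀ k, g k ≠ 0)
    (hγ : γ ≤ D • α) : ∃ f', CarlemanAt M f' 0 ∧ (γ = D • α → f' 0 ≠ 0) ∧
      ∀ᶠ x in 𝓝 0, f (g * x ^ D) = monomial γ x * f' x := by
  obtain ⟨u, hu, hu0, eq⟩ := hf
  obtain ⟨δ, hδ⟩ := exists_add_of_le hγ
  have maps_zero : g * 0 ^ D = 0 := by simp [hD]
  refine ⟨fun x => monomial α g * monomial δ x * u (g * x ^ D), ?_, ?_, ?_⟩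
  · exact ((carlemanAt_const _ _).mul (carlemanAt_monomial δ 0)).mul
      (.comp (by rwa [maps_zero]) (carlemanAt_mul_pow g D 0))
  · rintro rfl
    obtain rfl : δ = 0 := by simpa using hδ
    simp only [maps_zero, monomial_zero, mul_one]
    exact mul_ne_zero (fun h => let ⟨k, hk, _⟩ := monomial_eq_zero_iff.1 h; hg k hk) hu0
  · filter_upwards [(tendsto_mul_pow_nhds_zero g hD).eventually eq] with x hx
    rw [hx, monomial_mul, monomial_pow, hδ, monomial_add]
    ring

theorem comp_mul_pow (hf : HasMonomialForm M f α) (hD : D ≠ 0) (hg : ∀ k, g k ≠ 0) :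
    HasMonomialForm M (fun x => f (g * x ^ D)) (D • α) := by
  obtain ⟨f', hf', hf'0, eq⟩ := hf.exists_comp_mul_pow_eq hD hg le_rfl
  exact ⟨f', hf', hf'0 rfl, eq⟩

theorem pow (hf : HasMonomialForm M f α) (k : ℕ) :
    HasMonomialForm M (fun x => f x ^ k) (k • α) := by
  obtain ⟨u, hu, hu0, eq⟩ := hf
  refine ⟨fun x => u x ^ k, by fun_prop, pow_ne_zero k hu0, eq.mono fun x hx => ?_⟩
  simp only [hx, mul_pow, monomial_smul]

end HasMonomialForm

end PowerSubstitution

section ComparableCoefficients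

variable {M : RegularWeight} {n d : ℕ}

theorem exists_forall_smul_le {ι κ : Type*} [Fintype ι] {S : Finset κ} (hM : M.Quasianalytic)
    {c : κ → (ι → ℝ) → ℝ} {α : κ → ι → ℕ} {e : κ → ℕ} (hS : S.Nonempty)
    (hc : ∀ i ∈ S, HasMonomialForm M (c i) (α i))
    (hc_sub : ∀ i j, IsZeroOrMonomial M fun x => c i x ^ e i - c j x ^ e j) :
    ∃ i ∈ S, ∀ j ∈ S, e i • α i ≤ e j • α j := by
  obtain ⟨i, hi, minimal⟩ := S.exists_minimalFor (fun i => e i • α i) hS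
  exact ⟨i, hi, fun j hj =>
    (((hc i hi).pow (e i)).le_or_le hM ((hc j hj).pow (e j)) (hc_sub i j)).elim id (minimal hj)⟩

variable {m : (Fin n → ℝ) → ℝ} {μ : Fin n → ℕ} {c : Fin d → (Fin n → ℝ) → ℝ}
  {u : (Fin n → ℝ) × ℝ → ℝ}

theorem exists_comp_mul_pow_eq_scaledCoeff {α : Fin d → Fin n → ℕ}
    (hc : ∀ i, (∀ᶠ x in 𝓝 0, c i x = 0) ∨ HasMonomialForm M (c i) (α i))
    {i₀ : Fin d} (hi₀ : ¬ ∀ᶠ x in 𝓝 0, c i₀ x = 0)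
    (le : ∀ i, (¬ ∀ᶠ x in 𝓝 0, c i x = 0) → (d ! / (d - i₀)) • α i₀ ≤ (d ! / (d - i)) • α i)
    {g : Fin n → ℝ} (hg : ∀ k, g k ≠ 0) :
    ∃ c' : Fin d → (Fin n → ℝ) → ℝ, (∀ i, CarlemanAt M (c' i) 0) ∧ c' i₀ 0 ≠ 0 ∧
      (∀ i, (∀ᶠ x in 𝓝 0, c i x = 0) → c' i 0 = 0) ∧
      ∀ i, ∀ᶠ x in 𝓝 0, c i (g * x ^ d !) = scaledCoeff ((d ! / (d - i₀)) • α i₀) c' i x := by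
  set β := (d ! / (d - i₀)) • α i₀
  have smul_exponent (i : Fin d) : (d - i) • (d ! / (d - i)) • α i = d ! • α i := by
    rw [smul_smul, Nat.mul_div_cancel' (Nat.dvd_factorial (Nat.sub_pos_of_lt i.2) (Nat.sub_le _ _))]
  have coeff (i : Fin d) : ∃ c' : (Fin n → ℝ) → ℝ, CarlemanAt M c' 0 ∧ (i = i₀ → c' 0 ≠ 0) ∧
      ((∀ᶠ x in 𝓝 0, c i x = 0) → c' 0 = 0) ∧
      ∀ᶠ x in 𝓝 0, c i (g * x ^ d !) = monomial ((d - i) • β) x * c' x := by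
    by_cases hi : ∀ᶠ x in 𝓝 0, c i x = 0
    · refine ⟨0, carlemanAt_const 0 0, fun h => absurd (h ▸ hi) hi₀, fun _ => rfl, ?_⟩
      filter_upwards [(tendsto_mul_pow_nhds_zero g d.factorial_ne_zero).eventually hi] with x hx
      simp [hx]
    · obtain ⟨c', hc', hc'0, eq⟩ := ((hc i).resolve_left hi).exists_comp_mul_pow_eq
        d.factorial_ne_zero hg ((smul_exponent i).subst (nsmul_le_nsmul_right (le i hi) (d - i)))
      refine ⟨c', hc', ?_, fun h => absurd h hi, eq⟩
      rintro rfl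
      exact hc'0 (smul_exponent i)
  choose c' hc' hc'0 hc'_zero eq using coeff
  exact ⟨c', hc', hc'0 i₀ rfl, hc'_zero, eq⟩

theorem monomializable_mul_taylorForm_of_isZeroOrMonomial (hM : M.Quasianalytic)
    (order : ∀ i < d, MonomializableOfOrder M n i) (hm : HasMonomialForm M m μ)
    (hc : ∀ i, IsZeroOrMonomial M (c i))
    (hc_sub : ∀ i j : Fin d,
      IsZeroOrMonomial M fun x => c i x ^ (d ! / (d - i)) - c j x ^ (d ! / (d - j)))
    (hc_last : ∀ i : Fin d, (i : ℕ) + 1 = d → ∀ᶠ x in 𝓝 0, c i x = 0)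
    (hu : CarlemanAt M u (0, 0)) (hu0 : u (0, 0) ≠ 0) :
    Monomializable M (fun p => m p.1 * taylorForm c u p) (0, 0) := by
  classical
  choose α hα using fun i => (hc i).elim
    (fun h => (⟨0, .inl h⟩ : ∃ α, (∀ᶠ x in 𝓝 0, c i x = 0) ∨ HasMonomialForm M (c i) α))
    fun ⟨α, h⟩ => ⟨α, .inr h⟩
  by_cases hzero : ∀ i, ∀ᶠ x in 𝓝 0, c i x = 0
  · obtain ⟨v, hv, hv0, eq⟩ := hm
    refine .of_eq_pow_mul_monomial_mul d μ (g := fun p => v p.1 * u p) (.mul (hv.comp_fst 0) hu)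
      (mul_ne_zero hv0 hu0) ?_
    filter_upwards [continuousAt_fst.eventually (eq.and (eventually_all.2 hzero))] with p ⟨hp, hc⟩
    simp only [taylorForm, hp, hc, zero_mul, Finset.sum_const_zero, zero_add]
    ring
  · obtain ⟨i, hi⟩ := not_forall.1 hzero
    obtain ⟨i₀, hi₀, least⟩ := exists_forall_smul_le (S := {i | ¬ ∀ᶠ x in 𝓝 0, c i x = 0}) hM
      ⟨i, by simpa using hi⟩ (fun i hi => (hα i).resolve_left (Finset.mem_filter.1 hi).2) hc_sub
    refine .of_comp_mul_pow d.factorial_ne_zero fun g hg => ?_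
    obtain ⟨c', hc', hc'0, hc'_zero, eq⟩ := exists_comp_mul_pow_eq_scaledCoeff hα
      (Finset.mem_filter.1 hi₀).2 (fun i hi => least i (by simpa using hi)) hg
    have hu' : CarlemanAt M (fun p : (Fin n → ℝ) × ℝ => u (g * p.1 ^ d !, p.2)) (0, 0) :=
      .comp (by simpa [d.factorial_ne_zero] using hu)
        (((carlemanAt_mul_pow g (d !) 0).comp_fst 0).prodMk (carlemanAt_id _).snd)
    refine (monomializable_mul_taylorForm_scaledCoeff order
      (hm.comp_mul_pow d.factorial_ne_zero hg) hc' (fun i hi => hc'_zero i (hc_last i hi)) hc'0 hu'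
      (by simpa [d.factorial_ne_zero] using hu0) ((d ! / (d - i₀)) • α i₀)).congr ?_
    filter_upwards [continuousAt_fst.eventually (eventually_all.2 eq)] with p hp
    simp only [taylorForm, hp]

end ComparableCoefficients

section Lift

theorem nhds_prod_le_iSup_map_prodMap {E X : Type*} [TopologicalSpace E] [TopologicalSpace X]
    {ι : Type*} [Finite ι] {Φ : ι → E → E} {L : ι → Set E} {a : E} {b : X}
    (hL : ∀ i, IsCompact (L i)) (covers : 𝓝 a ≤ ⨆ i, map (Φ i) (𝓝ˢ (L i))) :
    𝓝 (a, b) ≤ ⨆ i, map (Prod.map (Φ i) id) (𝓝ˢ (L i ×ˢ {b})) := by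
  intro s hs
  have box (i) : ∃ V ∈ 𝓝ˢ (L i), ∃ W ∈ 𝓝 b, V ×ˢ W ⊆ Prod.map (Φ i) id ⁻¹' s := by
    have := mem_iSup.1 hs i
    rwa [mem_map, (hL i).nhdsSet_prod_eq isCompact_singleton, nhdsSet_singleton,
      mem_prod_iff] at this
  choose V hV W hW hVW using box
  have image : ⋃ i, Φ i '' V i ∈ 𝓝 a := covers <| mem_iSup.2 fun i =>
    mem_of_superset (image_mem_map (hV i)) (subset_iUnion (fun i => Φ i '' V i) i)
  rw [nhds_prod_eq]
  filter_upwards [prod_mem_prod image (iInter_mem.2 hW)] with ⟨x, t⟩ ⟨hx, ht⟩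
  obtain ⟨i, y, hy, rfl⟩ := mem_iUnion.1 hx
  exact hVW i (mk_mem_prod hy (mem_iInter.1 ht i))

variable {M : RegularWeight} {n : ℕ} {P : (Fin n → ℝ) → ℝ}
  {F : (Fin n → ℝ) × ℝ → ℝ} {a : Fin n → ℝ}

/-- `Φ` is a substitution of the class centred at `a` after which `P` is a monomial times a unit. -/
structure IsMonomialChart (M : RegularWeight) {n : ℕ} (P : (Fin n → ℝ) → ℝ) (a : Fin n → ℝ)
    (Φ : (Fin n → ℝ) → Fin n → ℝ) : Prop where
  carlemanAt : CarlemanAt M Φ 0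
  map_zero : Φ 0 = a
  hasMonomialForm : ∃ γ, HasMonomialForm M (fun x => P (Φ x)) γ

theorem IsMonomialChart.comp {Φ Ψ : (Fin n → ℝ) → Fin n → ℝ} {b : Fin n → ℝ}
    (hΦ : CarlemanAt M Φ b) (hb : Φ b = a) (hΨ : IsMonomialChart M (fun x => P (Φ x)) b Ψ) :
    IsMonomialChart M P a (fun x => Φ (Ψ x)) := by
  exact ⟨.comp (hΨ.map_zero ▸ hΦ) hΨ.carlemanAt, by rw [hΨ.map_zero, hb], hΨ.hasMonomialForm⟩

theorem Monomializable.lift (hP : Monomializable M P a)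
    (hF : ∀ Φ, IsMonomialChart M P a Φ → Monomializable M (fun p => F (Φ p.1, p.2)) (0, 0)) :
    Monomializable M F (a, 0) := by
  induction hP generalizing F with
  | @of_monomial f a k e α u carleman ne_zero eq =>
    obtain rfl : n = k := by simpa using e.toLinearEquiv.finrank_eq
    have carleman_chart : CarlemanAt M (fun x => e.symm x + a) 0 :=
      (carlemanAt_continuousLinearMap (e.symm : (Fin n → ℝ) →L[ℝ] (Fin n → ℝ)) 0).add
        (carlemanAt_const a 0)
    have tendsto_chart : Tendsto (fun x => e.symm x + a) (𝓝 0) (𝓝 a) := by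
      simpa using carleman_chart.continuousAt.tendsto
    refine .of_comp (b := (0, 0)) (Φ := fun p => (e.symm p.1 + a, p.2))
      (Ψ := fun p => (e (p.1 - a), p.2)) ((carleman_chart.comp_fst 0).prodMk (carlemanAt_id _).snd)
      (by simp) (by fun_prop) (by simp) (by simp) (hF _ ⟨carleman_chart, by simp, α, ?_⟩)
    refine ⟨fun x => u (e.symm x + a), .comp (by simpa using carleman) carleman_chart,
      by simpa using ne_zero, ?_⟩
    filter_upwards [tendsto_chart.eventually eq] with x hx
    simpa using hx
  | cover Φ L compact carleman maps covers _ ih =>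
    refine .cover (fun i => Prod.map (Φ i) id) (fun i => L i ×ˢ {0})
      (fun i => (compact i).prod isCompact_singleton) ?_ ?_
      (nhds_prod_le_iSup_map_prodMap compact covers) ?_
    · rintro i ⟨y, _⟩ ⟨hy, rfl⟩
      exact ((carleman i y hy).comp_fst 0).prodMk (carlemanAt_id _).snd
    · rintro i ⟨y, _⟩ ⟨hy, rfl⟩
      simp [maps i y hy]
    · rintro i ⟨y, _⟩ ⟨hy, rfl⟩
      exact ih i y hy fun Ψ hΨ => hF _ (hΨ.comp (carleman i y hy) (maps i y hy))

theorem Monomializable.lift_family {κ : Type*} [Finite κ] (hM : M.Quasianalytic)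
    (nonzero : ∀ P : (Fin n → ℝ) → ℝ, CarlemanAt M P a → (¬ ∀ᶠ x in 𝓝 a, P x = 0) →
      Monomializable M P a) {A : κ → (Fin n → ℝ) → ℝ} (hA : ∀ k, CarlemanAt M (A k) a)
    (hF : ∀ Φ : (Fin n → ℝ) → Fin n → ℝ, CarlemanAt M Φ 0 → Φ 0 = a →
      (∀ k, (∀ᶠ x in 𝓝 a, A k x = 0) ∨ ∃ γ, HasMonomialForm M (fun x => A k (Φ x)) γ) →
      Monomializable M (fun p => F (Φ p.1, p.2)) (0, 0)) : Monomializable M F (a, 0) := by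
  classical
  have := Fintype.ofFinite κ
  let S : Finset κ := {k | ¬ ∀ᶠ x in 𝓝 a, A k x = 0}
  refine (nonzero (fun x => ∏ k ∈ S, A k x) (.prod fun k _ => hA k) fun h => ?_).lift
    fun Φ hΦ => hF Φ hΦ.carlemanAt hΦ.map_zero fun k => ?_
  · obtain ⟨k, hk, hk0⟩ := CarlemanAt.exists_eventually_eq_zero_of_prod hM (fun k _ => hA k) h
    exact (Finset.mem_filter.1 hk).2 hk0
  · refine or_iff_not_imp_left.2 fun hk => ?_
    obtain ⟨γ, hγ⟩ := hΦ.hasMonomialForm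
    exact HasMonomialForm.exists_of_prod hM
      (fun k _ => (hΦ.map_zero ▸ hA k : CarlemanAt M (A k) (Φ 0)).comp hΦ.carlemanAt) hγ
      (Finset.mem_filter.2 ⟨Finset.mem_univ k, hk⟩)

end Lift

section Monomialization

variable {M : RegularWeight} {n d : ℕ} {a : Fin n → ℝ} {m : (Fin n → ℝ) → ℝ}

theorem monomializable_mul_taylorForm {c : Fin d → (Fin n → ℝ) → ℝ} {u : (Fin n → ℝ) × ℝ → ℝ}
    (hM : M.Quasianalytic)
    (nonzero : ∀ P : (Fin n → ℝ) → ℝ, CarlemanAt M P a → (¬ ∀ᶠ x in 𝓝 a, P x = 0) →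
      Monomializable M P a)
    (order : ∀ i < d, MonomializableOfOrder M n i) (hm : CarlemanAt M m a)
    (hm0 : ¬ ∀ᶠ x in 𝓝 a, m x = 0) (hc : ∀ i, CarlemanAt M (c i) a)
    (hc_last : ∀ i : Fin d, (i : ℕ) + 1 = d → ∀ᶠ x in 𝓝 a, c i x = 0)
    (hu : CarlemanAt M u (a, 0)) (hu0 : u (a, 0) ≠ 0) :
    Monomializable M (fun p => m p.1 * taylorForm c u p) (a, 0) := by
  let diff (ij : Fin d × Fin d) (x : Fin n → ℝ) : ℝ :=
    c ij.1 x ^ (d ! / (d - ij.1)) - c ij.2 x ^ (d ! / (d - ij.2))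
  refine .lift_family (A := Sum.elim (fun _ : Unit => m) (Sum.elim c diff)) hM nonzero ?_ ?_
  · rintro (_ | i | ij)
    exacts [hm, hc i, ((hc ij.1).pow _).sub ((hc ij.2).pow _)]
  · intro Φ hΦ hΦa hA
    have tendsto : Tendsto Φ (𝓝 0) (𝓝 a) := hΦa ▸ hΦ.continuousAt
    refine monomializable_mul_taylorForm_of_isZeroOrMonomial (m := fun x => m (Φ x))
      (c := fun i x => c i (Φ x)) (u := fun p => u (Φ p.1, p.2)) hM order
      ((hA (.inl ())).resolve_left hm0).choose_spec
      (fun i => (hA (.inr (.inl i))).imp_left tendsto.eventually)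
      (fun i j => (hA (.inr (.inr (i, j)))).imp_left tendsto.eventually)
      (fun i hi => tendsto.eventually (hc_last i hi)) ?_ (by rwa [hΦa])
    exact .comp (by rwa [hΦa]) ((hΦ.comp_fst 0).prodMk (carlemanAt_id _).snd)

theorem monomializableOfOrder (hM : M.Quasianalytic)
    (nonzero : ∀ a, ∀ P : (Fin n → ℝ) → ℝ, CarlemanAt M P a → (¬ ∀ᶠ x in 𝓝 a, P x = 0) →
      Monomializable M P a) (d : ℕ) : MonomializableOfOrder M n d := by
  induction d using Nat.strong_induction_on with
  | _ d order =>
    intro a b m h hm hm0 hh ne_zero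
    by_cases eq_zero : ∀ i, i + 1 = d → iteratedDeriv i (fun t => h (a, t)) b = 0
    · obtain ⟨g, c, u, hg, rfl, hc, hu, hu0, hc_last, eq⟩ :=
        hh.exists_eventually_comp_shift_eq_taylorForm ne_zero eq_zero
      have continuousAt_shift : ContinuousAt (fun p => (p.1, p.2 - g p.1)) (a, g a) :=
        continuousAt_fst.prodMk
          (continuousAt_snd.sub (hg.continuousAt.comp (f := Prod.fst) continuousAt_fst))
      refine .of_comp (b := (a, 0)) (Φ := fun p => (p.1, g p.1 + p.2))
        ((carlemanAt_id _).fst.prodMk ((hg.comp_fst 0).add (carlemanAt_id _).snd)) (by simp)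
        continuousAt_shift (by simp) (by simp) ?_
      refine (monomializable_mul_taylorForm hM (nonzero a) order hm hm0 hc hc_last hu hu0).congr ?_
      filter_upwards [eq] with p hp
      rw [hp]
    · push Not at eq_zero
      obtain ⟨i, hi, hne⟩ := eq_zero
      exact order i (by lia) a b m h hm hm0 hh hne

theorem exists_continuousLinearEquiv_apply_last_eq {v : Fin (n + 1) → ℝ} (hv : v ≠ 0) :
    ∃ T : ((Fin n → ℝ) × ℝ) ≃L[ℝ] (Fin (n + 1) → ℝ), T (0, 1) = v := by
  let e : ((Fin n → ℝ) × ℝ) ≃L[ℝ] (Fin (n + 1) → ℝ) :=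
    (ContinuousLinearEquiv.prodComm ℝ (Fin n → ℝ) ℝ).trans (Fin.consEquivL ℝ fun _ => ℝ)
  obtain ⟨T, hT⟩ := SeparatingDual.exists_continuousLinearEquiv_apply_eq (R := ℝ)
    (show e (0, 1) ≠ 0 by simp) hv
  exact ⟨e.trans T, hT⟩

theorem monomializable_of_monomializableOfOrder {f : (Fin (n + 1) → ℝ) → ℝ} {a : Fin (n + 1) → ℝ}
    (hM : M.Quasianalytic) (order : ∀ d, MonomializableOfOrder M n d) (hf : CarlemanAt M f a)
    (hfa : f a = 0) (nonzero : ¬ ∀ᶠ x in 𝓝 a, f x = 0) : Monomializable M f a := by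
  obtain ⟨v, d, hd⟩ := hf.exists_iteratedDeriv_line_ne_zero hM nonzero
  have hv : v ≠ 0 := by
    rintro rfl
    simp [hfa, iteratedDeriv_fun_const_zero] at hd
  obtain ⟨T, rfl⟩ := exists_continuousLinearEquiv_apply_last_eq hv
  obtain ⟨⟨a, b⟩, rfl⟩ := T.surjective a
  have on_line (t : ℝ) : f (T (a, t)) = f (T (a, b) + (t - b) • T (0, 1)) := by
    simp [← map_smul, ← map_add]
  have carleman : CarlemanAt M (fun p => f (T p)) (a, b) :=
    hf.comp (carlemanAt_continuousLinearMap (T : (Fin n → ℝ) × ℝ →L[ℝ] (Fin (n + 1) → ℝ)) (a, b))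
  have := order d a b 1 (fun p => f (T p)) (carlemanAt_const 1 a) (by simp [NeBot.ne]) carleman (by
    simp_rw [on_line]
    rw [iteratedDeriv_comp_sub_const d fun s : ℝ => f (T (a, b) + s • T (0, 1))]
    simpa using hd)
  simpa using this.comp_symm T

theorem CarlemanAt.monomializable (hM : M.Quasianalytic) {f : (Fin n → ℝ) → ℝ}
    (hf : CarlemanAt M f a) (nonzero : ¬ ∀ᶠ x in 𝓝 a, f x = 0) : Monomializable M f a := by
  induction n with
  | zero =>
    refine .of_ne_zero (.refl ℝ _) hf fun h => nonzero (.of_forall fun x => ?_)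
    rw [Subsingleton.elim x a, h]
  | succ n ih =>
    by_cases hfa : f a = 0
    · exact monomializable_of_monomializableOfOrder hM
        (monomializableOfOrder hM fun _ _ => ih) hf hfa nonzero
    · exact .of_ne_zero (.refl ℝ _) hf hfa

end Monomialization

section CompactNeighborhoods

open Metric

variable {E : Type*} [NormedAddCommGroup E] [NormedSpace ℝ E] {f : E → ℝ} {a : E}

theorem exists_eventually_lojasiewiczBound_of_ne_zero {X : Type*} [PseudoMetricSpace X]
    {f : X → ℝ} {a : X} (hf : ContinuousAt f a) (hfa : f a ≠ 0) (Z : Set X) :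
    ∃ n, ∀ᶠ x in 𝓝 a, LojasiewiczBound f Z n x := by
  obtain ⟨n, hn⟩ := exists_nat_gt |f a|⁻¹
  have lt : 1 < n * |f a| := (inv_lt_iff_one_lt_mul₀ (abs_pos.2 hfa)).1 hn
  refine ⟨n, ((hf.abs.const_mul (n : ℝ)).eventually_const_lt lt).mono fun x hx => ?_⟩
  exact (pow_le_one₀ (le_min zero_le_one infDist_nonneg) (min_le_left _ _)).trans hx.le

theorem CarlemanAt.exists_eventually_lojasiewiczBound_preimage [FiniteDimensional ℝ E]
    {M : RegularWeight} (hM : M.Quasianalytic) (hf : CarlemanAt M f a) (hfa : f a = 0) :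
    ∃ n, ∀ᶠ x in 𝓝 a, LojasiewiczBound f (f ⁻¹' {0}) n x := by
  by_cases nonzero : ∀ᶠ x in 𝓝 a, f x = 0
  · refine ⟨1, nonzero.mono fun x hx => ?_⟩
    simp [LojasiewiczBound, infDist_zero_of_mem (show x ∈ f ⁻¹' {0} from hx), hx]
  have := FiniteDimensional.complete ℝ E
  let T : E ≃L[ℝ] (Fin (Module.finrank ℝ E) → ℝ) := .ofFinrankEq (by simp)
  have carleman : CarlemanAt M (fun x => f (T.symm x)) (T a) :=
    .comp (by simpa using hf)
      (carlemanAt_continuousLinearMap (T.symm : (Fin (Module.finrank ℝ E) → ℝ) →L[ℝ] E) (T a))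
  have := (carleman.monomializable hM fun h => nonzero <| by
    simpa using T.continuous.continuousAt.eventually h).comp_symm T.symm
  exact Monomializable.exists_eventually_lojasiewiczBound (by simpa using this) hfa

theorem CarlemanAt.exists_eventually_lojasiewiczBound [FiniteDimensional ℝ E]
    {M : RegularWeight} (hM : M.Quasianalytic) (hf : CarlemanAt M f a) {U : Set E}
    (hU : U ∈ 𝓝 a) : ∃ n, ∀ᶠ x in 𝓝 a, LojasiewiczBound f {x ∈ U | f x = 0} n x := by
  by_cases hfa : f a = 0
  · obtain ⟨n, hn⟩ := hf.exists_eventually_lojasiewiczBound_preimage hM hfa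
    refine ⟨n, ?_⟩
    filter_upwards [hn, eventually_infDist_inter_eq (S := f ⁻¹' {0}) hfa hU] with x hx infDist_eq
    rwa [LojasiewiczBound, show {x ∈ U | f x = 0} = f ⁻¹' {0} ∩ U from inter_comm _ _, infDist_eq]
  · exact exists_eventually_lojasiewiczBound_of_ne_zero hf.continuousAt hfa _

theorem exists_isOpen_forall_mul_infDist_rpow_le {X : Type*} [PseudoMetricSpace X] {f : X → ℝ}
    {K U Z : Set X} (hU : IsOpen U) (hK : IsCompact K) (hKU : K ⊆ U)
    (h : ∀ a ∈ K, ∃ n, ∀ᶠ x in 𝓝 a, LojasiewiczBound f Z n x) :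
    ∃ C : ℝ, 0 < C ∧ ∃ ν : ℝ, 1 ≤ ν ∧ ∃ W : Set X, IsOpen W ∧ K ⊆ W ∧ W ⊆ U ∧
      ∀ x ∈ W, C * infDist x Z ^ ν ≤ |f x| := by
  let p (n : ℕ) (x : X) : Prop := infDist x Z ≤ n ∧ LojasiewiczBound f Z n x
  have hp : Monotone p := fun m n hmn x hx =>
    ⟨hx.1.trans (by gcongr), monotone_lojasiewiczBound f Z hmn x hx.2⟩
  obtain ⟨n, hn⟩ := exists_eventually_nhdsSet_of_monotone hp hK fun a ha => by
    obtain ⟨k, hk⟩ := h a ha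
    obtain ⟨B, hB⟩ := exists_nat_gt (infDist a Z)
    refine ⟨max k B, ?_⟩
    filter_upwards [hk, (continuous_infDist_pt Z).continuousAt.eventually_lt_const hB]
      with x hx infDist_lt
    exact ⟨infDist_lt.le.trans (by simp),
      monotone_lojasiewiczBound f Z (le_max_left k B) x hx⟩
  obtain ⟨W, hW, hKW, hWU⟩ := mem_nhdsSet_iff_exists.1
    ((hn.mono (hp (Nat.le_succ n))).and (hU.mem_nhdsSet.2 hKU))
  have pos : (0 : ℝ) < n.succ := by positivity
  refine ⟨(n.succ ^ n.succ * n.succ : ℝ)⁻¹, by positivity, n.succ, by simp, W, hW, hKW,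
    fun x hx => (hWU hx).2, fun x hx => ?_⟩
  obtain ⟨infDist_le, bound⟩ := (hWU hx).1
  have div_le : infDist x Z / n.succ ≤ min 1 (infDist x Z) :=
    le_min ((div_le_one pos).2 infDist_le) (div_le_self infDist_nonneg (by simp))
  rw [Real.rpow_natCast, inv_mul_le_iff₀ (by positivity), mul_assoc, ← div_le_iff₀' (by positivity),
    ← div_pow]
  exact (pow_le_pow_left₀ (div_nonneg infDist_nonneg pos.le) div_le _).trans bound

end CompactNeighborhoods

end DenjoyCarleman

end

open DenjoyCarleman in
theorem stmt12_general {E : Type*} [NormedAddCommGroup E] [NormedSpace ℝ E] [FiniteDimensional ℝ E]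
    {M : RegularWeight} (hM : M.Quasianalytic) {U : Set E} (hU : IsOpen U) {f : E → ℝ}
    (hf : ∀ a ∈ U, CarlemanAt M f a) {Z : Set E} (hZ : Z = {x ∈ U | f x = 0}) {K : Set E}
    (hK : IsCompact K) (hKU : K ⊆ U) :
    ∃ C : ℝ, 0 < C ∧ ∃ ν : ℝ, 1 ≤ ν ∧ ∃ W : Set E, IsOpen W ∧ K ⊆ W ∧ W ⊆ U ∧
      ∀ x ∈ W, C * Metric.infDist x Z ^ ν ≤ |f x| :=
  exists_isOpen_forall_mul_infDist_rpow_le hU hK hKU fun a ha =>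
    hZ ▸ (hf a (hKU ha)).exists_eventually_lojasiewiczBound hM (hU.mem_nhds (hKU ha))

/-- Łojasiewicz inequality II in the class `C^ℝ_M`: comparison of `|f|`
with the Euclidean distance to the zero set of `f`. -/
theorem stmt12 {N : ℕ} (M : ℕ → ℝ)
    (hpos : ∀ j, 0 < M j) (hmono : Monotone M) (hM0 : M 0 = 1)
    (hlog : ∀ j : ℕ, M (j+1) / M j ≤ M (j+2) / M (j+1))
    (hqa : ∑' k : ℕ, ENNReal.ofReal (M k / (((k : ℝ) + 1) * M (k+1))) = ⊤)
    (hder : ∃ C : ℝ, ∀ j : ℕ, 1 ≤ j → (M (j+1) / M j) ^ ((1 : ℝ) / j) ≤ C)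
    (U : Set (EuclideanSpace ℝ (Fin N))) (hUopen : IsOpen U) (hUconn : IsConnected U)
    (f : EuclideanSpace ℝ (Fin N) → ℝ) (hf : CRM M U f)
    (Z : Set (EuclideanSpace ℝ (Fin N))) (hZ : Z = {x ∈ U | f x = 0})
    (K : Set (EuclideanSpace ℝ (Fin N))) (hKcpt : IsCompact K) (hKU : K ⊆ U) :
    ∃ C : ℝ, 0 < C ∧ ∃ ν : ℝ, 1 ≤ ν ∧
      ∃ W : Set (EuclideanSpace ℝ (Fin N)), IsOpen W ∧ K ⊆ W ∧ W ⊆ U ∧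
        ∀ x ∈ W, C * Metric.infDist x Z ^ ν ≤ |f x| := by
  let weight : DenjoyCarleman.RegularWeight :=
    ⟨M, hM0, hmono, monotone_nat_of_le_succ hlog,
      DenjoyCarleman.exists_succ_le_of_ratio_rpow_le hpos hmono hM0 hder⟩
  exact stmt12_general (M := weight)
    (DenjoyCarleman.RegularWeight.quasianalytic_of_tsum_eq_top hqa) hUopen
    (fun _ ha => DenjoyCarleman.carlemanAt_of_crm hUopen hf ha) hZ hKcpt hKU
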